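/- arXiv:2104.14063 — 2 statements merged into one kernel-verified Lean document; each statement's English description precedes it below -/
import Mathlib

section
/- There exists a constant C_p > 0 depending only on p such that for all t1, t2 ≥ 0 with t1 ≤ 1, t2 ≤ 1 and t1 + t2 ≤ 1, sup_{x ≤ 0} | P( S_n ≤ x · √( t1·⟨S⟩_n + t2·[S]_n + (1 − t1 − t2) ) ) − Φ(x) | ≤ C_p · N_n^{1/(2p+1)}. -/
open MeasureTheory Filter Finset

/-- The standard normal distribution function
`Φ(x) = (2π)^{-1/2} ∫_{-∞}^x e^{-u²/2} du`. -/
noncomputable def stdNormalCDF (x : ℝ) : ℝ :=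
  ∫ u in Set.Iic x, (Real.sqrt (2 * Real.pi))⁻¹ * Real.exp (-u ^ 2 / 2)

/-!
Fix a scale `γ` with `N ≤ γ ^ (2p + 1)`; the claim is then that the error is of order `γ`.
Discarding each difference whose conditional variance exceeds `γ²`, or brings the total above
`1 + γ²`, changes the martingale only on an event of probability of order `γ`.

For the truncated martingale, Lindeberg's replacement argument compares the partial sum `S`,
smoothed by an independent normal variable with the remaining variance `v` out of the budget
`1 + 2γ²`, with a normal variable. The Taylor remainder of a step is expanded to second order where
the difference exceeds `w √v` and to third order elsewhere. The threshold `w = ε (γ² / v) ^ α` with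
`α = p / (2(p - 1))` makes the first part at most a constant times `γ ^ (-2p) E|X|^{2p}`, whatever
`v` is, and these sum to order `γ`. The second part is `w / v` times the conditional variance times
an integrable kernel of `(x - S) / √v`. Conditioning forward to the terminal time and telescoping
in `v` bounds the sum of these by `ε` times the expectation of one kernel of width `γ`, which is at
most of order `γ + D` where `D` is the Kolmogorov distance. For small `ε` this gives the
self-bounding inequality `D ≤ b γ + D / 2`.

Finally the squared variation is within `γ` of the conditional variance outside an event of
probability of order `γ`, by an exponential supermartingale. Every interpolation between them and
`1` is then within `2γ` of `1`, and the normalization costs only order `γ` because `u ↦ Φ (x u)` is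
Lipschitz near `u = 1` uniformly in `x`.
-/

local notation "φ" => ProbabilityTheory.gaussianPDFReal 0 1
local notation "Φ" => stdNormalCDF

lemma stdNormalPDF_def (x : ℝ) : φ x = (√(2 * Real.pi))⁻¹ * Real.exp (-x ^ 2 / 2) := by
  simp [ProbabilityTheory.gaussianPDFReal]

lemma stdNormalPDF_nonneg (x : ℝ) : 0 ≤ φ x := ProbabilityTheory.gaussianPDFReal_nonneg 0 1 x

lemma integrable_stdNormalPDF : Integrable φ := ProbabilityTheory.integrable_gaussianPDFReal 0 1

lemma stdNormalPDF_le_exp (x : ℝ) : φ x ≤ Real.exp (-x ^ 2 / 2) / 2 := by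
  have two_le : (2 : ℝ) ≤ √(2 * Real.pi) := Real.le_sqrt_of_sq_le (by linarith [Real.pi_gt_three])
  rw [stdNormalPDF_def, div_eq_inv_mul (Real.exp _)]
  exact mul_le_mul_of_nonneg_right (inv_anti₀ two_pos two_le) (Real.exp_nonneg _)

lemma stdNormalPDF_le_half (x : ℝ) : φ x ≤ 1 / 2 := by
  have : Real.exp (-x ^ 2 / 2) ≤ 1 := Real.exp_le_one_iff.2 (by linarith [sq_nonneg x])
  linarith [stdNormalPDF_le_exp x]

lemma mul_stdNormalPDF_le {a b : ℝ} (x : ℝ) (hb : 0 ≤ b) (ha : a ≤ b * Real.exp (x ^ 2 / 2)) :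
    a * φ x ≤ b := by
  have hexp : Real.exp (x ^ 2 / 2) * Real.exp (-x ^ 2 / 2) = 1 := by
    rw [← Real.exp_add, neg_div, add_neg_cancel, Real.exp_zero]
  calc a * φ x ≤ b * Real.exp (x ^ 2 / 2) * φ x :=
        mul_le_mul_of_nonneg_right ha (stdNormalPDF_nonneg x)
    _ ≤ b * Real.exp (x ^ 2 / 2) * (Real.exp (-x ^ 2 / 2) / 2) := by
        gcongr; exact stdNormalPDF_le_exp x
    _ = b / 2 * (Real.exp (x ^ 2 / 2) * Real.exp (-x ^ 2 / 2)) := by ring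
    _ ≤ b := by rw [hexp]; linarith

lemma abs_mul_stdNormalPDF_le_one (x : ℝ) : |x * φ x| ≤ 1 := by
  rw [abs_mul, abs_of_nonneg (stdNormalPDF_nonneg x)]
  refine mul_stdNormalPDF_le x zero_le_one ?_
  nlinarith [Real.add_one_le_exp (x ^ 2 / 2), sq_abs x, sq_nonneg (|x| - 1)]

lemma one_add_sq_pow_three_mul_stdNormalPDF_le (x : ℝ) : (1 + x ^ 2) ^ 3 * φ x ≤ 216 := by
  refine mul_stdNormalPDF_le x (by norm_num) ?_
  calc (1 + x ^ 2) ^ 3 ≤ (6 * (x ^ 2 / 6 + 1)) ^ 3 := by gcongr; linarith [sq_nonneg x]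
    _ = 216 * (x ^ 2 / 6 + 1) ^ 3 := by ring
    _ ≤ 216 * Real.exp (x ^ 2 / 6) ^ 3 := by gcongr; exact Real.add_one_le_exp _
    _ = 216 * Real.exp (x ^ 2 / 2) := by rw [← Real.exp_nat_mul]; congr 2; push_cast; ring

lemma hasDerivAt_stdNormalPDF (x : ℝ) : HasDerivAt φ (-(x * φ x)) x := by
  have hsq : HasDerivAt (fun y : ℝ => -y ^ 2 / 2) (-x) x :=
    ((hasDerivAt_pow 2 x).neg.div_const 2).congr_deriv (by norm_num; ring)
  have hφ : φ = fun y => (√(2 * Real.pi))⁻¹ * Real.exp (-y ^ 2 / 2) := funext stdNormalPDF_def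
  rw [hφ]
  exact (hsq.exp.const_mul _).congr_deriv (by ring)

lemma hasDerivAt_mul_stdNormalPDF (x : ℝ) :
    HasDerivAt (fun y => y * φ y) ((1 - x ^ 2) * φ x) x :=
  ((hasDerivAt_id x).mul (hasDerivAt_stdNormalPDF x)).congr_deriv (by simp only [id]; ring)

lemma continuous_stdNormalPDF : Continuous φ :=
  continuous_iff_continuousAt.2 fun x => (hasDerivAt_stdNormalPDF x).continuousAt

lemma stdNormalCDF_eq_integral (x : ℝ) : Φ x = ∫ u in Set.Iic x, φ u := by
  simp only [stdNormalCDF, stdNormalPDF_def]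

lemma stdNormalCDF_sub (a b : ℝ) : Φ b - Φ a = ∫ u in a..b, φ u := by
  simp only [stdNormalCDF_eq_integral]
  exact intervalIntegral.integral_Iic_sub_Iic integrable_stdNormalPDF.integrableOn
    integrable_stdNormalPDF.integrableOn

lemma hasDerivAt_stdNormalCDF (x : ℝ) : HasDerivAt Φ (φ x) x := by
  have hΦ : Φ = fun y => Φ 0 + ∫ u in (0 : ℝ)..y, φ u := by
    ext y; rw [← stdNormalCDF_sub, add_sub_cancel]
  rw [hΦ]
  exact (continuous_stdNormalPDF.integral_hasStrictDerivAt 0 x).hasDerivAt.const_add _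

lemma continuous_stdNormalCDF : Continuous Φ :=
  continuous_iff_continuousAt.2 fun x => (hasDerivAt_stdNormalCDF x).continuousAt

lemma stdNormalCDF_nonneg (x : ℝ) : 0 ≤ Φ x := by
  rw [stdNormalCDF_eq_integral]
  exact integral_nonneg stdNormalPDF_nonneg

lemma one_sub_stdNormalCDF (x : ℝ) : 1 - Φ x = ∫ u in Set.Ioi x, φ u := by
  rw [stdNormalCDF_eq_integral, sub_eq_iff_eq_add', ← Set.compl_Iic,
    integral_add_compl measurableSet_Iic integrable_stdNormalPDF,
    ProbabilityTheory.integral_gaussianPDFReal_eq_one 0 one_ne_zero]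

lemma stdNormalCDF_le_one (x : ℝ) : Φ x ≤ 1 := by
  rw [← sub_nonneg, one_sub_stdNormalCDF]
  exact integral_nonneg stdNormalPDF_nonneg

lemma setIntegral_stdNormalPDF_le {y : ℝ} (hy : 0 ≤ y) {s : Set ℝ} (hs : MeasurableSet s)
    (hys : ∀ u ∈ s, y ≤ |u|) : ∫ u in s, φ u ≤ 700 / (1 + y ^ 2) ^ 2 := by
  set c := 216 / (1 + y ^ 2) ^ 2
  have hint : Integrable fun u : ℝ => c * (1 + u ^ 2)⁻¹ := integrable_inv_one_add_sq.const_mul c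
  have hφ_le : ∀ u ∈ s, φ u ≤ c * (1 + u ^ 2)⁻¹ := fun u hu => by
    have hyu : y ^ 2 ≤ u ^ 2 := by rw [← sq_abs u]; gcongr; exact hys u hu
    have hφ := stdNormalPDF_nonneg u
    rw [← div_eq_mul_inv, div_div, le_div_iff₀ (by positivity)]
    calc φ u * ((1 + y ^ 2) ^ 2 * (1 + u ^ 2)) ≤ φ u * ((1 + u ^ 2) ^ 2 * (1 + u ^ 2)) := by gcongr
      _ = (1 + u ^ 2) ^ 3 * φ u := by ring
      _ ≤ 216 := one_add_sq_pow_three_mul_stdNormalPDF_le u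
  calc ∫ u in s, φ u ≤ ∫ u in s, c * (1 + u ^ 2)⁻¹ :=
        setIntegral_mono_on integrable_stdNormalPDF.integrableOn hint.integrableOn hs hφ_le
    _ ≤ ∫ u, c * (1 + u ^ 2)⁻¹ :=
        setIntegral_le_integral hint (Eventually.of_forall fun u => by positivity)
    _ = 216 * Real.pi / (1 + y ^ 2) ^ 2 := by
        rw [integral_const_mul, integral_univ_inv_one_add_sq]; ring
    _ ≤ 700 / (1 + y ^ 2) ^ 2 := by gcongr; linarith [Real.pi_lt_d2]

lemma stdNormalCDF_neg_le {y : ℝ} (hy : 0 ≤ y) : Φ (-y) ≤ 700 / (1 + y ^ 2) ^ 2 := by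
  rw [stdNormalCDF_eq_integral]
  exact setIntegral_stdNormalPDF_le hy measurableSet_Iic fun u hu =>
    le_abs.2 (Or.inr (le_neg_of_le_neg hu))

lemma one_sub_stdNormalCDF_le {y : ℝ} (hy : 0 ≤ y) : 1 - Φ y ≤ 700 / (1 + y ^ 2) ^ 2 := by
  rw [one_sub_stdNormalCDF]
  exact setIntegral_stdNormalPDF_le hy measurableSet_Ioi fun u hu => le_abs.2 (Or.inl (le_of_lt hu))

lemma abs_le_mul_abs_pow_succ_of_abs_deriv_le {g g' : ℝ → ℝ} {h B : ℝ} {k : ℕ} (h0 : g 0 = 0)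
    (hg : ∀ r ∈ Set.uIcc 0 h, HasDerivAt g (g' r) r)
    (hB : ∀ r ∈ Set.uIcc 0 h, |g' r| ≤ B * |r| ^ k) : |g h| ≤ B * |h| ^ (k + 1) := by
  rcases eq_or_ne h 0 with rfl | hh
  · simp [h0]
  have hB0 : 0 ≤ B := nonneg_of_mul_nonneg_left
    ((abs_nonneg _).trans (hB h Set.right_mem_uIcc)) (by positivity)
  have hmem : ∀ r ∈ Set.uIcc 0 h, |r| ≤ |h| := fun r hr => by
    simpa using Set.abs_sub_left_of_mem_uIcc hr
  have hmean := Convex.norm_image_sub_le_of_norm_hasDerivWithin_le (C := B * |h| ^ k)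
    (fun r hr => (hg r hr).hasDerivWithinAt)
    (fun r hr => (hB r hr).trans
      (mul_le_mul_of_nonneg_left (pow_le_pow_left₀ (abs_nonneg r) (hmem r hr) k) hB0))
    (convex_uIcc 0 h) Set.left_mem_uIcc Set.right_mem_uIcc
  rw [h0, sub_zero, sub_zero, Real.norm_eq_abs, Real.norm_eq_abs] at hmean
  rwa [pow_succ, ← mul_assoc]

lemma abs_stdNormalCDF_sub_le (a b : ℝ) : |Φ b - Φ a| ≤ |b - a| := by
  have hderiv (r : ℝ) : HasDerivAt (fun r => Φ (a + r) - Φ a) (φ (a + r)) r :=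
    ((hasDerivAt_stdNormalCDF (a + r)).comp_const_add a r).sub_const _
  have hle := abs_le_mul_abs_pow_succ_of_abs_deriv_le (h := b - a) (B := 1) (k := 0) (by simp)
    (fun r _ => hderiv r) (fun r _ => by
      rw [abs_of_nonneg (stdNormalPDF_nonneg _)]; linarith [stdNormalPDF_le_half (a + r)])
  simpa using hle

lemma abs_stdNormalCDF_sub_linear_le (z h : ℝ) : |Φ (z - h) - Φ z + φ z * h| ≤ h ^ 2 := by
  have hderiv₁ (r : ℝ) :
      HasDerivAt (fun r => Φ (z - r) - Φ z + φ z * r) (-φ (z - r) + φ z) r :=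
    ((((hasDerivAt_stdNormalCDF (z - r)).comp_const_sub z r).sub_const _).add
      ((hasDerivAt_id r).const_mul _)).congr_deriv (by simp)
  have hderiv₂ (r : ℝ) :
      HasDerivAt (fun r => -φ (z - r) + φ z) (-((z - r) * φ (z - r))) r :=
    (((hasDerivAt_stdNormalPDF (z - r)).comp_const_sub z r).neg.add_const _).congr_deriv (by simp)
  have hlin (r : ℝ) : |-φ (z - r) + φ z| ≤ 1 * |r| ^ 1 :=
    abs_le_mul_abs_pow_succ_of_abs_deriv_le (k := 0) (by simp) (fun s _ => hderiv₂ s)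
      fun s _ => by
        simpa only [abs_neg, pow_zero, mul_one] using abs_mul_stdNormalPDF_le_one (z - s)
  have hquad := abs_le_mul_abs_pow_succ_of_abs_deriv_le (h := h) (by simp) (fun r _ => hderiv₁ r)
    fun r _ => hlin r
  simpa only [one_mul, one_add_one_eq_two, sq_abs] using hquad

lemma abs_stdNormalCDF_sub_taylor_le_sq (z h : ℝ) :
    |Φ (z - h) - Φ z + φ z * h + z * φ z / 2 * h ^ 2| ≤ 2 * h ^ 2 := by
  have hsecond : |z * φ z / 2 * h ^ 2| ≤ h ^ 2 := by
    rw [abs_mul, abs_div, abs_of_nonneg (sq_nonneg h), abs_two]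
    nlinarith [abs_mul_stdNormalPDF_le_one z, sq_nonneg h]
  linarith [abs_add_le (Φ (z - h) - Φ z + φ z * h) (z * φ z / 2 * h ^ 2),
    abs_stdNormalCDF_sub_linear_le z h]

lemma abs_one_sub_sq_mul_stdNormalPDF_le (y : ℝ) : |(1 - y ^ 2) * φ y| ≤ 216 / (1 + y ^ 2) := by
  have hφ := stdNormalPDF_nonneg y
  have habs : |1 - y ^ 2| ≤ 1 + y ^ 2 :=
    abs_le.2 ⟨by linarith [sq_nonneg y], by linarith [sq_nonneg y]⟩
  rw [le_div_iff₀ (by positivity), abs_mul, abs_of_nonneg hφ]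
  calc |1 - y ^ 2| * φ y * (1 + y ^ 2) ≤ (1 + y ^ 2) * φ y * (1 + y ^ 2) := by gcongr
    _ = (1 + y ^ 2) ^ 2 * φ y := by ring
    _ ≤ (1 + y ^ 2) ^ 3 * φ y := by
        gcongr
        · linarith [sq_nonneg y]
        · norm_num
    _ ≤ 216 := one_add_sq_pow_three_mul_stdNormalPDF_le y

lemma abs_stdNormalCDF_sub_taylor_le_cube {z h : ℝ} (hh : |h| ≤ 1) :
    |Φ (z - h) - Φ z + φ z * h + z * φ z / 2 * h ^ 2| ≤ 648 / (1 + z ^ 2) * |h| ^ 3 := by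
  have hderiv₁ (r : ℝ) :
      HasDerivAt (fun r => Φ (z - r) - Φ z + φ z * r + z * φ z / 2 * r ^ 2)
        (-φ (z - r) + φ z + z * φ z * r) r :=
    (((((hasDerivAt_stdNormalCDF (z - r)).comp_const_sub z r).sub_const _).add
      ((hasDerivAt_id r).const_mul _)).add ((hasDerivAt_pow 2 r).const_mul _)).congr_deriv
        (by norm_num; ring)
  have hderiv₂ (r : ℝ) :
      HasDerivAt (fun r => -φ (z - r) + φ z + z * φ z * r)
        (-((z - r) * φ (z - r)) + z * φ z) r :=
    ((((hasDerivAt_stdNormalPDF (z - r)).comp_const_sub z r).neg.add_const _).add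
      ((hasDerivAt_id r).const_mul _)).congr_deriv (by simp)
  have hderiv₃ (r : ℝ) :
      HasDerivAt (fun r => -((z - r) * φ (z - r)) + z * φ z)
        ((1 - (z - r) ^ 2) * φ (z - r)) r :=
    (((hasDerivAt_mul_stdNormalPDF (z - r)).comp_const_sub z r).neg.add_const _).congr_deriv
      (by simp)
  have hthird (r : ℝ) (hr : |r| ≤ 1) :
      |(1 - (z - r) ^ 2) * φ (z - r)| ≤ 648 / (1 + z ^ 2) * |r| ^ 0 := by
    have hshift : 1 + z ^ 2 ≤ 3 * (1 + (z - r) ^ 2) := by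
      nlinarith [sq_nonneg (z - 2 * r), (sq_le_one_iff_abs_le_one r).2 hr]
    refine (abs_one_sub_sq_mul_stdNormalPDF_le (z - r)).trans ?_
    rw [pow_zero, mul_one, div_le_div_iff₀ (by positivity) (by positivity)]
    linarith
  have hmem {r s : ℝ} (hs : s ∈ Set.uIcc 0 r) (hr : |r| ≤ 1) : |s| ≤ 1 :=
    le_trans (by simpa using Set.abs_sub_left_of_mem_uIcc hs) hr
  have hsecond (r : ℝ) (hr : |r| ≤ 1) :=
    abs_le_mul_abs_pow_succ_of_abs_deriv_le (by simp) (fun s _ => hderiv₃ s)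
      fun s hs => hthird s (hmem hs hr)
  have hfirst (r : ℝ) (hr : |r| ≤ 1) :=
    abs_le_mul_abs_pow_succ_of_abs_deriv_le (by simp) (fun s _ => hderiv₂ s)
      fun s hs => hsecond s (hmem hs hr)
  exact abs_le_mul_abs_pow_succ_of_abs_deriv_le (by simp) (fun s _ => hderiv₁ s)
    fun s hs => hfirst s (hmem hs hh)

lemma hasDerivAt_div_sqrt_one_add (z : ℝ) {r : ℝ} (hr : 0 ≤ r) :
    HasDerivAt (fun r => z / √(1 + r)) (-(z / √(1 + r)) / (2 * (1 + r))) r := by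
  have hpos : 0 < 1 + r := by linarith
  have hsqrt : √(1 + r) ≠ 0 := (Real.sqrt_pos.2 hpos).ne'
  refine ((hasDerivAt_const r z).div (((hasDerivAt_id r).const_add 1).sqrt hpos.ne')
    hsqrt).congr_deriv ?_
  simp only [id, Real.sq_sqrt hpos.le]
  field_simp
  ring

lemma hasDerivAt_stdNormalCDF_div_sqrt (z : ℝ) {r : ℝ} (hr : 0 ≤ r) :
    HasDerivAt (fun r => Φ (z / √(1 + r)))
      (-(z / √(1 + r) * φ (z / √(1 + r))) / (2 * (1 + r))) r :=
  ((hasDerivAt_stdNormalCDF _).comp r (hasDerivAt_div_sqrt_one_add z hr)).congr_deriv (by ring)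

lemma abs_stdNormalCDF_div_sqrt_sub_le (z : ℝ) {τ : ℝ} (hτ : 0 ≤ τ) :
    |Φ (z / √(1 + τ)) - Φ z| ≤ τ := by
  have hnonneg (r : ℝ) (hr : r ∈ Set.uIcc 0 τ) : 0 ≤ r := by
    rw [Set.uIcc_of_le hτ] at hr; exact hr.1
  have hle := abs_le_mul_abs_pow_succ_of_abs_deriv_le (h := τ) (B := 1) (k := 0)
    (g := fun r => Φ (z / √(1 + r)) - Φ z) (by simp)
    (fun r hr => (hasDerivAt_stdNormalCDF_div_sqrt z (hnonneg r hr)).sub_const _)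
    (fun r hr => by
      have hr0 := hnonneg r hr
      rw [abs_div, abs_neg, abs_of_pos (by linarith : 0 < 2 * (1 + r)), pow_zero, mul_one]
      exact (div_le_one (by linarith)).2 (by linarith [abs_mul_stdNormalPDF_le_one (z / √(1 + r))]))
  simpa [abs_of_nonneg hτ] using hle

lemma abs_stdNormalCDF_mul_sqrt_sub_le (x : ℝ) {w η : ℝ} (hw : |w - 1| ≤ η) (hη : η ≤ 1 / 2) :
    |Φ (x * √w) - Φ x| ≤ 2 * η := by
  obtain ⟨hlower, hupper⟩ := abs_le.1 hw
  have hw0 : 0 < w := by linarith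
  rcases le_total 1 w with hw1 | hw1
  · have hscale := abs_stdNormalCDF_div_sqrt_sub_le (x * √w) (sub_nonneg.2 hw1)
    rw [add_sub_cancel, mul_div_cancel_right₀ _ (Real.sqrt_pos.2 hw0).ne', abs_sub_comm] at hscale
    linarith
  · have hinv : w⁻¹ - 1 ≤ 2 * η := by
      rw [sub_le_iff_le_add, inv_le_iff_one_le_mul₀ hw0]
      nlinarith
    have hscale := abs_stdNormalCDF_div_sqrt_sub_le x (sub_nonneg.2 ((one_le_inv₀ hw0).2 hw1))
    rw [add_sub_cancel, Real.sqrt_inv, div_inv_eq_mul] at hscale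
    exact hscale.trans hinv

lemma abs_stdNormalCDF_div_sqrt_sub_taylor_le (z : ℝ) {τ : ℝ} (hτ : 0 ≤ τ) :
    |Φ (z / √(1 + τ)) - Φ z + z * φ z / 2 * τ| ≤ 2 * τ := by
  have hfirst : |z * φ z / 2 * τ| ≤ τ := by
    rw [abs_mul, abs_div, abs_of_nonneg hτ, abs_two]
    nlinarith [abs_mul_stdNormalPDF_le_one z]
  linarith [abs_add_le (Φ (z / √(1 + τ)) - Φ z) (z * φ z / 2 * τ),
    abs_stdNormalCDF_div_sqrt_sub_le z hτ]

lemma hasDerivAt_mul_stdNormalPDF_div_sqrt (z : ℝ) {r : ℝ} (hr : 0 ≤ r) :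
    HasDerivAt (fun r => -(z / √(1 + r) * φ (z / √(1 + r))) / (2 * (1 + r)))
      ((3 - (z / √(1 + r)) ^ 2) * (z / √(1 + r)) * φ (z / √(1 + r)) / (4 * (1 + r) ^ 2)) r := by
  have hpos : 1 + r ≠ 0 := by positivity
  have hden : HasDerivAt (fun r : ℝ => 2 * (1 + r)) 2 r := by
    simpa using ((hasDerivAt_id r).const_add 1).const_mul 2
  refine (((hasDerivAt_mul_stdNormalPDF _).comp r (hasDerivAt_div_sqrt_one_add z hr)).neg.div hden
    (by positivity)).congr_deriv ?_
  simp only [Function.comp_def, Pi.neg_apply]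
  generalize z / √(1 + r) = y
  field_simp
  ring

lemma abs_three_sub_sq_mul_stdNormalPDF_le (y : ℝ) :
    |(3 - y ^ 2) * y * φ y| * (1 + y ^ 2) ≤ 864 := by
  have hφ := stdNormalPDF_nonneg y
  have habs : |3 - y ^ 2| ≤ 4 * (1 + y ^ 2) :=
    abs_le.2 ⟨by nlinarith [sq_nonneg y], by nlinarith [sq_nonneg y]⟩
  have hy : |y| ≤ 1 + y ^ 2 := by nlinarith [sq_abs y, sq_nonneg (|y| - 1)]
  rw [abs_mul, abs_mul, abs_of_nonneg hφ]
  calc |3 - y ^ 2| * |y| * φ y * (1 + y ^ 2)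
      ≤ (4 * (1 + y ^ 2)) * (1 + y ^ 2) * φ y * (1 + y ^ 2) := by gcongr
    _ = 4 * ((1 + y ^ 2) ^ 3 * φ y) := by ring
    _ ≤ 864 := by linarith [one_add_sq_pow_three_mul_stdNormalPDF_le y]

lemma abs_stdNormalCDF_div_sqrt_sub_taylor_le_sq (z : ℝ) {τ : ℝ} (hτ : 0 ≤ τ) (hτ1 : τ ≤ 1) :
    |Φ (z / √(1 + τ)) - Φ z + z * φ z / 2 * τ| ≤ 648 / (1 + z ^ 2) * τ ^ 2 := by
  have hderiv₁ (r : ℝ) (hr : 0 ≤ r) :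
      HasDerivAt (fun r => Φ (z / √(1 + r)) - Φ z + z * φ z / 2 * r)
        (-(z / √(1 + r) * φ (z / √(1 + r))) / (2 * (1 + r)) + z * φ z / 2) r :=
    (((hasDerivAt_stdNormalCDF_div_sqrt z hr).sub_const _).add
      ((hasDerivAt_id r).const_mul _)).congr_deriv (by simp)
  have hsecond (r : ℝ) (hr : 0 ≤ r) (hr1 : r ≤ 1) :
      |(3 - (z / √(1 + r)) ^ 2) * (z / √(1 + r)) * φ (z / √(1 + r)) / (4 * (1 + r) ^ 2)|
        ≤ 648 / (1 + z ^ 2) * |r| ^ 0 := by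
    have hz : (z / √(1 + r)) ^ 2 * (1 + r) = z ^ 2 := by
      rw [div_pow, Real.sq_sqrt (by linarith), div_mul_cancel₀ _ (by linarith)]
    generalize z / √(1 + r) = y at hz
    have hz_le : 1 + z ^ 2 ≤ 2 * (1 + y ^ 2) := by nlinarith [sq_nonneg y]
    have hden : (4 : ℝ) ≤ 4 * (1 + r) ^ 2 := by nlinarith
    rw [pow_zero, mul_one, abs_div, abs_of_pos (by positivity : 0 < 4 * (1 + r) ^ 2),
      le_div_iff₀ (by positivity)]
    calc |(3 - y ^ 2) * y * φ y| / (4 * (1 + r) ^ 2) * (1 + z ^ 2)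
        ≤ |(3 - y ^ 2) * y * φ y| / 4 * (2 * (1 + y ^ 2)) := by gcongr
      _ = |(3 - y ^ 2) * y * φ y| * (1 + y ^ 2) / 2 := by ring
      _ ≤ 648 := by linarith [abs_three_sub_sq_mul_stdNormalPDF_le y]
  have hmem {r s : ℝ} (hs : s ∈ Set.uIcc 0 r) (hr : 0 ≤ r) : 0 ≤ s ∧ s ≤ r := by
    rwa [Set.uIcc_of_le hr] at hs
  have hfirst (r : ℝ) (hr : 0 ≤ r) (hr1 : r ≤ 1) :=
    abs_le_mul_abs_pow_succ_of_abs_deriv_le (by simp; ring)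
      (fun s hs => (hasDerivAt_mul_stdNormalPDF_div_sqrt z (hmem hs hr).1).add_const (z * φ z / 2))
      fun s hs => hsecond s (hmem hs hr).1 ((hmem hs hr).2.trans hr1)
  have hle := abs_le_mul_abs_pow_succ_of_abs_deriv_le (by simp)
    (fun s hs => hderiv₁ s (hmem hs hτ).1)
    fun s hs => hfirst s (hmem hs hτ).1 ((hmem hs hτ).2.trans hτ1)
  simpa only [abs_of_nonneg hτ] using hle

/-- The polynomially decaying kernel `(1 + z²)^{-q}`. It dominates the remainders in the expansions
of the normal distribution function and, for `q > 1 / 2`, is integrable on the line. -/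
noncomputable def decayKernel (q z : ℝ) : ℝ := (1 + z ^ 2) ^ (-q)

lemma decayKernel_pos (q z : ℝ) : 0 < decayKernel q z := Real.rpow_pos_of_pos (by positivity) _

lemma decayKernel_le_one {q : ℝ} (hq : 0 < q) (z : ℝ) : decayKernel q z ≤ 1 :=
  Real.rpow_le_one_of_one_le_of_nonpos (by linarith [sq_nonneg z]) (by linarith)

lemma decayKernel_neg (q z : ℝ) : decayKernel q (-z) = decayKernel q z := by
  rw [decayKernel, decayKernel, neg_sq]

lemma continuous_decayKernel (q : ℝ) : Continuous (decayKernel q) :=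
  (by fun_prop : Continuous fun z : ℝ => 1 + z ^ 2).rpow_const fun _ => Or.inl (by positivity)

lemma inv_one_add_sq_le_decayKernel {q : ℝ} (hq1 : q ≤ 1) (z : ℝ) :
    (1 + z ^ 2)⁻¹ ≤ decayKernel q z := by
  rw [← Real.rpow_neg_one]
  exact Real.rpow_le_rpow_of_exponent_le (by linarith [sq_nonneg z]) (by linarith)

lemma decayKernel_le_two_mul_rpow {q : ℝ} (hq : 0 < q) (hq1 : q ≤ 1) (z : ℝ) :
    decayKernel q z ≤ 2 * (2 + z ^ 2) ^ (-q) := by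
  have half_le : (2 : ℝ)⁻¹ ≤ 2 ^ (-q) := by
    rw [← Real.rpow_neg_one]
    exact Real.rpow_le_rpow_of_exponent_le one_le_two (by linarith)
  have hmul : (2 : ℝ) ^ (-q) * decayKernel q z ≤ (2 + z ^ 2) ^ (-q) := by
    rw [decayKernel, ← Real.mul_rpow zero_le_two (by positivity)]
    exact Real.rpow_le_rpow_of_nonpos (by positivity) (by linarith [sq_nonneg z]) (by linarith)
  nlinarith [decayKernel_pos q z]

lemma one_sub_mul_le_one_add_rpow_neg {q u : ℝ} (hq : 0 < q) (hu : -1 < u) :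
    1 - q * u ≤ (1 + u) ^ (-q) := by
  have hpos : 0 < 1 + u := by linarith
  rw [Real.rpow_def_of_pos hpos]
  nlinarith [Real.add_one_le_exp (Real.log (1 + u) * -q), Real.log_le_sub_one_of_pos hpos]

lemma rpow_sub_mul_le_decayKernel_add {q : ℝ} (hq : 0 < q) (z h : ℝ) :
    (2 + z ^ 2) ^ (-q) - q * (2 + z ^ 2) ^ (-q - 1) * (2 * z * h + h ^ 2 - 1)
      ≤ decayKernel q (z + h) := by
  have hpos : 0 < 2 + z ^ 2 := by positivity
  obtain ⟨u, hu⟩ : ∃ u, 2 * z * h + h ^ 2 - 1 = u * (2 + z ^ 2) :=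
    ⟨_, (div_mul_cancel₀ _ hpos.ne').symm⟩
  have hfactor : 1 + (z + h) ^ 2 = (2 + z ^ 2) * (1 + u) := by linarith
  have hu1 : -1 < u := by nlinarith [sq_nonneg (z + h)]
  rw [decayKernel, hfactor, Real.mul_rpow hpos.le (by linarith), hu, Real.rpow_sub_one hpos.ne']
  calc (2 + z ^ 2) ^ (-q) - q * ((2 + z ^ 2) ^ (-q) / (2 + z ^ 2)) * (u * (2 + z ^ 2))
      = (2 + z ^ 2) ^ (-q) * (1 - q * u) := by field_simp
    _ ≤ (2 + z ^ 2) ^ (-q) * (1 + u) ^ (-q) := by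
        gcongr
        exact one_sub_mul_le_one_add_rpow_neg hq hu1

lemma decayKernel_div_sqrt_le {q γ t : ℝ} (hq : 0 < q) (hγ : 0 < γ) (ht : γ ^ 2 ≤ t) (y : ℝ) :
    decayKernel q (y / √t) ≤ (t / γ ^ 2) ^ q * decayKernel q (y / γ) := by
  have ht0 : 0 < t := lt_of_lt_of_le (by positivity) ht
  have hle : (t / γ ^ 2)⁻¹ * (1 + (y / γ) ^ 2) ≤ 1 + (y / √t) ^ 2 := by
    rw [div_pow, div_pow, Real.sq_sqrt ht0.le]
    calc (t / γ ^ 2)⁻¹ * (1 + y ^ 2 / γ ^ 2) = γ ^ 2 / t + y ^ 2 / t := by field_simp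
      _ ≤ 1 + y ^ 2 / t := by gcongr; exact (div_le_one ht0).2 ht
  calc decayKernel q (y / √t) ≤ ((t / γ ^ 2)⁻¹ * (1 + (y / γ) ^ 2)) ^ (-q) :=
        Real.rpow_le_rpow_of_nonpos (by positivity) hle (by linarith)
    _ = (t / γ ^ 2) ^ q * decayKernel q (y / γ) := by
        rw [Real.mul_rpow (by positivity) (by positivity), Real.rpow_neg (by positivity),
          Real.inv_rpow (by positivity), inv_inv, decayKernel]

lemma sq_le_rpow_mul_rpow {p w a : ℝ} (hp : 1 ≤ p) (hw : 0 < w) (hwa : w ≤ a) :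
    a ^ 2 ≤ w ^ (-(2 * p - 2)) * a ^ (2 * p) := by
  have ha : 0 < a := hw.trans_le hwa
  calc a ^ 2 = a ^ (-(2 * p - 2)) * a ^ (2 * p) := by
        rw [← Real.rpow_add ha, ← Real.rpow_natCast]; congr 1; push_cast; ring
    _ ≤ w ^ (-(2 * p - 2)) * a ^ (2 * p) := by
        gcongr ?_ * _
        exact Real.rpow_le_rpow_of_nonpos hw hwa (by linarith)

lemma remainder_le_of_le_sq_of_le_cube {p q w a z R : ℝ} (hp : 1 ≤ p) (hq1 : q ≤ 1) (hw : 0 < w)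
    (ha : 0 ≤ a) (hcrude : R ≤ 2 * a ^ 2) (hfine : a ≤ w → R ≤ 648 / (1 + z ^ 2) * a ^ 3) :
    R ≤ 648 * (w * decayKernel q z * a ^ 2 + w ^ (-(2 * p - 2)) * a ^ (2 * p)) := by
  have hκ := decayKernel_pos q z
  have hfar : 0 ≤ w ^ (-(2 * p - 2)) * a ^ (2 * p) := by positivity
  rcases le_total a w with haw | hwa
  · calc R ≤ 648 * ((1 + z ^ 2)⁻¹ * (a * a ^ 2)) := (hfine haw).trans_eq (by ring)
      _ ≤ 648 * (decayKernel q z * (w * a ^ 2)) := by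
          gcongr; exact inv_one_add_sq_le_decayKernel hq1 z
      _ ≤ _ := by linarith
  · have hnear : 0 ≤ w * decayKernel q z * a ^ 2 := by positivity
    linarith [sq_le_rpow_mul_rpow hp hw hwa]

lemma sqrt_rpow_two_mul {v : ℝ} (hv : 0 ≤ v) (p : ℝ) : √v ^ (2 * p) = v ^ p := by
  rw [Real.rpow_mul (Real.sqrt_nonneg v), Real.rpow_two, Real.sq_sqrt hv]

lemma abs_stdNormalCDF_sub_taylor_le {p q w : ℝ} (hp : 1 ≤ p) (hq1 : q ≤ 1) (hw : 0 < w)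
    (hw1 : w ≤ 1) (z h : ℝ) :
    |Φ (z - h) - Φ z + φ z * h + z * φ z / 2 * h ^ 2|
      ≤ 648 * (w * decayKernel q z * h ^ 2 + w ^ (-(2 * p - 2)) * |h| ^ (2 * p)) := by
  rw [← sq_abs h]
  refine remainder_le_of_le_sq_of_le_cube hp hq1 hw (abs_nonneg h) ?_ fun haw => ?_
  · rw [sq_abs]; exact abs_stdNormalCDF_sub_taylor_le_sq z h
  · rw [sq_abs]; exact abs_stdNormalCDF_sub_taylor_le_cube (haw.trans hw1)

lemma abs_stdNormalCDF_div_sqrt_sub_le_interpolated {p q w τ : ℝ} (hp : 1 ≤ p) (hq1 : q ≤ 1)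
    (hw : 0 < w) (hτ : 0 ≤ τ) (hτ1 : τ ≤ 1) (z : ℝ) :
    |Φ (z / √(1 + τ)) - Φ z + z * φ z / 2 * τ|
      ≤ 648 * (w * decayKernel q z * τ + w ^ (-(2 * p - 2)) * τ ^ p) := by
  rw [← sqrt_rpow_two_mul hτ]
  nth_rw 3 [← Real.sq_sqrt hτ]
  refine remainder_le_of_le_sq_of_le_cube hp hq1 hw (Real.sqrt_nonneg τ) ?_ fun _ => ?_
  · rw [Real.sq_sqrt hτ]; exact abs_stdNormalCDF_div_sqrt_sub_taylor_le z hτ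
  · refine (abs_stdNormalCDF_div_sqrt_sub_taylor_le_sq z hτ hτ1).trans ?_
    have hcube : τ ^ 2 ≤ √τ ^ 3 := by
      nth_rw 1 [← Real.sq_sqrt hτ]
      rw [← pow_mul]
      exact pow_le_pow_of_le_one (Real.sqrt_nonneg τ) (Real.sqrt_le_one.2 hτ1) (by norm_num)
    gcongr

lemma abs_stdNormalCDF_increment_le {p q w t v : ℝ} (hp : 1 ≤ p) (hq1 : q ≤ 1) (hw : 0 < w)
    (hw1 : w ≤ 1) (ht : 0 < t) (hv : 0 ≤ v) (hvt : v ≤ t) (y Y : ℝ) :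
    |Φ ((y - Y) / √t) - Φ (y / √(t + v)) + φ (y / √t) / √t * Y
        + y / √t * φ (y / √t) / (2 * t) * (Y ^ 2 - v)|
      ≤ 648 * (w / t * decayKernel q (y / √t) * (Y ^ 2 + v)
        + w ^ (-(2 * p - 2)) * t ^ (-p) * (|Y| ^ (2 * p) + v ^ p)) := by
  have hτ0 : 0 ≤ v / t := by positivity
  have hs : 0 < √t := Real.sqrt_pos.2 ht
  have hsq : (Y / √t) ^ 2 = Y ^ 2 / t := by rw [div_pow, Real.sq_sqrt ht.le]
  have hscale : y / √(t + v) = y / √t / √(1 + v / t) := by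
    rw [div_div, ← Real.sqrt_mul ht.le, mul_add, mul_one, mul_div_cancel₀ _ ht.ne']
  have hshift := abs_stdNormalCDF_sub_taylor_le hp hq1 hw hw1 (y / √t) (Y / √t)
  have hspread := abs_stdNormalCDF_div_sqrt_sub_le_interpolated hp hq1 hw hτ0
    ((div_le_one ht).2 hvt) (y / √t)
  have hYp : |Y / √t| ^ (2 * p) = |Y| ^ (2 * p) * t ^ (-p) := by
    rw [abs_div, abs_of_pos hs, Real.div_rpow (abs_nonneg Y) hs.le, sqrt_rpow_two_mul ht.le,
      Real.rpow_neg ht.le, div_eq_mul_inv]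
  have hvp : (v / t) ^ p = v ^ p * t ^ (-p) := by
    rw [Real.div_rpow hv ht.le, Real.rpow_neg ht.le, div_eq_mul_inv]
  rw [hsq, hYp] at hshift
  rw [hvp] at hspread
  rw [sub_div, hscale]
  calc _ = |(Φ (y / √t - Y / √t) - Φ (y / √t) + φ (y / √t) * (Y / √t)
          + y / √t * φ (y / √t) / 2 * (Y ^ 2 / t))
        - (Φ (y / √t / √(1 + v / t)) - Φ (y / √t) + y / √t * φ (y / √t) / 2 * (v / t))| := by
        congr 1; ring
    _ ≤ _ := (abs_sub _ _).trans (add_le_add hshift hspread)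
    _ = _ := by ring

/-- The size below which an increment is handled by the third-order expansion, when the remaining
variance is `t`. The exponent makes the contribution of larger increments independent of `t`. -/
noncomputable def taylorThreshold (p ε γ t : ℝ) : ℝ := ε * (γ ^ 2 / t) ^ (p / (p - 1) / 2)

lemma taylorThreshold_pos {ε γ t : ℝ} (p : ℝ) (hε : 0 < ε) (hγ : 0 < γ) (ht : 0 < t) :
    0 < taylorThreshold p ε γ t := by
  unfold taylorThreshold; positivity

lemma taylorThreshold_le_one {p ε γ t : ℝ} (hp : 1 < p) (hε1 : ε ≤ 1) (ht : 0 < t)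
    (hγt : γ ^ 2 ≤ t) : taylorThreshold p ε γ t ≤ 1 := by
  have hexp : 0 ≤ p / (p - 1) / 2 := by have := sub_pos.2 hp; positivity
  exact mul_le_one₀ hε1 (by positivity)
    (Real.rpow_le_one (by positivity) ((div_le_one ht).2 hγt) hexp)

lemma taylorThreshold_rpow_mul {p ε γ t : ℝ} (hp : 1 < p) (hε : 0 ≤ ε) (hγ : 0 ≤ γ) (ht : 0 < t) :
    taylorThreshold p ε γ t ^ (-(2 * p - 2)) * t ^ (-p)
      = ε ^ (-(2 * p - 2)) * γ ^ (-(2 * p)) := by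
  have hexp : p / (p - 1) / 2 * -(2 * p - 2) = -p := by
    have := (sub_pos.2 hp).ne'; field_simp
  have hγp : (γ ^ 2) ^ (-p) = γ ^ (-(2 * p)) := by
    rw [← Real.rpow_two, ← Real.rpow_mul hγ, mul_neg]
  have htp : t ^ (-p) ≠ 0 := by positivity
  rw [taylorThreshold, Real.mul_rpow hε (by positivity), ← Real.rpow_mul (by positivity), hexp,
    Real.div_rpow (by positivity) ht.le, hγp, mul_assoc, div_mul_cancel₀ _ htp]

lemma taylorThreshold_mul_decayKernel_le {p q ε γ t : ℝ} (hq : 0 < q) (hε : 0 ≤ ε) (hγ : 0 < γ)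
    (ht : γ ^ 2 ≤ t) (y : ℝ) :
    taylorThreshold p ε γ t / t * decayKernel q (y / √t)
      ≤ ε * ((γ ^ 2 / t) ^ (p / (p - 1) / 2 - q) / t) * decayKernel q (y / γ) := by
  have ht0 : 0 < t := lt_of_lt_of_le (by positivity) ht
  have hrpow : (t / γ ^ 2) ^ q = ((γ ^ 2 / t) ^ q)⁻¹ := by
    rw [← Real.inv_rpow (by positivity), inv_div]
  calc taylorThreshold p ε γ t / t * decayKernel q (y / √t)
      ≤ taylorThreshold p ε γ t / t * ((t / γ ^ 2) ^ q * decayKernel q (y / γ)) := by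
        exact mul_le_mul_of_nonneg_left (decayKernel_div_sqrt_le hq hγ ht y)
          (by unfold taylorThreshold; positivity)
    _ = ε * ((γ ^ 2 / t) ^ (p / (p - 1) / 2 - q) / t) * decayKernel q (y / γ) := by
        rw [taylorThreshold, Real.rpow_sub (by positivity), hrpow]; ring

lemma one_add_rpow_neg_le {α τ : ℝ} (hα : 0 < α) (hτ : 0 ≤ τ) (hτ1 : τ ≤ 1) :
    (1 + τ) ^ (-α) ≤ 1 - α / (2 + α) * τ := by
  have hlog : τ / 2 ≤ Real.log (1 + τ) :=
    calc τ / 2 ≤ τ / (1 + τ) := by gcongr; linarith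
      _ = 1 - (1 + τ)⁻¹ := by field_simp; ring
      _ ≤ Real.log (1 + τ) := Real.one_sub_inv_le_log_of_pos (by linarith)
  calc (1 + τ) ^ (-α) = Real.exp (-(α * Real.log (1 + τ))) := by
        rw [Real.rpow_def_of_pos (by linarith)]; ring_nf
    _ ≤ Real.exp (-(α * (τ / 2))) := by gcongr
    _ ≤ (1 + α * (τ / 2))⁻¹ := by
        rw [Real.exp_neg]
        gcongr
        linarith [Real.add_one_le_exp (α * (τ / 2))]
    _ = 1 - α * (τ / 2) / (1 + α * (τ / 2)) := by field_simp; ring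
    _ ≤ 1 - α * (τ / 2) / (1 + α * (1 / 2)) := by gcongr
    _ = 1 - α / (2 + α) * τ := by field_simp

lemma div_mul_rpow_le_rpow_sub_rpow {α c t v : ℝ} (hα : 0 < α) (hc : 0 ≤ c) (ht : 0 < t)
    (hv : 0 ≤ v) (hvt : v ≤ t) :
    α / (2 + α) * (v * ((c / t) ^ α / t)) ≤ (c / t) ^ α - (c / (t + v)) ^ α := by
  have hτ : 0 ≤ v / t := by positivity
  have hfactor : (c / (t + v)) ^ α = (c / t) ^ α * (1 + v / t) ^ (-α) := by
    rw [Real.rpow_neg (by positivity), ← Real.inv_rpow (by positivity),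
      ← Real.mul_rpow (by positivity) (by positivity)]
    congr 1
    field_simp
  calc α / (2 + α) * (v * ((c / t) ^ α / t)) = (c / t) ^ α * (α / (2 + α) * (v / t)) := by ring
    _ ≤ (c / t) ^ α * (1 - (1 + v / t) ^ (-α)) := by
        gcongr
        linarith [one_add_rpow_neg_le hα hτ ((div_le_one ht).2 hvt)]
    _ = (c / t) ^ α - (c / (t + v)) ^ α := by rw [hfactor]; ring

lemma sum_mul_rpow_div_le {α c : ℝ} (hα : 0 < α) (hc : 0 ≤ c) {t v : ℕ → ℝ} (n : ℕ)
    (ht : ∀ i, 0 < t i) (hct : ∀ i, c ≤ t i) (hv : ∀ i, 0 ≤ v i) (hvt : ∀ i, v i ≤ t (i + 1))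
    (hs : ∀ i, t i = t (i + 1) + v i) :
    ∑ i ∈ range n, v i * ((c / t (i + 1)) ^ α / t (i + 1)) ≤ (2 + α) / α := by
  have htele : α / (2 + α) * ∑ i ∈ range n, v i * ((c / t (i + 1)) ^ α / t (i + 1)) ≤ 1 :=
    calc α / (2 + α) * ∑ i ∈ range n, v i * ((c / t (i + 1)) ^ α / t (i + 1))
        = ∑ i ∈ range n, α / (2 + α) * (v i * ((c / t (i + 1)) ^ α / t (i + 1))) := mul_sum _ _ _
      _ ≤ ∑ i ∈ range n, ((c / t (i + 1)) ^ α - (c / t i) ^ α) := sum_le_sum fun i _ => by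
          rw [hs i]
          exact div_mul_rpow_le_rpow_sub_rpow hα hc (ht (i + 1)) (hv i) (hvt i)
      _ = (c / t n) ^ α - (c / t 0) ^ α := sum_range_sub (fun i => (c / t i) ^ α) n
      _ ≤ (c / t n) ^ α := sub_le_self _ (Real.rpow_nonneg (div_nonneg hc (ht 0).le) α)
      _ ≤ 1 := Real.rpow_le_one (div_nonneg hc (ht n).le) ((div_le_one (ht n)).2 (hct n)) hα.le
  calc ∑ i ∈ range n, v i * ((c / t (i + 1)) ^ α / t (i + 1))
      = (2 + α) / α * (α / (2 + α) * ∑ i ∈ range n, v i * ((c / t (i + 1)) ^ α / t (i + 1))) := by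
        field_simp
    _ ≤ (2 + α) / α * 1 := by gcongr
    _ = (2 + α) / α := mul_one _

lemma abs_lt_rpow_of_le_decayKernel {q t z : ℝ} (hq : 0 < q) (ht : 0 < t)
    (hz : t ≤ decayKernel q z) : |z| < t ^ (-(1 / (2 * q))) := by
  have hroot : ((t ^ (-(1 / (2 * q)))) ^ 2) ^ (-q) = t := by
    rw [← Real.rpow_natCast, ← Real.rpow_mul ht.le, ← Real.rpow_mul ht.le]
    convert Real.rpow_one t
    push_cast
    field_simp
  by_contra! hle
  refine hz.not_gt ?_
  calc decayKernel q z < ((t ^ (-(1 / (2 * q)))) ^ 2) ^ (-q) := by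
        refine Real.rpow_lt_rpow_of_neg (by positivity) ?_ (by linarith)
        rw [← sq_abs z]
        linarith [pow_le_pow_left₀ (by positivity) hle 2]
    _ = t := hroot

lemma integrable_of_measurable_of_abs_le {Ω : Type*} [MeasurableSpace Ω] {μ : Measure Ω}
    [IsFiniteMeasure μ] {f : Ω → ℝ} (hf : Measurable f) {B : ℝ} (hB : ∀ ω, |f ω| ≤ B) :
    Integrable f μ :=
  .of_bound hf.aestronglyMeasurable B (Eventually.of_forall hB)

lemma integrable_mul_of_abs_le {Ω : Type*} [MeasurableSpace Ω] {μ : Measure Ω} {f g : Ω → ℝ}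
    (hf : Measurable f) {B : ℝ} (hB : ∀ ω, |f ω| ≤ B) (hg : Integrable g μ) :
    Integrable (fun ω => f ω * g ω) μ :=
  hg.bdd_mul hf.aestronglyMeasurable (Eventually.of_forall hB)

section KernelExpectation

variable {Ω : Type*} [MeasurableSpace Ω] {μ : Measure Ω} [IsProbabilityMeasure μ] {S : Ω → ℝ}
  {q γ D : ℝ}

lemma measureReal_abs_sub_lt_le (hS : Measurable S) (hD : ∀ x, |μ.real {ω | S ω ≤ x} - Φ x| ≤ D)
    (x : ℝ) {ρ : ℝ} (hρ : 0 ≤ ρ) : μ.real {ω | |x - S ω| < ρ} ≤ 2 * ρ + 2 * D := by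
  have hsub : {ω | |x - S ω| < ρ} ⊆ {ω | S ω ≤ x + ρ} \ {ω | S ω ≤ x - ρ} :=
      fun ω (hω : |x - S ω| < ρ) =>
    ⟨show S ω ≤ x + ρ by linarith [(abs_lt.1 hω).1],
      not_le.2 (show x - ρ < S ω by linarith [(abs_lt.1 hω).2])⟩
  have hmono : {ω | S ω ≤ x - ρ} ⊆ {ω | S ω ≤ x + ρ} := fun ω (hω : S ω ≤ x - ρ) =>
    hω.trans (by linarith)
  have hinterval := (measureReal_mono hsub).trans_eq
    (measureReal_sdiff hmono (measurableSet_le hS measurable_const) (μ := μ))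
  have hlip := le_of_abs_le (abs_stdNormalCDF_sub_le (x - ρ) (x + ρ))
  rw [abs_of_nonneg (by linarith)] at hlip
  linarith [(abs_le.1 (hD (x + ρ))).2, (abs_le.1 (hD (x - ρ))).1]

lemma integral_decayKernel_le (hS : Measurable S) (hq : 1 / 2 < q) (hγ : 0 < γ)
    (hD : ∀ x, |μ.real {ω | S ω ≤ x} - Φ x| ≤ D) (x : ℝ) :
    ∫ ω, decayKernel q ((x - S ω) / γ) ∂μ ≤ 2 / (1 - 1 / (2 * q)) * γ + 2 * D := by
  have hq0 : 0 < q := by linarith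
  have hexp : -1 < -(1 / (2 * q)) := neg_lt_neg ((div_lt_one (by linarith)).2 (by linarith))
  have hmeas : Measurable fun ω => decayKernel q ((x - S ω) / γ) :=
    (continuous_decayKernel q).measurable.comp ((hS.const_sub x).div_const γ)
  have hint : Integrable (fun ω => decayKernel q ((x - S ω) / γ)) μ :=
    integrable_of_measurable_of_abs_le hmeas fun ω => by
      rw [abs_of_pos (decayKernel_pos _ _)]; exact decayKernel_le_one hq0 _
  have hlevel (t : ℝ) (ht : 0 < t) : μ.real {ω | t ≤ decayKernel q ((x - S ω) / γ)}
      ≤ 2 * γ * t ^ (-(1 / (2 * q))) + 2 * D := by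
    refine (measureReal_mono fun ω hω => ?_).trans
      ((measureReal_abs_sub_lt_le hS hD x (by positivity)).trans_eq (by ring) :
        μ.real {ω | |x - S ω| < t ^ (-(1 / (2 * q))) * γ} ≤ _)
    simpa only [Set.mem_ofPred_eq, abs_div, abs_of_pos hγ, div_lt_iff₀ hγ]
      using abs_lt_rpow_of_le_decayKernel hq0 ht hω
  have hpow : IntervalIntegrable (fun t : ℝ => t ^ (-(1 / (2 * q)))) volume 0 1 :=
    intervalIntegral.intervalIntegrable_rpow' hexp
  calc ∫ ω, decayKernel q ((x - S ω) / γ) ∂μ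
      = ∫ t in (0 : ℝ)..1, μ.real {ω | t ≤ decayKernel q ((x - S ω) / γ)} := by
        rw [hint.integral_eq_integral_Ioc_meas_le
          (Eventually.of_forall fun _ => (decayKernel_pos _ _).le)
          (Eventually.of_forall fun _ => decayKernel_le_one hq0 _),
          intervalIntegral.integral_of_le zero_le_one]
    _ ≤ ∫ t in (0 : ℝ)..1, (2 * γ * t ^ (-(1 / (2 * q))) + 2 * D) := by
        simp only [intervalIntegral.integral_of_le zero_le_one]
        exact integral_mono_of_nonneg (Eventually.of_forall fun _ => measureReal_nonneg)
          ((hpow.const_mul _).add intervalIntegrable_const).1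
          ((ae_restrict_iff' measurableSet_Ioc).2 (Eventually.of_forall fun t ht => hlevel t ht.1))
    _ = 2 / (1 - 1 / (2 * q)) * γ + 2 * D := by
        have hne : 1 - 1 / (2 * q) ≠ 0 := by linarith
        rw [intervalIntegral.integral_add (hpow.const_mul _) intervalIntegrable_const,
          intervalIntegral.integral_const_mul, integral_rpow (Or.inl hexp),
          show -(1 / (2 * q)) + 1 = 1 - 1 / (2 * q) by ring, Real.one_rpow, Real.zero_rpow hne,
          intervalIntegral.integral_const, sub_zero, smul_eq_mul]
        ring

end KernelExpectation

section ConditionalExpectation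

variable {Ω : Type*} {m mΩ : MeasurableSpace Ω} {μ : Measure Ω} [IsFiniteMeasure μ]

lemma condExp_ae_eq_of_le {m₂ : MeasurableSpace Ω} {f g : Ω → ℝ} (hm : m ≤ m₂) (hm₂ : m₂ ≤ mΩ)
    (h : μ[f | m₂] =ᵐ[μ] g) : μ[f | m] =ᵐ[μ] μ[g | m] :=
  (condExp_condExp_of_le hm hm₂).symm.trans (condExp_congr_ae h)

lemma integral_mul_condExp (hm : m ≤ mΩ) {ξ f : Ω → ℝ} (hξ : Measurable[m] ξ)
    (hf : Integrable f μ) (hξf : Integrable (fun ω => ξ ω * f ω) μ) :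
    ∫ ω, ξ ω * (μ[f | m]) ω ∂μ = ∫ ω, ξ ω * f ω ∂μ :=
  (integral_congr_ae
    (condExp_mul_of_stronglyMeasurable_left hξ.stronglyMeasurable hξf hf)).symm.trans
    (integral_condExp hm)

lemma integral_mul_add_mul_sub_sq_nonneg (hm : m ≤ mΩ) {η ζ t d : Ω → ℝ} {B C : ℝ}
    (hη : Measurable[m] η) (hηB : ∀ ω, |η ω| ≤ B) (hζ : Measurable[m] ζ) (hζ0 : ∀ ω, 0 ≤ ζ ω)
    (hζC : ∀ ω, |ζ ω| ≤ C) (ht : Integrable t μ) (hd : MemLp d 2 μ) (hmean : μ[d | m] =ᵐ[μ] 0)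
    (hvar : μ[fun ω => d ω ^ 2 | m] ≤ᵐ[μ] t) :
    0 ≤ ∫ ω, (η ω * d ω + ζ ω * (t ω - d ω ^ 2)) ∂μ := by
  have hηd := integrable_mul_of_abs_le (hη.mono hm le_rfl) hηB (hd.integrable one_le_two)
  have hζd := integrable_mul_of_abs_le (hζ.mono hm le_rfl) hζC hd.integrable_sq
  have hζt := integrable_mul_of_abs_le (hζ.mono hm le_rfl) hζC ht
  have hζdt : Integrable (fun ω => ζ ω * (t ω - d ω ^ 2)) μ :=
    integrable_mul_of_abs_le (hζ.mono hm le_rfl) hζC (ht.sub hd.integrable_sq)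
  have hlin : ∫ ω, η ω * d ω ∂μ = 0 := by
    rw [← integral_mul_condExp hm hη (hd.integrable one_le_two) hηd]
    exact integral_eq_zero_of_ae (hmean.mono fun ω hω => by simp [hω])
  have hquad : ∫ ω, ζ ω * d ω ^ 2 ∂μ ≤ ∫ ω, ζ ω * t ω ∂μ := by
    rw [← integral_mul_condExp hm hζ hd.integrable_sq hζd]
    exact integral_mono_ae
      (integrable_mul_of_abs_le (hζ.mono hm le_rfl) hζC integrable_condExp) hζt
      (hvar.mono fun ω hω => mul_le_mul_of_nonneg_left hω (hζ0 ω))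
  rw [integral_add hηd hζdt, hlin]
  simp only [mul_sub]
  rw [integral_sub hζt hζd]
  linarith

lemma integral_le_two_mul_of_le_sub_tangent (hm : m ≤ mΩ) {F G η ζ t d : Ω → ℝ} {q B C : ℝ}
    (hq : 0 ≤ q) (hF : Integrable F μ) (hG : Integrable G μ)
    (hη : Measurable[m] η) (hηB : ∀ ω, |η ω| ≤ B) (hζ : Measurable[m] ζ) (hζ0 : ∀ ω, 0 ≤ ζ ω)
    (hζC : ∀ ω, |ζ ω| ≤ C) (ht : Integrable t μ) (hd : MemLp d 2 μ) (hmean : μ[d | m] =ᵐ[μ] 0)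
    (hvar : μ[fun ω => d ω ^ 2 | m] ≤ᵐ[μ] t)
    (htangent : ∀ ω, F ω ≤ 2 * (G ω - q * (η ω * d ω + ζ ω * (t ω - d ω ^ 2)))) :
    ∫ ω, F ω ∂μ ≤ 2 * ∫ ω, G ω ∂μ := by
  have hint : Integrable (fun ω => η ω * d ω + ζ ω * (t ω - d ω ^ 2)) μ :=
    (integrable_mul_of_abs_le (hη.mono hm le_rfl) hηB (hd.integrable one_le_two)).add
      (integrable_mul_of_abs_le (hζ.mono hm le_rfl) hζC (ht.sub hd.integrable_sq))
  have hnonneg := integral_mul_add_mul_sub_sq_nonneg hm hη hηB hζ hζ0 hζC ht hd hmean hvar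
  calc ∫ ω, F ω ∂μ ≤ ∫ ω, 2 * (G ω - q * (η ω * d ω + ζ ω * (t ω - d ω ^ 2))) ∂μ :=
        integral_mono hF ((hG.sub (hint.const_mul q)).const_mul 2) htangent
    _ = 2 * (∫ ω, G ω ∂μ - q * ∫ ω, (η ω * d ω + ζ ω * (t ω - d ω ^ 2)) ∂μ) := by
        rw [integral_const_mul, integral_sub hG (hint.const_mul q), integral_const_mul]
    _ ≤ 2 * ∫ ω, G ω ∂μ := by linarith [mul_nonneg hq hnonneg]

end ConditionalExpectation

section ConditionalJensen

variable {Ω : Type*} {m mΩ : MeasurableSpace Ω} {μ : Measure Ω} [IsProbabilityMeasure μ]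

lemma two_add_sq_rpow_neg_sub_one_le_one {q : ℝ} (hq : 0 < q) (z : ℝ) :
    (2 + z ^ 2) ^ (-q - 1) ≤ 1 :=
  Real.rpow_le_one_of_one_le_of_nonpos (by linarith [sq_nonneg z]) (by linarith)

lemma abs_mul_two_add_sq_rpow_neg_sub_one_le_one {q : ℝ} (hq : 0 < q) (z : ℝ) :
    |z * (2 + z ^ 2) ^ (-q - 1)| ≤ 1 := by
  have hle : (2 + z ^ 2) ^ (-q - 1) ≤ (2 + z ^ 2)⁻¹ := by
    rw [← Real.rpow_neg_one]
    exact Real.rpow_le_rpow_of_exponent_le (by linarith [sq_nonneg z]) (by linarith)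
  rw [abs_mul, abs_of_pos (by positivity : 0 < (2 + z ^ 2) ^ (-q - 1))]
  calc |z| * (2 + z ^ 2) ^ (-q - 1) ≤ |z| * (2 + z ^ 2)⁻¹ := by gcongr
    _ ≤ 1 := by
        rw [← div_eq_mul_inv, div_le_one (by positivity), ← sq_abs]
        nlinarith [sq_nonneg (|z| - 1)]

lemma integrable_decayKernel_comp {q : ℝ} (hq : 0 < q) {z : Ω → ℝ} (hz : Measurable z) :
    Integrable (fun ω => decayKernel q (z ω)) μ :=
  integrable_of_measurable_of_abs_le ((continuous_decayKernel q).measurable.comp hz) fun ω => by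
    rw [abs_of_pos (decayKernel_pos _ _)]
    exact decayKernel_le_one hq _

lemma integrable_mul_decayKernel {q B : ℝ} (hq : 0 < q) {ξ z : Ω → ℝ} (hξ : Measurable ξ)
    (hξB : ∀ ω, |ξ ω| ≤ B) (hz : Measurable z) :
    Integrable (fun ω => ξ ω * decayKernel q (z ω)) μ :=
  integrable_mul_of_abs_le hξ hξB (integrable_decayKernel_comp hq hz)

lemma mul_decayKernel_div_sqrt_le {q ξ t : ℝ} (hq : 0 < q) (hq1 : q ≤ 1) (hξ : 0 ≤ ξ) (ht : 0 < t)
    (y d : ℝ) :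
    ξ * decayKernel q (y / √t) ≤ 2 * (ξ * decayKernel q ((y - d) / √t)
      - q * (2 * (ξ * (y / √t * (2 + (y / √t) ^ 2) ^ (-q - 1)) / √t) * d
        + ξ * (2 + (y / √t) ^ 2) ^ (-q - 1) / t * (t - d ^ 2))) := by
  have htangent := rpow_sub_mul_le_decayKernel_add hq (y / √t) (-(d / √t))
  have hsqrt : (d / √t) ^ 2 = d ^ 2 / t := by rw [div_pow, Real.sq_sqrt ht.le]
  have hshift : y / √t + -(d / √t) = (y - d) / √t := by ring
  have hhalf := decayKernel_le_two_mul_rpow hq hq1 (y / √t)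
  rw [neg_sq, hsqrt, hshift] at htangent
  calc ξ * decayKernel q (y / √t) ≤ ξ * (2 * (decayKernel q ((y - d) / √t)
        + q * (2 + (y / √t) ^ 2) ^ (-q - 1) * (2 * (y / √t) * -(d / √t) + d ^ 2 / t - 1))) := by
        gcongr
        linarith
    _ = _ := by field_simp; ring

lemma integral_mul_decayKernel_le_of_condExp (hm : m ≤ mΩ) {q γ B : ℝ} (hq : 0 < q) (hq1 : q ≤ 1)
    (hγ : 0 < γ) {ξ t y d : Ω → ℝ} (hξ : Measurable[m] ξ) (hξ0 : ∀ ω, 0 ≤ ξ ω)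
    (hξB : ∀ ω, ξ ω ≤ B) (ht : Measurable[m] t) (htγ : ∀ ω, γ ^ 2 ≤ t ω) (hti : Integrable t μ)
    (hy : Measurable[m] y) (hdm : Measurable d) (hd : MemLp d 2 μ) (hmean : μ[d | m] =ᵐ[μ] 0)
    (hvar : μ[fun ω => d ω ^ 2 | m] ≤ᵐ[μ] t) :
    ∫ ω, ξ ω * decayKernel q (y ω / √(t ω)) ∂μ
      ≤ 2 * ∫ ω, ξ ω * decayKernel q ((y ω - d ω) / √(t ω)) ∂μ := by
  have ht0 (ω) : 0 < t ω := (by positivity : 0 < γ ^ 2).trans_le (htγ ω)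
  have hγs (ω) : γ ≤ √(t ω) := Real.le_sqrt_of_sq_le (htγ ω)
  have hB0 (ω) : 0 ≤ B := (hξ0 ω).trans (hξB ω)
  have hξabs (ω) : |ξ ω| ≤ B := (abs_of_nonneg (hξ0 ω)).trans_le (hξB ω)
  have hsqrt : Measurable[m] fun ω => √(t ω) := Real.continuous_sqrt.measurable.comp ht
  set z : Ω → ℝ := fun ω => y ω / √(t ω)
  have hz : Measurable[m] z := hy.div hsqrt
  have hc : Measurable[m] fun ω => (2 + z ω ^ 2) ^ (-q - 1) :=
    ((hz.pow_const 2).const_add 2).pow_const _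
  set η : Ω → ℝ := fun ω => 2 * (ξ ω * (z ω * (2 + z ω ^ 2) ^ (-q - 1)) / √(t ω))
  set ζ : Ω → ℝ := fun ω => ξ ω * (2 + z ω ^ 2) ^ (-q - 1) / t ω
  have hηB (ω) : |η ω| ≤ 2 * (B * 1 / γ) := by
    rw [abs_mul, abs_two, abs_div, abs_mul, abs_of_nonneg (Real.sqrt_nonneg (t ω))]
    have := abs_mul_two_add_sq_rpow_neg_sub_one_le_one hq (z ω)
    have := hB0 ω
    gcongr
    exacts [hξabs ω, hγs ω]
  have hζ0 (ω) : 0 ≤ ζ ω := div_nonneg (mul_nonneg (hξ0 ω) (by positivity)) (ht0 ω).le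
  have hζB (ω) : |ζ ω| ≤ B * 1 / γ ^ 2 := by
    rw [abs_of_nonneg (hζ0 ω)]
    have := two_add_sq_rpow_neg_sub_one_le_one hq (z ω)
    have := hB0 ω
    exact div_le_div₀ (by positivity) (by gcongr; exact hξB ω) (by positivity) (htγ ω)
  have hkernel (u : Ω → ℝ) (hu : Measurable u) :
      Integrable (fun ω => ξ ω * decayKernel q (u ω / √(t ω))) μ :=
    integrable_mul_decayKernel hq (hξ.mono hm le_rfl) hξabs (hu.div (hsqrt.mono hm le_rfl))
  exact integral_le_two_mul_of_le_sub_tangent hm hq.le (hkernel y (hy.mono hm le_rfl))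
    (hkernel _ ((hy.mono hm le_rfl).sub hdm)) (((hξ.mul (hz.mul hc)).div hsqrt).const_mul 2) hηB
    ((hξ.mul hc).div ht) hζ0 hζB hti hd hmean hvar
    fun ω => mul_decayKernel_div_sqrt_le hq hq1 (hξ0 ω) (ht0 ω) (y ω) (d ω)

end ConditionalJensen

section MartingaleDifference

variable {Ω : Type*} {mΩ : MeasurableSpace Ω} {μ : Measure Ω} {ℱ : Filtration ℕ mΩ}
  {Y v : ℕ → Ω → ℝ} {γ : ℝ}

/-- The partial sums `Y₀ + ⋯ + Y_{k-1}` of a process, used for martingales and for their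
accumulated conditional variances alike. -/
def partialSum (Y : ℕ → Ω → ℝ) (k : ℕ) (ω : Ω) : ℝ := ∑ i ∈ range k, Y i ω

lemma partialSum_succ (Y : ℕ → Ω → ℝ) (k : ℕ) (ω : Ω) :
    partialSum Y (k + 1) ω = partialSum Y k ω + Y k ω := sum_range_succ _ _

lemma measurable_partialSum {m : MeasurableSpace Ω} {k : ℕ} (hY : ∀ i < k, Measurable[m] (Y i)) :
    Measurable[m] (partialSum Y k) :=
  Finset.measurable_sum _ fun i hi => hY i (mem_range.1 hi)

/-- Square integrable martingale differences, indexed so that `Y i` is the increment from time `i`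
to time `i + 1`. -/
structure IsMartingaleDifference (μ : Measure Ω) (ℱ : Filtration ℕ mΩ) (Y : ℕ → Ω → ℝ) : Prop where
  measurable (i : ℕ) : Measurable[ℱ (i + 1)] (Y i)
  memLp_two (i : ℕ) : MemLp (Y i) 2 μ
  condExp_eq_zero (i : ℕ) : μ[Y i | ℱ i] =ᵐ[μ] 0

/-- Martingale differences `Y` with conditional variances `v`, the latter bounded by `γ²` and with
total at most `1 + γ²`; truncation brings a general martingale into this class. -/
structure HasTruncatedVariance (μ : Measure Ω) (ℱ : Filtration ℕ mΩ) (γ : ℝ) (Y v : ℕ → Ω → ℝ) :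
    Prop extends IsMartingaleDifference μ ℱ Y where
  measurable_var (i : ℕ) : Measurable[ℱ i] (v i)
  condExp_sq (i : ℕ) : μ[fun ω => Y i ω ^ 2 | ℱ i] =ᵐ[μ] v i
  var_nonneg (i : ℕ) (ω : Ω) : 0 ≤ v i ω
  var_le (i : ℕ) (ω : Ω) : v i ω ≤ γ ^ 2
  partialSum_var_le (k : ℕ) (ω : Ω) : partialSum v k ω ≤ 1 + γ ^ 2

namespace IsMartingaleDifference

lemma measurable_partialSum (H : IsMartingaleDifference μ ℱ Y) (k : ℕ) :
    Measurable[ℱ k] (partialSum Y k) :=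
  _root_.measurable_partialSum fun i hi => (H.measurable i).mono (ℱ.mono hi) le_rfl

lemma memLp_partialSum_sub (H : IsMartingaleDifference μ ℱ Y) (k n : ℕ) :
    MemLp (fun ω => partialSum Y n ω - partialSum Y k ω) 2 μ :=
  (memLp_finsetSum _ fun i _ => H.memLp_two i).sub (memLp_finsetSum _ fun i _ => H.memLp_two i)

variable [IsFiniteMeasure μ]

lemma integrable (H : IsMartingaleDifference μ ℱ Y) (i : ℕ) : Integrable (Y i) μ :=
  (H.memLp_two i).integrable one_le_two

lemma condExp_eq_zero_of_le (H : IsMartingaleDifference μ ℱ Y) {k i : ℕ} (hki : k ≤ i) :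
    μ[Y i | ℱ k] =ᵐ[μ] 0 :=
  (condExp_ae_eq_of_le (ℱ.mono hki) (ℱ.le i) (H.condExp_eq_zero i)).trans (by rw [condExp_zero])

lemma condExp_mul_eq_zero (H : IsMartingaleDifference μ ℱ Y) {k i : ℕ} (hki : k ≤ i) {ξ : Ω → ℝ}
    (hξ : Measurable[ℱ i] ξ) (hξL : MemLp ξ 2 μ) : μ[ξ * Y i | ℱ k] =ᵐ[μ] 0 := by
  have hpull : μ[ξ * Y i | ℱ i] =ᵐ[μ] 0 := by
    filter_upwards [condExp_mul_of_stronglyMeasurable_left hξ.stronglyMeasurable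
      (hξL.integrable_mul (H.memLp_two i)) (H.integrable i), H.condExp_eq_zero i] with ω hω hω0
    rw [hω, Pi.mul_apply, hω0, Pi.zero_apply, mul_zero]
  exact (condExp_ae_eq_of_le (ℱ.mono hki) (ℱ.le i) hpull).trans (by rw [condExp_zero])

lemma condExp_partialSum_sub (H : IsMartingaleDifference μ ℱ Y) {k n : ℕ} (hkn : k ≤ n) :
    μ[fun ω => partialSum Y n ω - partialSum Y k ω | ℱ k] =ᵐ[μ] 0 := by
  induction n, hkn using Nat.le_induction with
  | base =>
    simp only [sub_self]
    rw [show (fun _ : Ω => (0 : ℝ)) = 0 from rfl, condExp_zero]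
  | succ n hkn ih =>
    have hsplit : (fun ω => partialSum Y (n + 1) ω - partialSum Y k ω)
        = (fun ω => partialSum Y n ω - partialSum Y k ω) + Y n := by
      ext ω; rw [partialSum_succ, Pi.add_apply]; ring
    rw [hsplit]
    filter_upwards [condExp_add ((H.memLp_partialSum_sub k n).integrable one_le_two)
      (H.integrable n) (ℱ k), ih, H.condExp_eq_zero_of_le hkn] with ω hadd h₁ h₂
    rw [hadd, Pi.add_apply, h₁, h₂, Pi.zero_apply, add_zero]

end IsMartingaleDifference

namespace HasTruncatedVariance

lemma integrable_sq (H : HasTruncatedVariance μ ℱ γ Y v) (i : ℕ) :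
    Integrable (fun ω => Y i ω ^ 2) μ := (H.memLp_two i).integrable_sq

lemma abs_var_le (H : HasTruncatedVariance μ ℱ γ Y v) (i : ℕ) (ω : Ω) : |v i ω| ≤ γ ^ 2 :=
  (abs_of_nonneg (H.var_nonneg i ω)).trans_le (H.var_le i ω)

variable [IsFiniteMeasure μ]

lemma integrable_var (H : HasTruncatedVariance μ ℱ γ Y v) (i : ℕ) : Integrable (v i) μ :=
  integrable_of_measurable_of_abs_le ((H.measurable_var i).mono (ℱ.le i) le_rfl) (H.abs_var_le i)

lemma integrable_var_sub (H : HasTruncatedVariance μ ℱ γ Y v) (k n : ℕ) :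
    Integrable (fun ω => partialSum v n ω - partialSum v k ω) μ :=
  (integrable_finsetSum _ fun i _ => H.integrable_var i).sub
    (integrable_finsetSum _ fun i _ => H.integrable_var i)

lemma condExp_sq_partialSum_sub (H : HasTruncatedVariance μ ℱ γ Y v) {k n : ℕ} (hkn : k ≤ n) :
    μ[fun ω => (partialSum Y n ω - partialSum Y k ω) ^ 2 | ℱ k]
      =ᵐ[μ] μ[fun ω => partialSum v n ω - partialSum v k ω | ℱ k] := by
  induction n, hkn using Nat.le_induction with
  | base => simp only [sub_self, zero_pow two_ne_zero]; rfl
  | succ n hkn ih =>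
    set d : Ω → ℝ := fun ω => partialSum Y n ω - partialSum Y k ω with hd
    have hdm : Measurable[ℱ n] d := (H.measurable_partialSum n).sub
      ((H.measurable_partialSum k).mono (ℱ.mono hkn) le_rfl)
    have hdL : MemLp d 2 μ := H.memLp_partialSum_sub k n
    have hsplit : (fun ω => (partialSum Y (n + 1) ω - partialSum Y k ω) ^ 2)
        = (fun ω => d ω ^ 2) + ((2 * d) * Y n + fun ω => Y n ω ^ 2) := by
      ext ω; simp only [partialSum_succ, hd, Pi.add_apply, Pi.mul_apply, Pi.ofNat_apply]; ring
    have hsplit_var : (fun ω => partialSum v (n + 1) ω - partialSum v k ω)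
        = (fun ω => partialSum v n ω - partialSum v k ω) + v n := by
      ext ω; simp only [partialSum_succ, Pi.add_apply]; ring
    have htower : μ[fun ω => Y n ω ^ 2 | ℱ k] =ᵐ[μ] μ[v n | ℱ k] :=
      condExp_ae_eq_of_le (ℱ.mono hkn) (ℱ.le n) (H.condExp_sq n)
    have h2dL : MemLp (2 * d) 2 μ := hdL.const_mul 2
    have hcross : μ[(2 * d) * Y n | ℱ k] =ᵐ[μ] 0 :=
      H.condExp_mul_eq_zero hkn (hdm.const_mul 2) h2dL
    have hcross_int : Integrable ((2 * d) * Y n) μ := h2dL.integrable_mul (H.memLp_two n)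
    rw [hsplit, hsplit_var]
    filter_upwards [ih, htower, hcross,
      condExp_add hdL.integrable_sq (hcross_int.add (H.integrable_sq n)) (ℱ k),
      condExp_add hcross_int (H.integrable_sq n) (ℱ k),
      condExp_add (H.integrable_var_sub k n) (H.integrable_var n) (ℱ k)]
      with ω hprev hlast hzero hadd₁ hadd₂ hadd₃
    simp only [Pi.add_apply, Pi.zero_apply] at *
    rw [hadd₁, hadd₂, hadd₃, hprev, hlast, hzero, zero_add]

lemma condExp_sq_partialSum_sub_le (H : HasTruncatedVariance μ ℱ γ Y v) {k n : ℕ} (hkn : k ≤ n)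
    {t : Ω → ℝ} (ht : Measurable[ℱ k] t) (hti : Integrable t μ)
    (htv : ∀ ω, partialSum v n ω - partialSum v k ω ≤ t ω) :
    μ[fun ω => (partialSum Y n ω - partialSum Y k ω) ^ 2 | ℱ k] ≤ᵐ[μ] t :=
  (H.condExp_sq_partialSum_sub hkn).le.trans <|
    (condExp_mono (H.integrable_var_sub k n) hti (.of_forall htv)).trans_eq
      (.of_eq (condExp_of_stronglyMeasurable (ℱ.le k) ht.stronglyMeasurable hti))

end HasTruncatedVariance

end MartingaleDifference

section LindebergStep

variable {Ω : Type*} {mΩ : MeasurableSpace Ω} {μ : Measure Ω}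
  {ℱ : Filtration ℕ mΩ} {Y v : ℕ → Ω → ℝ} {p q ε γ : ℝ}

lemma abs_rpow_two_mul (y p : ℝ) : |y| ^ (2 * p) = (y ^ 2) ^ p := by
  rw [Real.rpow_mul (abs_nonneg y), Real.rpow_two, sq_abs]

/-- The variance left to be spent after step `k`, starting from a budget of `1 + 2γ²`; the surplus
over the total conditional variance keeps it above `γ²`. -/
def remainingVariance (γ : ℝ) (v : ℕ → Ω → ℝ) (k : ℕ) (ω : Ω) : ℝ :=
  1 + 2 * γ ^ 2 - partialSum v k ω

lemma remainingVariance_eq_succ_add (γ : ℝ) (v : ℕ → Ω → ℝ) (k : ℕ) (ω : Ω) :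
    remainingVariance γ v k ω = remainingVariance γ v (k + 1) ω + v k ω := by
  rw [remainingVariance, remainingVariance, partialSum_succ]; ring

/-- The Lindeberg interpolation: after `k` steps the rest of the martingale is replaced by an
independent centred normal variable with the remaining variance. -/
noncomputable def lindebergInterpolant (μ : Measure Ω) (γ : ℝ) (Y v : ℕ → Ω → ℝ) (x : ℝ) (k : ℕ) :
    ℝ := ∫ ω, Φ ((x - partialSum Y k ω) / √(remainingVariance γ v k ω)) ∂μ

lemma lindebergInterpolant_zero [IsProbabilityMeasure μ] (γ : ℝ) (Y v : ℕ → Ω → ℝ) (x : ℝ) :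
    lindebergInterpolant μ γ Y v x 0 = Φ (x / √(1 + 2 * γ ^ 2)) := by
  simp [lindebergInterpolant, remainingVariance, partialSum]

namespace HasTruncatedVariance

lemma integral_var_rpow_le (H : HasTruncatedVariance μ ℱ γ Y v) (hp : 1 ≤ p) {i : ℕ}
    (hYp : Integrable (fun ω => |Y i ω| ^ (2 * p)) μ) :
    ∫ ω, v i ω ^ p ∂μ ≤ ∫ ω, |Y i ω| ^ (2 * p) ∂μ := by
  have hnorm (ω : Ω) : ‖Y i ω ^ 2‖ = Y i ω ^ 2 := Real.norm_of_nonneg (sq_nonneg _)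
  simp only [abs_rpow_two_mul] at hYp ⊢
  have hjensen := integral_norm_condExp_rpow_le (m := ℱ i) (f := fun ω => Y i ω ^ 2) hp
    (by simpa only [hnorm] using hYp)
  simp only [hnorm] at hjensen
  refine (integral_congr_ae ?_).trans_le hjensen
  filter_upwards [H.condExp_sq i] with ω hω
  rw [hω, Real.norm_of_nonneg (H.var_nonneg i ω)]

lemma sq_le_remainingVariance (H : HasTruncatedVariance μ ℱ γ Y v) (k : ℕ) (ω : Ω) :
    γ ^ 2 ≤ remainingVariance γ v k ω := by
  rw [remainingVariance]; linarith [H.partialSum_var_le k ω]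

lemma measurable_remainingVariance_succ (H : HasTruncatedVariance μ ℱ γ Y v) (k : ℕ) :
    Measurable[ℱ k] (remainingVariance γ v (k + 1)) :=
  (_root_.measurable_partialSum fun i hi =>
    (H.measurable_var i).mono (ℱ.mono (Nat.lt_succ_iff.1 hi)) le_rfl).const_sub _

lemma measurable_remainingVariance (H : HasTruncatedVariance μ ℱ γ Y v) (k : ℕ) :
    Measurable (remainingVariance γ v k) :=
  (_root_.measurable_partialSum fun i _ =>
    (H.measurable_var i).mono (ℱ.le i) le_rfl).const_sub _

end HasTruncatedVariance

lemma abs_taylorThreshold_div_mul_decayKernel_le (hp : 1 < p) (hq : 0 < q) (hε : 0 < ε)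
    (hε1 : ε ≤ 1) (hγ : 0 < γ) {t : ℝ} (ht : γ ^ 2 ≤ t) (z : ℝ) :
    |taylorThreshold p ε γ t / t * decayKernel q z| ≤ 1 / γ ^ 2 := by
  have ht0 : 0 < t := (by positivity : 0 < γ ^ 2).trans_le ht
  have hthreshold := taylorThreshold_pos p hε hγ ht0
  have hkernel := decayKernel_pos q z
  rw [abs_of_pos (by positivity)]
  calc taylorThreshold p ε γ t / t * decayKernel q z
      ≤ taylorThreshold p ε γ t / t * 1 := by gcongr; exact decayKernel_le_one hq z
    _ ≤ 1 / γ ^ 2 := by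
        rw [mul_one]
        gcongr
        exact taylorThreshold_le_one hp hε1 ht0 ht

lemma abs_stdNormalPDF_div_sqrt_le (hγ : 0 < γ) {t : ℝ} (ht : γ ^ 2 ≤ t) (z : ℝ) :
    |φ z / √t| ≤ 1 / γ := by
  rw [abs_div, abs_of_nonneg (stdNormalPDF_nonneg _), abs_of_nonneg (Real.sqrt_nonneg _)]
  exact div_le_div₀ zero_le_one (by linarith [stdNormalPDF_le_half z]) hγ
    (Real.le_sqrt_of_sq_le ht)

lemma abs_mul_stdNormalPDF_div_le (hγ : 0 < γ) {t : ℝ} (ht : γ ^ 2 ≤ t) (z : ℝ) :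
    |z * φ z / (2 * t)| ≤ 1 / γ ^ 2 := by
  have hγ2 : 0 < γ ^ 2 := by positivity
  rw [abs_div, abs_of_pos (by linarith : 0 < 2 * t)]
  exact div_le_div₀ zero_le_one (abs_mul_stdNormalPDF_le_one z) hγ2 (by linarith)

lemma abs_stdNormalCDF_increment_le_taylorThreshold (hp : 1 < p) (hq1 : q ≤ 1) (hε : 0 < ε)
    (hε1 : ε ≤ 1) (hγ : 0 < γ) {t v : ℝ} (ht : γ ^ 2 ≤ t) (hv : 0 ≤ v) (hvγ : v ≤ γ ^ 2) (y Y : ℝ) :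
    |Φ ((y - Y) / √t) - Φ (y / √(t + v)) + φ (y / √t) / √t * Y
        + y / √t * φ (y / √t) / (2 * t) * (Y ^ 2 - v)|
      ≤ 648 * (taylorThreshold p ε γ t / t * decayKernel q (y / √t)) * (Y ^ 2 + v)
        + 648 * (ε ^ (-(2 * p - 2)) * γ ^ (-(2 * p))) * (|Y| ^ (2 * p) + v ^ p) := by
  have ht0 : 0 < t := (by positivity : 0 < γ ^ 2).trans_le ht
  have hincrement := abs_stdNormalCDF_increment_le hp.le hq1 (taylorThreshold_pos p hε hγ ht0)
    (taylorThreshold_le_one hp hε1 ht0 ht) ht0 hv (hvγ.trans ht) y Y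
  rw [taylorThreshold_rpow_mul hp hε.le hγ.le ht0] at hincrement
  exact hincrement.trans_eq (by ring)

lemma measurable_taylorThreshold_div_mul_decayKernel {_ : MeasurableSpace Ω} {t z : Ω → ℝ}
    (ht : Measurable t) (hz : Measurable z) :
    Measurable fun ω => taylorThreshold p ε γ (t ω) / t ω * decayKernel q (z ω) :=
  (((((ht.const_div (γ ^ 2)).pow_const (p / (p - 1) / 2)).const_mul ε)).div ht).mul
    ((continuous_decayKernel q).measurable.comp hz)

variable [IsFiniteMeasure μ]

lemma integrable_stdNormalCDF_comp {f : Ω → ℝ} (hf : Measurable f) :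
    Integrable (fun ω => Φ (f ω)) μ :=
  integrable_of_measurable_of_abs_le (continuous_stdNormalCDF.measurable.comp hf) fun ω => by
    rw [abs_of_nonneg (stdNormalCDF_nonneg _)]; exact stdNormalCDF_le_one _

lemma IsMartingaleDifference.integral_mul_eq_zero (H : IsMartingaleDifference μ ℱ Y) (i : ℕ)
    {ξ : Ω → ℝ} {B : ℝ} (hξ : Measurable[ℱ i] ξ) (hξB : ∀ ω, |ξ ω| ≤ B) :
    ∫ ω, ξ ω * Y i ω ∂μ = 0 := by
  rw [← integral_mul_condExp (ℱ.le i) hξ (H.integrable i)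
    (integrable_mul_of_abs_le (hξ.mono (ℱ.le i) le_rfl) hξB (H.integrable i))]
  exact integral_eq_zero_of_ae ((H.condExp_eq_zero i).mono fun ω hω => by simp [hω])

namespace HasTruncatedVariance

lemma integral_mul_sq_eq (H : HasTruncatedVariance μ ℱ γ Y v) (i : ℕ) {ξ : Ω → ℝ} {B : ℝ}
    (hξ : Measurable[ℱ i] ξ) (hξB : ∀ ω, |ξ ω| ≤ B) :
    ∫ ω, ξ ω * Y i ω ^ 2 ∂μ = ∫ ω, ξ ω * v i ω ∂μ := by
  rw [← integral_mul_condExp (ℱ.le i) hξ (H.integrable_sq i)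
    (integrable_mul_of_abs_le (hξ.mono (ℱ.le i) le_rfl) hξB (H.integrable_sq i))]
  exact integral_congr_ae ((H.condExp_sq i).mono fun ω hω => by simp only [hω])

lemma integrable_var_rpow (H : HasTruncatedVariance μ ℱ γ Y v) (hp : 0 ≤ p) (i : ℕ) :
    Integrable (fun ω => v i ω ^ p) μ :=
  integrable_of_measurable_of_abs_le (B := (γ ^ 2) ^ p)
    (((H.measurable_var i).mono (ℱ.le i) le_rfl).pow_const p) fun ω => by
      rw [abs_of_nonneg (Real.rpow_nonneg (H.var_nonneg i ω) p)]
      exact Real.rpow_le_rpow (H.var_nonneg i ω) (H.var_le i ω) hp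

lemma integral_mul_sq_sub_eq_zero (H : HasTruncatedVariance μ ℱ γ Y v) (i : ℕ) {ξ : Ω → ℝ}
    {B : ℝ} (hξ : Measurable[ℱ i] ξ) (hξB : ∀ ω, |ξ ω| ≤ B) :
    ∫ ω, ξ ω * (Y i ω ^ 2 - v i ω) ∂μ = 0 := by
  have hξm := hξ.mono (ℱ.le i) le_rfl
  simp only [mul_sub]
  rw [integral_sub (integrable_mul_of_abs_le hξm hξB (H.integrable_sq i))
      (integrable_mul_of_abs_le hξm hξB (H.integrable_var i)),
    H.integral_mul_sq_eq i hξ hξB, sub_self]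

lemma integral_mul_sq_add_eq (H : HasTruncatedVariance μ ℱ γ Y v) (i : ℕ) {ξ : Ω → ℝ} {B : ℝ}
    (hξ : Measurable[ℱ i] ξ) (hξB : ∀ ω, |ξ ω| ≤ B) :
    ∫ ω, ξ ω * (Y i ω ^ 2 + v i ω) ∂μ = 2 * ∫ ω, ξ ω * v i ω ∂μ := by
  have hξm := hξ.mono (ℱ.le i) le_rfl
  simp only [mul_add]
  rw [integral_add (integrable_mul_of_abs_le hξm hξB (H.integrable_sq i))
      (integrable_mul_of_abs_le hξm hξB (H.integrable_var i)),
    H.integral_mul_sq_eq i hξ hξB, two_mul]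

lemma abs_integral_le_of_abs_taylor_le (H : HasTruncatedVariance μ ℱ γ Y v) (hp : 1 ≤ p) {i : ℕ}
    (hYp : Integrable (fun ω => |Y i ω| ^ (2 * p)) μ) {D ξ₁ ξ₂ w : Ω → ℝ} {B₁ B₂ B₃ b : ℝ}
    (hb : 0 ≤ b) (hD : Integrable D μ) (hξ₁ : Measurable[ℱ i] ξ₁) (hB₁ : ∀ ω, |ξ₁ ω| ≤ B₁)
    (hξ₂ : Measurable[ℱ i] ξ₂) (hB₂ : ∀ ω, |ξ₂ ω| ≤ B₂) (hw : Measurable[ℱ i] w)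
    (hB₃ : ∀ ω, |w ω| ≤ B₃)
    (htaylor : ∀ ω, |D ω + ξ₁ ω * Y i ω + ξ₂ ω * (Y i ω ^ 2 - v i ω)|
      ≤ w ω * (Y i ω ^ 2 + v i ω) + b * (|Y i ω| ^ (2 * p) + v i ω ^ p)) :
    |∫ ω, D ω ∂μ| ≤ 2 * (∫ ω, w ω * v i ω ∂μ + b * ∫ ω, |Y i ω| ^ (2 * p) ∂μ) := by
  have hbdd {ξ f : Ω → ℝ} {B : ℝ} (hξ : Measurable[ℱ i] ξ) (hB : ∀ ω, |ξ ω| ≤ B)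
      (hf : Integrable f μ) : Integrable (fun ω => ξ ω * f ω) μ :=
    integrable_mul_of_abs_le (hξ.mono (ℱ.le i) le_rfl) hB hf
  have hlinear : Integrable (fun ω => D ω + ξ₁ ω * Y i ω) μ :=
    hD.add (hbdd hξ₁ hB₁ (H.integrable i))
  have hquadratic : Integrable (fun ω => ξ₂ ω * (Y i ω ^ 2 - v i ω)) μ :=
    hbdd hξ₂ hB₂ ((H.integrable_sq i).sub (H.integrable_var i))
  have hweight : Integrable (fun ω => w ω * (Y i ω ^ 2 + v i ω)) μ :=
    hbdd hw hB₃ ((H.integrable_sq i).add (H.integrable_var i))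
  have hvp := H.integrable_var_rpow (zero_le_one.trans hp) i
  have hmoment : Integrable (fun ω => b * (|Y i ω| ^ (2 * p) + v i ω ^ p)) μ :=
    (hYp.add hvp).const_mul b
  have hcentred : ∫ ω, (D ω + ξ₁ ω * Y i ω + ξ₂ ω * (Y i ω ^ 2 - v i ω)) ∂μ = ∫ ω, D ω ∂μ := by
    rw [integral_add hlinear hquadratic, integral_add hD (hbdd hξ₁ hB₁ (H.integrable i)),
      H.integral_mul_eq_zero i hξ₁ hB₁, H.integral_mul_sq_sub_eq_zero i hξ₂ hB₂, add_zero, add_zero]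
  rw [← hcentred]
  calc |∫ ω, (D ω + ξ₁ ω * Y i ω + ξ₂ ω * (Y i ω ^ 2 - v i ω)) ∂μ|
      ≤ ∫ ω, (w ω * (Y i ω ^ 2 + v i ω) + b * (|Y i ω| ^ (2 * p) + v i ω ^ p)) ∂μ :=
        abs_integral_le_integral_abs.trans <|
          integral_mono (hlinear.add hquadratic).abs (hweight.add hmoment) htaylor
    _ = 2 * ∫ ω, w ω * v i ω ∂μ
          + b * (∫ ω, |Y i ω| ^ (2 * p) ∂μ + ∫ ω, v i ω ^ p ∂μ) := by
        rw [integral_add hweight hmoment, H.integral_mul_sq_add_eq i hw hB₃, integral_const_mul,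
          integral_add hYp hvp]
    _ ≤ 2 * (∫ ω, w ω * v i ω ∂μ + b * ∫ ω, |Y i ω| ^ (2 * p) ∂μ) := by
        have := mul_le_mul_of_nonneg_left (H.integral_var_rpow_le hp hYp) hb
        linarith

lemma integrable_lindebergInterpolant (H : HasTruncatedVariance μ ℱ γ Y v) (x : ℝ) (k : ℕ) :
    Integrable (fun ω => Φ ((x - partialSum Y k ω) / √(remainingVariance γ v k ω))) μ :=
  integrable_stdNormalCDF_comp <| (((H.measurable_partialSum k).mono (ℱ.le k) le_rfl).const_sub
    x).div (Real.continuous_sqrt.measurable.comp (H.measurable_remainingVariance k))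

lemma abs_lindebergInterpolant_succ_sub_le (H : HasTruncatedVariance μ ℱ γ Y v) (hp : 1 < p)
    (hγ : 0 < γ) (hq : 0 < q) (hq1 : q ≤ 1) (hε : 0 < ε) (hε1 : ε ≤ 1) (x : ℝ) {k : ℕ}
    (hYp : Integrable (fun ω => |Y k ω| ^ (2 * p)) μ) :
    |lindebergInterpolant μ γ Y v x (k + 1) - lindebergInterpolant μ γ Y v x k|
      ≤ 1296 * (∫ ω, taylorThreshold p ε γ (remainingVariance γ v (k + 1) ω)
            / remainingVariance γ v (k + 1) ω
            * decayKernel q ((x - partialSum Y k ω) / √(remainingVariance γ v (k + 1) ω))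
            * v k ω ∂μ
        + ε ^ (-(2 * p - 2)) * γ ^ (-(2 * p)) * ∫ ω, |Y k ω| ^ (2 * p) ∂μ) := by
  set t : Ω → ℝ := remainingVariance γ v (k + 1)
  have htγ : ∀ ω, γ ^ 2 ≤ t ω := H.sq_le_remainingVariance (k + 1)
  have ht : Measurable[ℱ k] t := H.measurable_remainingVariance_succ k
  have hsqrt : Measurable[ℱ k] fun ω => √(t ω) := Real.continuous_sqrt.measurable.comp ht
  set z : Ω → ℝ := fun ω => (x - partialSum Y k ω) / √(t ω)
  have hz : Measurable[ℱ k] z := ((H.measurable_partialSum k).const_sub x).div hsqrt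
  have hφz : Measurable[ℱ k] fun ω => φ (z ω) := continuous_stdNormalPDF.measurable.comp hz
  have hweight (ω) : |648 * (taylorThreshold p ε γ (t ω) / t ω * decayKernel q (z ω))|
      ≤ 648 * (1 / γ ^ 2) := by
    rw [abs_mul, abs_of_pos (by norm_num)]
    gcongr
    exact abs_taylorThreshold_div_mul_decayKernel_le hp hq hε hε1 hγ (htγ ω) _
  have hstep := H.abs_integral_le_of_abs_taylor_le hp.le hYp
    (b := 648 * (ε ^ (-(2 * p - 2)) * γ ^ (-(2 * p)))) (by positivity)
    ((H.integrable_lindebergInterpolant x (k + 1)).sub (H.integrable_lindebergInterpolant x k))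
    (hφz.div hsqrt) (fun ω => abs_stdNormalPDF_div_sqrt_le hγ (htγ ω) _)
    ((hz.mul hφz).div (ht.const_mul 2)) (fun ω => abs_mul_stdNormalPDF_div_le hγ (htγ ω) _)
    ((measurable_taylorThreshold_div_mul_decayKernel (p := p) (q := q) (ε := ε) (γ := γ)
      ht hz).const_mul 648) hweight fun ω => ?_
  · refine (le_of_eq ?_).trans (hstep.trans_eq ?_)
    · rw [lindebergInterpolant, lindebergInterpolant,
        integral_sub' (H.integrable_lindebergInterpolant x (k + 1))
          (H.integrable_lindebergInterpolant x k)]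
    · simp only [mul_assoc, integral_const_mul]
      ring
  · have hincrement := abs_stdNormalCDF_increment_le_taylorThreshold hp hq1 hε hε1 hγ (htγ ω)
      (H.var_nonneg k ω) (H.var_le k ω) (x - partialSum Y k ω) (Y k ω)
    rwa [sub_sub, ← partialSum_succ, ← remainingVariance_eq_succ_add] at hincrement

end HasTruncatedVariance

end LindebergStep

section LindebergSum

variable {Ω : Type*} {mΩ : MeasurableSpace Ω} {μ : Measure Ω}
  {ℱ : Filtration ℕ mΩ} {Y v : ℕ → Ω → ℝ} {p q ε γ : ℝ}

namespace HasTruncatedVariance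

lemma measurable_var_mul_rpow_div (H : HasTruncatedVariance μ ℱ γ Y v) (α : ℝ) (k : ℕ) :
    Measurable fun ω => v k ω * ((γ ^ 2 / remainingVariance γ v (k + 1) ω) ^ α
      / remainingVariance γ v (k + 1) ω) :=
  ((H.measurable_var k).mono (ℱ.le k) le_rfl).mul
    ((((H.measurable_remainingVariance (k + 1)).const_div _).pow_const α).div
      (H.measurable_remainingVariance (k + 1)))

lemma abs_var_mul_rpow_div_le_one (H : HasTruncatedVariance μ ℱ γ Y v) (hγ : 0 < γ) {α : ℝ}
    (hα : 0 ≤ α) (k : ℕ) (ω : Ω) :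
    |v k ω * ((γ ^ 2 / remainingVariance γ v (k + 1) ω) ^ α
      / remainingVariance γ v (k + 1) ω)| ≤ 1 := by
  have htγ := H.sq_le_remainingVariance (k + 1) ω
  have ht0 : 0 < remainingVariance γ v (k + 1) ω := (by positivity : 0 < γ ^ 2).trans_le htγ
  have hrpow : (γ ^ 2 / remainingVariance γ v (k + 1) ω) ^ α ≤ 1 :=
    Real.rpow_le_one (by positivity) ((div_le_one ht0).2 htγ) hα
  have hv := H.var_nonneg k ω
  rw [abs_of_nonneg (by positivity), ← mul_div_assoc, div_le_one ht0]
  exact (mul_le_of_le_one_right hv hrpow).trans ((H.var_le k ω).trans htγ)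

variable [IsProbabilityMeasure μ]

lemma integrable_remainingVariance (H : HasTruncatedVariance μ ℱ γ Y v) (k : ℕ) :
    Integrable (remainingVariance γ v k) μ :=
  (integrable_const (1 + 2 * γ ^ 2)).sub (integrable_finsetSum _ fun i _ => H.integrable_var i)

lemma condExp_sq_partialSum_sub_le_remainingVariance (H : HasTruncatedVariance μ ℱ γ Y v) {k n : ℕ}
    (hkn : k ≤ n) :
    μ[fun ω => (partialSum Y n ω - partialSum Y k ω) ^ 2 | ℱ k]
      ≤ᵐ[μ] remainingVariance γ v (k + 1) := by
  refine H.condExp_sq_partialSum_sub_le hkn (H.measurable_remainingVariance_succ k)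
    (H.integrable_remainingVariance (k + 1)) fun ω => ?_
  rw [remainingVariance, partialSum_succ]
  linarith [H.partialSum_var_le n ω, H.var_le k ω]

lemma integral_taylorThreshold_mul_le_terminal (H : HasTruncatedVariance μ ℱ γ Y v) (hp : 1 < p)
    (hγ : 0 < γ) (hq : 0 < q) (hq1 : q ≤ 1) (hε : 0 < ε) (hε1 : ε ≤ 1) (x : ℝ) {k n : ℕ}
    (hkn : k ≤ n) :
    ∫ ω, taylorThreshold p ε γ (remainingVariance γ v (k + 1) ω)
          / remainingVariance γ v (k + 1) ω
          * decayKernel q ((x - partialSum Y k ω) / √(remainingVariance γ v (k + 1) ω))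
          * v k ω ∂μ
      ≤ 2 * ∫ ω, taylorThreshold p ε γ (remainingVariance γ v (k + 1) ω)
          / remainingVariance γ v (k + 1) ω
          * decayKernel q ((x - partialSum Y n ω) / √(remainingVariance γ v (k + 1) ω))
          * v k ω ∂μ := by
  set t : Ω → ℝ := remainingVariance γ v (k + 1)
  have htγ : ∀ ω, γ ^ 2 ≤ t ω := H.sq_le_remainingVariance (k + 1)
  have ht0 (ω) : 0 < t ω := (by positivity : 0 < γ ^ 2).trans_le (htγ ω)
  have ht : Measurable[ℱ k] t := H.measurable_remainingVariance_succ k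
  have hthreshold : Measurable[ℱ k] fun ω => taylorThreshold p ε γ (t ω) :=
    (((ht.const_div (γ ^ 2)).pow_const (p / (p - 1) / 2)).const_mul ε)
  have hjensen := integral_mul_decayKernel_le_of_condExp (ℱ.le k) hq hq1 hγ (B := 1)
    (ξ := fun ω => taylorThreshold p ε γ (t ω) / t ω * v k ω)
    (d := fun ω => partialSum Y n ω - partialSum Y k ω)
    ((hthreshold.div ht).mul (H.measurable_var k))
    (fun ω => mul_nonneg (div_nonneg (taylorThreshold_pos p hε hγ (ht0 ω)).le (ht0 ω).le)
      (H.var_nonneg k ω)) (fun ω => ?_) ht htγ (H.integrable_remainingVariance (k + 1))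
    ((H.measurable_partialSum k).const_sub x)
    (((H.measurable_partialSum n).mono (ℱ.le n) le_rfl).sub
      ((H.measurable_partialSum k).mono (ℱ.le k) le_rfl))
    (H.memLp_partialSum_sub k n) (H.condExp_partialSum_sub hkn)
    (H.condExp_sq_partialSum_sub_le_remainingVariance hkn)
  · simpa only [sub_sub, add_sub_cancel, mul_right_comm] using hjensen
  · rw [div_mul_eq_mul_div, div_le_one (ht0 ω)]
    exact (mul_le_of_le_one_left (H.var_nonneg k ω)
      (taylorThreshold_le_one hp hε1 (ht0 ω) (htγ ω))).trans ((H.var_le k ω).trans (htγ ω))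

lemma integrable_var_mul_rpow_div_mul_decayKernel (H : HasTruncatedVariance μ ℱ γ Y v)
    (hγ : 0 < γ) {α : ℝ} (hα : 0 ≤ α) (hq : 0 < q) {z : Ω → ℝ} (hz : Measurable z) (k : ℕ) :
    Integrable (fun ω => v k ω * ((γ ^ 2 / remainingVariance γ v (k + 1) ω) ^ α
      / remainingVariance γ v (k + 1) ω) * decayKernel q (z ω)) μ :=
  integrable_mul_decayKernel hq (H.measurable_var_mul_rpow_div α k)
    (H.abs_var_mul_rpow_div_le_one hγ hα k) hz

lemma sum_integral_var_mul_decayKernel_le (H : HasTruncatedVariance μ ℱ γ Y v) (hγ : 0 < γ)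
    {α : ℝ} (hα : 0 < α) (hq : 0 < q) {z : Ω → ℝ} (hz : Measurable z) (n : ℕ) :
    ∑ k ∈ range n, ∫ ω, v k ω * ((γ ^ 2 / remainingVariance γ v (k + 1) ω) ^ α
        / remainingVariance γ v (k + 1) ω) * decayKernel q (z ω) ∂μ
      ≤ (2 + α) / α * ∫ ω, decayKernel q (z ω) ∂μ := by
  have hint := H.integrable_var_mul_rpow_div_mul_decayKernel hγ hα.le hq hz
  rw [← integral_finsetSum _ fun k _ => hint k, ← integral_const_mul]
  refine integral_mono (integrable_finsetSum _ fun k _ => hint k)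
    ((integrable_decayKernel_comp hq hz).const_mul _) fun ω => ?_
  simp only [← sum_mul]
  have ht (k : ℕ) := H.sq_le_remainingVariance k ω
  have hsum := sum_mul_rpow_div_le hα (sq_nonneg γ) n (t := fun k => remainingVariance γ v k ω)
    (v := fun k => v k ω) (fun k => (by positivity : 0 < γ ^ 2).trans_le (ht k)) ht
    (fun k => H.var_nonneg k ω) (fun k => (H.var_le k ω).trans (ht (k + 1)))
    fun k => remainingVariance_eq_succ_add γ v k ω
  exact mul_le_mul_of_nonneg_right hsum (decayKernel_pos q (z ω)).le

lemma integral_taylorThreshold_mul_var_le (H : HasTruncatedVariance μ ℱ γ Y v) (hp : 1 < p)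
    (hγ : 0 < γ) (hq : 0 < q) (hq1 : q ≤ 1) (hqp : q ≤ p / (p - 1) / 2) (hε : 0 < ε) (hε1 : ε ≤ 1)
    (x : ℝ) {k n : ℕ} (hkn : k ≤ n) :
    ∫ ω, taylorThreshold p ε γ (remainingVariance γ v (k + 1) ω)
          / remainingVariance γ v (k + 1) ω
          * decayKernel q ((x - partialSum Y k ω) / √(remainingVariance γ v (k + 1) ω))
          * v k ω ∂μ
      ≤ 2 * ε * ∫ ω, v k ω * ((γ ^ 2 / remainingVariance γ v (k + 1) ω) ^ (p / (p - 1) / 2 - q)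
          / remainingVariance γ v (k + 1) ω) * decayKernel q ((x - partialSum Y n ω) / γ) ∂μ := by
  refine (H.integral_taylorThreshold_mul_le_terminal hp hγ hq hq1 hε hε1 x hkn).trans ?_
  have hS : Measurable fun ω => x - partialSum Y n ω :=
    ((H.measurable_partialSum n).mono (ℱ.le n) le_rfl).const_sub x
  have hright := H.integrable_var_mul_rpow_div_mul_decayKernel hγ (sub_nonneg.2 hqp) hq
    (hS.div_const γ) k
  rw [mul_assoc, ← integral_const_mul ε]
  refine mul_le_mul_of_nonneg_left (integral_mono_of_nonneg (Eventually.of_forall fun ω => ?_)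
    (hright.const_mul ε) (Eventually.of_forall fun ω => ?_)) zero_le_two
  · have ht0 : 0 < remainingVariance γ v (k + 1) ω :=
      (by positivity : 0 < γ ^ 2).trans_le (H.sq_le_remainingVariance (k + 1) ω)
    exact mul_nonneg (mul_nonneg (div_nonneg (taylorThreshold_pos p hε hγ ht0).le ht0.le)
      (decayKernel_pos q _).le) (H.var_nonneg k ω)
  · exact (mul_le_mul_of_nonneg_right (taylorThreshold_mul_decayKernel_le hq hε.le hγ
      (H.sq_le_remainingVariance (k + 1) ω) _) (H.var_nonneg k ω)).trans_eq (by ring)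

lemma abs_lindebergInterpolant_sub_le (H : HasTruncatedVariance μ ℱ γ Y v) (hp : 1 < p)
    (hγ : 0 < γ) (hq : 0 < q) (hq1 : q ≤ 1) (hqp : q < p / (p - 1) / 2) (hε : 0 < ε) (hε1 : ε ≤ 1)
    (x : ℝ) {n : ℕ} (hYp : ∀ k < n, Integrable (fun ω => |Y k ω| ^ (2 * p)) μ)
    (hmoment : ∑ k ∈ range n, ∫ ω, |Y k ω| ^ (2 * p) ∂μ ≤ γ ^ (2 * p + 1)) :
    |lindebergInterpolant μ γ Y v x n - lindebergInterpolant μ γ Y v x 0|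
      ≤ 2592 * ε * ((2 + (p / (p - 1) / 2 - q)) / (p / (p - 1) / 2 - q)
          * ∫ ω, decayKernel q ((x - partialSum Y n ω) / γ) ∂μ)
        + 1296 * (ε ^ (-(2 * p - 2)) * γ) := by
  have hS : Measurable fun ω => x - partialSum Y n ω :=
    ((H.measurable_partialSum n).mono (ℱ.le n) le_rfl).const_sub x
  set κ : Ω → ℝ := fun ω => decayKernel q ((x - partialSum Y n ω) / γ)
  set α := p / (p - 1) / 2 - q
  set M : ℕ → ℝ := fun k => ∫ ω, v k ω * ((γ ^ 2 / remainingVariance γ v (k + 1) ω) ^ α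
    / remainingVariance γ v (k + 1) ω) * κ ω ∂μ
  have hpow : γ ^ (-(2 * p)) * γ ^ (2 * p + 1) = γ := by
    rw [← Real.rpow_add hγ, neg_add_cancel_left, Real.rpow_one]
  have hstep (k) (hk : k ∈ range n) :
      |lindebergInterpolant μ γ Y v x (k + 1) - lindebergInterpolant μ γ Y v x k|
        ≤ 1296 * (2 * ε * M k
          + ε ^ (-(2 * p - 2)) * γ ^ (-(2 * p)) * ∫ ω, |Y k ω| ^ (2 * p) ∂μ) := by
    have hkn := mem_range.1 hk
    refine (H.abs_lindebergInterpolant_succ_sub_le hp hγ hq hq1 hε hε1 x (hYp k hkn)).trans ?_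
    gcongr
    exact H.integral_taylorThreshold_mul_var_le hp hγ hq hq1 hqp.le hε hε1 x hkn.le
  have hM := H.sum_integral_var_mul_decayKernel_le hγ (sub_pos.2 hqp) hq (hS.div_const γ) n
  calc |lindebergInterpolant μ γ Y v x n - lindebergInterpolant μ γ Y v x 0|
      = |∑ k ∈ range n,
          (lindebergInterpolant μ γ Y v x (k + 1) - lindebergInterpolant μ γ Y v x k)| := by
        rw [sum_range_sub (lindebergInterpolant μ γ Y v x)]
    _ ≤ ∑ k ∈ range n, 1296 * (2 * ε * M k
          + ε ^ (-(2 * p - 2)) * γ ^ (-(2 * p)) * ∫ ω, |Y k ω| ^ (2 * p) ∂μ) :=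
        (abs_sum_le_sum_abs _ _).trans (sum_le_sum hstep)
    _ = 2592 * ε * ∑ k ∈ range n, M k + 1296 * (ε ^ (-(2 * p - 2))
          * (γ ^ (-(2 * p)) * ∑ k ∈ range n, ∫ ω, |Y k ω| ^ (2 * p) ∂μ)) := by
        rw [← mul_sum, sum_add_distrib, ← mul_sum, ← mul_sum]; ring
    _ ≤ 2592 * ε * ((2 + α) / α * ∫ ω, κ ω ∂μ)
          + 1296 * (ε ^ (-(2 * p - 2)) * (γ ^ (-(2 * p)) * γ ^ (2 * p + 1))) := by gcongr
    _ = _ := by rw [hpow]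

end HasTruncatedVariance

end LindebergSum

section SmoothingInequality

lemma tail_le_mul_decayKernel {q γ c T u : ℝ} (hq1 : q ≤ 1) (hγ : 0 < γ) (hc : 0 < c)
    (hT0 : 0 < T) (hT : T ≤ 3 * γ ^ 2) (hu : 0 ≤ u) :
    700 / (1 + ((u + c * γ) / √T) ^ 2) ^ 2 ≤ 11200 / c ^ 2 * decayKernel q (u / γ) := by
  set w := u / γ
  have hw : 0 ≤ w := by positivity
  have hsqrt : √T ≤ 2 * γ := (Real.sqrt_le_left (by positivity)).2 (by nlinarith)
  set y := (u + c * γ) / √T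
  have hy : (c + w) / 2 ≤ y := by
    rw [div_le_div_iff₀ two_pos (Real.sqrt_pos.2 hT0), show u + c * γ = (c + w) * γ by
      rw [add_mul, div_mul_cancel₀ u hγ.ne', add_comm]]
    nlinarith
  have hysq : ((c + w) / 2) ^ 2 ≤ y ^ 2 := pow_le_pow_left₀ (by positivity) hy 2
  have hprod : c ^ 2 / 4 * ((1 + w ^ 2) / 4) ≤ (1 + y ^ 2) ^ 2 := by
    rw [sq (1 + y ^ 2)]
    exact mul_le_mul (by nlinarith [mul_nonneg hc.le hw]) (by nlinarith [mul_nonneg hc.le hw])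
      (by positivity) (by positivity)
  calc 700 / (1 + y ^ 2) ^ 2 ≤ 700 / (c ^ 2 / 4 * ((1 + w ^ 2) / 4)) := by gcongr
    _ = 11200 / c ^ 2 * (1 + w ^ 2)⁻¹ := by field_simp; ring
    _ ≤ 11200 / c ^ 2 * decayKernel q w := by gcongr; exact inv_one_add_sq_le_decayKernel hq1 w

variable {Ω : Type*} [MeasurableSpace Ω] {μ : Measure Ω} [IsProbabilityMeasure μ]

lemma integral_le_integral_add_add_measureReal {f g h : Ω → ℝ} {B : Set Ω} (hf : Integrable f μ)
    (hg : Integrable g μ) (hh : Integrable h μ) (hB : MeasurableSet B) (hf1 : ∀ ω, f ω ≤ 1)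
    (hg0 : ∀ ω, 0 ≤ g ω) (hh0 : ∀ ω, 0 ≤ h ω) (hle : ∀ ω ∉ B, f ω ≤ g ω + h ω) :
    ∫ ω, f ω ∂μ ≤ ∫ ω, g ω ∂μ + ∫ ω, h ω ∂μ + μ.real B := by
  have hone : Integrable (B.indicator (1 : Ω → ℝ)) μ := (integrable_const (1 : ℝ)).indicator hB
  have hgh : Integrable (fun ω => g ω + h ω) μ := hg.add hh
  rw [← integral_indicator_one hB, ← integral_add hg hh, ← integral_add hgh hone]
  refine integral_mono hf (hgh.add hone) fun ω => ?_
  by_cases hω : ω ∈ B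
  · simp only [Set.indicator_of_mem hω, Pi.one_apply]
    linarith [hf1 ω, hg0 ω, hh0 ω]
  · simp only [Set.indicator_of_notMem hω, add_zero]
    exact hle ω hω

variable {S T : Ω → ℝ} {q γ c : ℝ}

lemma measureReal_le_integral_stdNormalCDF_add (hq : 0 < q) (hq1 : q ≤ 1) (hγ : 0 < γ)
    (hc : 0 < c) (hS : Measurable S) (hT : Measurable T) (hT0 : ∀ ω, 0 < T ω) (x : ℝ) :
    μ.real {ω | S ω ≤ x} ≤ ∫ ω, Φ ((x + c * γ - S ω) / √(T ω)) ∂μ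
      + ∫ ω, 11200 / c ^ 2 * decayKernel q ((x - S ω) / γ) ∂μ + μ.real {ω | 3 * γ ^ 2 < T ω} := by
  have hE : MeasurableSet {ω | S ω ≤ x} := measurableSet_le hS measurable_const
  rw [← integral_indicator_one hE]
  refine integral_le_integral_add_add_measureReal ((integrable_const (1 : ℝ)).indicator hE)
    (integrable_stdNormalCDF_comp
      ((hS.const_sub _).div (Real.continuous_sqrt.measurable.comp hT)))
    ((integrable_decayKernel_comp hq ((hS.const_sub x).div_const γ)).const_mul _)
    (measurableSet_lt measurable_const hT)
    (fun ω => Set.indicator_le_self' (fun _ _ => zero_le_one) ω) (fun ω => stdNormalCDF_nonneg _)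
    (fun ω => mul_nonneg (by positivity) (decayKernel_pos q _).le) fun ω hω => ?_
  by_cases hx : ω ∈ {ω | S ω ≤ x}
  · have hu : 0 ≤ x - S ω := sub_nonneg.2 hx
    have htail := one_sub_stdNormalCDF_le (y := (x - S ω + c * γ) / √(T ω)) (by positivity)
    rw [Set.indicator_of_mem hx, Pi.one_apply, show x + c * γ - S ω = x - S ω + c * γ by ring]
    linarith [tail_le_mul_decayKernel hq1 hγ hc (hT0 ω) (not_lt.1 hω) hu]
  · rw [Set.indicator_of_notMem hx]
    exact add_nonneg (stdNormalCDF_nonneg _) (mul_nonneg (by positivity) (decayKernel_pos q _).le)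

lemma integral_stdNormalCDF_le_measureReal_add (hq : 0 < q) (hq1 : q ≤ 1) (hγ : 0 < γ)
    (hc : 0 < c) (hS : Measurable S) (hT : Measurable T) (hT0 : ∀ ω, 0 < T ω) (x : ℝ) :
    ∫ ω, Φ ((x - c * γ - S ω) / √(T ω)) ∂μ ≤ μ.real {ω | S ω ≤ x}
      + ∫ ω, 11200 / c ^ 2 * decayKernel q ((x - S ω) / γ) ∂μ + μ.real {ω | 3 * γ ^ 2 < T ω} := by
  have hE : MeasurableSet {ω | S ω ≤ x} := measurableSet_le hS measurable_const
  have hone : 0 ≤ ({ω | S ω ≤ x}.indicator 1 : Ω → ℝ) :=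
    Set.indicator_nonneg fun _ _ => zero_le_one
  rw [← integral_indicator_one hE]
  refine integral_le_integral_add_add_measureReal (integrable_stdNormalCDF_comp
      ((hS.const_sub _).div (Real.continuous_sqrt.measurable.comp hT)))
    ((integrable_const (1 : ℝ)).indicator hE)
    ((integrable_decayKernel_comp hq ((hS.const_sub x).div_const γ)).const_mul _)
    (measurableSet_lt measurable_const hT) (fun ω => stdNormalCDF_le_one _) hone
    (fun ω => mul_nonneg (by positivity) (decayKernel_pos q _).le) fun ω hω => ?_
  by_cases hx : ω ∈ {ω | S ω ≤ x}
  · rw [Set.indicator_of_mem hx, Pi.one_apply]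
    exact (stdNormalCDF_le_one _).trans
      (le_add_of_nonneg_right (mul_nonneg (by positivity) (decayKernel_pos q _).le))
  · have hu : 0 ≤ S ω - x := sub_nonneg.2 (not_le.1 hx).le
    have htail := stdNormalCDF_neg_le (y := (S ω - x + c * γ) / √(T ω)) (by positivity)
    rw [Set.indicator_of_notMem hx, zero_add,
      show x - c * γ - S ω = -(S ω - x + c * γ) by ring, neg_div, ← neg_sub (S ω) x, neg_div,
      decayKernel_neg]
    exact htail.trans (tail_le_mul_decayKernel hq1 hγ hc (hT0 ω) (not_lt.1 hω) hu)

lemma abs_measureReal_sub_stdNormalCDF_le (hq : 0 < q) (hq1 : q ≤ 1) (hγ : 0 < γ) (hc : 0 < c)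
    (hS : Measurable S) (hT : Measurable T) (hT0 : ∀ ω, 0 < T ω) {A : ℝ}
    (hA : ∀ y, |∫ ω, Φ ((y - S ω) / √(T ω)) ∂μ - Φ y| ≤ A) (x : ℝ) :
    |μ.real {ω | S ω ≤ x} - Φ x| ≤ A + c * γ
      + 11200 / c ^ 2 * ∫ ω, decayKernel q ((x - S ω) / γ) ∂μ + μ.real {ω | 3 * γ ^ 2 < T ω} := by
  have hcγ : 0 ≤ c * γ := by positivity
  have hupper := measureReal_le_integral_stdNormalCDF_add (μ := μ) hq hq1 hγ hc hS hT hT0 x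
  have hlower := integral_stdNormalCDF_le_measureReal_add (μ := μ) hq hq1 hγ hc hS hT hT0 x
  have hshift_up := abs_stdNormalCDF_sub_le x (x + c * γ)
  have hshift_down := abs_stdNormalCDF_sub_le x (x - c * γ)
  rw [add_sub_cancel_left, abs_of_nonneg hcγ] at hshift_up
  rw [sub_sub_cancel_left, abs_neg, abs_of_nonneg hcγ] at hshift_down
  rw [integral_const_mul] at hupper hlower
  have hsmooth_up := abs_le.1 (hA (x + c * γ))
  have hsmooth_down := abs_le.1 (hA (x - c * γ))
  rw [abs_le] at hshift_up hshift_down ⊢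
  constructor <;> linarith

end SmoothingInequality

section TruncatedBerryEsseen

lemma abs_le_two_mul_of_self_bounding {ι : Type*} {F : ι → ℝ} {b : ℝ} (hF : ∀ x, |F x| ≤ 1)
    (hself : ∀ D, (∀ x, |F x| ≤ D) → ∀ x, |F x| ≤ b + D / 2) (x : ι) : |F x| ≤ 2 * b := by
  have : Nonempty ι := ⟨x⟩
  have hbdd : BddAbove (Set.range fun x => |F x|) := ⟨1, Set.forall_mem_range.2 hF⟩
  have hsup : ⨆ x, |F x| ≤ b + (⨆ x, |F x|) / 2 := ciSup_le (hself _ fun x => le_ciSup hbdd x)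
  linarith [le_ciSup hbdd x]

lemma abs_measureReal_sub_stdNormalCDF_le_one {Ω : Type*} [MeasurableSpace Ω] {μ : Measure Ω}
    [IsProbabilityMeasure μ] (s : Set Ω) (x : ℝ) : |μ.real s - Φ x| ≤ 1 :=
  abs_sub_le_of_nonneg_of_le measureReal_nonneg measureReal_le_one (stdNormalCDF_nonneg x)
    (stdNormalCDF_le_one x)

lemma exists_exponent_and_scale {p : ℝ} (hp : 1 < p) :
    ∃ q ε : ℝ, 1 / 2 < q ∧ q ≤ 1 ∧ q < p / (p - 1) / 2 ∧ 0 < ε ∧ ε ≤ 1 ∧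
      2592 * ε * ((2 + (p / (p - 1) / 2 - q)) / (p / (p - 1) / 2 - q)) ≤ 1 / 8 := by
  have hp1 : 0 < p - 1 := sub_pos.2 hp
  have hq : 1 / (4 * p) ≤ 1 / 4 := one_div_le_one_div_of_le (by norm_num) (by linarith)
  have hexponent : 1 / 2 + 1 / (4 * p) < p / (p - 1) / 2 := by
    rw [show p / (p - 1) / 2 = 1 / 2 + 1 / (2 * (p - 1)) by field_simp; ring]
    gcongr 1 / 2 + 1 / ?_
    linarith
  set α := p / (p - 1) / 2 - (1 / 2 + 1 / (4 * p))
  have hα : 0 < α := sub_pos.2 hexponent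
  refine ⟨1 / 2 + 1 / (4 * p), min 1 (1 / (20736 * ((2 + α) / α))),
    lt_add_of_pos_right _ (by positivity), by linarith, hexponent, by positivity,
    min_le_left _ _, ?_⟩
  calc 2592 * min 1 (1 / (20736 * ((2 + α) / α))) * ((2 + α) / α)
      ≤ 2592 * (1 / (20736 * ((2 + α) / α))) * ((2 + α) / α) := by
        gcongr; exact min_le_right _ _
    _ = 1 / 8 := by field_simp; norm_num

variable {Ω : Type*} {mΩ : MeasurableSpace Ω} {μ : Measure Ω} [IsProbabilityMeasure μ]
  {ℱ : Filtration ℕ mΩ} {Y v : ℕ → Ω → ℝ} {p γ : ℝ}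

lemma HasTruncatedVariance.abs_lindebergInterpolant_sub_stdNormalCDF_le
    (H : HasTruncatedVariance μ ℱ γ Y v) (hp : 1 < p) {q ε : ℝ} (hγ : 0 < γ) (hγ1 : γ ≤ 1)
    (hq : 0 < q) (hq1 : q ≤ 1) (hqp : q < p / (p - 1) / 2) (hε : 0 < ε) (hε1 : ε ≤ 1)
    (hεq : 2592 * ε * ((2 + (p / (p - 1) / 2 - q)) / (p / (p - 1) / 2 - q)) ≤ 1 / 8)
    (x : ℝ) {n : ℕ} (hYp : ∀ k < n, Integrable (fun ω => |Y k ω| ^ (2 * p)) μ)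
    (hmoment : ∑ k ∈ range n, ∫ ω, |Y k ω| ^ (2 * p) ∂μ ≤ γ ^ (2 * p + 1)) :
    |lindebergInterpolant μ γ Y v x n - Φ x|
      ≤ 1 / 8 * ∫ ω, decayKernel q ((x - partialSum Y n ω) / γ) ∂μ
        + (1296 * ε ^ (-(2 * p - 2)) + 2) * γ := by
  have hstep := H.abs_lindebergInterpolant_sub_le hp hγ hq hq1 hqp hε hε1 x hYp hmoment
  have hscale := abs_stdNormalCDF_div_sqrt_sub_le x (by positivity : 0 ≤ 2 * γ ^ 2)
  rw [lindebergInterpolant_zero, ← mul_assoc] at hstep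
  have hκ : 0 ≤ ∫ ω, decayKernel q ((x - partialSum Y n ω) / γ) ∂μ :=
    integral_nonneg fun ω => (decayKernel_pos q _).le
  have hγ2 : γ ^ 2 ≤ γ := pow_le_of_le_one hγ.le hγ1 two_ne_zero
  linarith [abs_sub_le (lindebergInterpolant μ γ Y v x n) (Φ (x / √(1 + 2 * γ ^ 2))) (Φ x),
    mul_le_mul_of_nonneg_right hεq hκ]

theorem exists_forall_abs_measureReal_partialSum_sub_le (hp : 1 < p) :
    ∃ C : ℝ, 0 < C ∧ ∀ {Ω : Type*} {mΩ : MeasurableSpace Ω} {μ : Measure Ω}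
      [IsProbabilityMeasure μ] {ℱ : Filtration ℕ mΩ} {Y v : ℕ → Ω → ℝ} {γ : ℝ},
      HasTruncatedVariance μ ℱ γ Y v → 0 < γ → γ ≤ 1 → ∀ {n : ℕ},
      (∀ k < n, Integrable (fun ω => |Y k ω| ^ (2 * p)) μ) →
      ∑ k ∈ range n, ∫ ω, |Y k ω| ^ (2 * p) ∂μ ≤ γ ^ (2 * p + 1) →
      μ.real {ω | 3 * γ ^ 2 < remainingVariance γ v n ω} ≤ γ →
      ∀ x, |μ.real {ω | partialSum Y n ω ≤ x} - Φ x| ≤ C * γ := by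
  obtain ⟨q, ε, hqhalf, hq1, hqp, hε, hε1, hεq⟩ := exists_exponent_and_scale hp
  have hq : 0 < q := by linarith
  set K := 2 / (1 - 1 / (2 * q))
  set E := ε ^ (-(2 * p - 2))
  have hK : 0 < K := div_pos two_pos (sub_pos.2 ((div_lt_one (by linarith)).2 (by linarith)))
  refine ⟨2 * (303 + K / 4 + 1296 * E), by positivity, fun {Ω mΩ μ _ ℱ Y v γ} H hγ hγ1 n hYp
    hmoment hV x => ?_⟩
  rw [mul_assoc]
  refine abs_le_two_mul_of_self_bounding (F := fun x => μ.real {ω | partialSum Y n ω ≤ x} - Φ x)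
    (fun x => abs_measureReal_sub_stdNormalCDF_le_one _ x) (fun D hD x => ?_) x
  have hS : Measurable (partialSum Y n) := (H.measurable_partialSum n).mono (ℱ.le n) le_rfl
  have hκ (y) : ∫ ω, decayKernel q ((y - partialSum Y n ω) / γ) ∂μ ≤ K * γ + 2 * D :=
    integral_decayKernel_le hS hqhalf hγ hD y
  have hsmooth (y) : |∫ ω, Φ ((y - partialSum Y n ω) / √(remainingVariance γ v n ω)) ∂μ - Φ y|
      ≤ 1 / 8 * (K * γ + 2 * D) + (1296 * E + 2) * γ :=
    (H.abs_lindebergInterpolant_sub_stdNormalCDF_le hp hγ hγ1 hq hq1 hqp hε hε1 hεq y hYp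
      hmoment).trans (by gcongr; exact hκ y)
  have hunsmooth := abs_measureReal_sub_stdNormalCDF_le hq hq1 hγ (c := 300) (by norm_num) hS
    (H.measurable_remainingVariance n)
    (fun ω => (by positivity : 0 < γ ^ 2).trans_le (H.sq_le_remainingVariance n ω)) hsmooth x
  have hκ0 : 0 ≤ ∫ ω, decayKernel q ((x - partialSum Y n ω) / γ) ∂μ :=
    integral_nonneg fun ω => (decayKernel_pos q _).le
  linarith [hκ x]

end TruncatedBerryEsseen

section NonnegCondExp

variable {Ω : Type*} {m mΩ : MeasurableSpace Ω} {μ : Measure Ω} {f : Ω → ℝ}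

/-- The version of the conditional expectation of a nonnegative function that is nonnegative
everywhere, rather than only almost everywhere. -/
noncomputable def nonnegCondExp (μ : Measure Ω) (m : MeasurableSpace Ω) (f : Ω → ℝ) (ω : Ω) : ℝ :=
  max ((μ[f | m]) ω) 0

lemma measurable_nonnegCondExp : Measurable[m] (nonnegCondExp μ m f) :=
  stronglyMeasurable_condExp.measurable.max measurable_const

lemma nonnegCondExp_nonneg (ω : Ω) : 0 ≤ nonnegCondExp μ m f ω := le_max_right _ _

lemma nonnegCondExp_ae_eq (hf : 0 ≤ f) : nonnegCondExp μ m f =ᵐ[μ] μ[f | m] :=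
  (condExp_nonneg (.of_forall hf)).mono fun _ hω => max_eq_left hω

lemma integrable_nonnegCondExp (hf : 0 ≤ f) : Integrable (nonnegCondExp μ m f) μ :=
  integrable_condExp.congr (nonnegCondExp_ae_eq hf).symm

lemma integral_mul_nonnegCondExp [IsFiniteMeasure μ] (hm : m ≤ mΩ) (hf : 0 ≤ f)
    (hfi : Integrable f μ) {ξ : Ω → ℝ} {B : ℝ} (hξ : Measurable[m] ξ) (hξB : ∀ ω, |ξ ω| ≤ B) :
    ∫ ω, ξ ω * nonnegCondExp μ m f ω ∂μ = ∫ ω, ξ ω * f ω ∂μ := by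
  rw [← integral_mul_condExp hm hξ hfi (integrable_mul_of_abs_le (hξ.mono hm le_rfl) hξB hfi)]
  exact integral_congr_ae ((nonnegCondExp_ae_eq (m := m) hf).mono fun ω hω => by simp only [hω])

lemma integral_nonnegCondExp [IsFiniteMeasure μ] (hm : m ≤ mΩ) (hf : 0 ≤ f) :
    ∫ ω, nonnegCondExp μ m f ω ∂μ = ∫ ω, f ω ∂μ :=
  (integral_congr_ae (nonnegCondExp_ae_eq hf)).trans (integral_condExp hm)

end NonnegCondExp

section TruncatedSquare

variable {p a s : ℝ}

/-- The square of `y`, replaced by `0` when it exceeds `a`. -/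
noncomputable def truncatedSq (a y : ℝ) : ℝ := if y ^ 2 ≤ a then y ^ 2 else 0

lemma truncatedSq_of_sq_le {y : ℝ} (hy : y ^ 2 ≤ a) : truncatedSq a y = y ^ 2 := if_pos hy

lemma measurable_truncatedSq (a : ℝ) : Measurable (truncatedSq a) :=
  Measurable.ite (measurableSet_le (measurable_id.pow_const 2) measurable_const)
    (measurable_id.pow_const 2) measurable_const

lemma abs_mul_truncatedSq_div_le_one (ha : 0 < a) (hs : |s| = 1) (y : ℝ) :
    |s * truncatedSq a y / a| ≤ 1 := by
  rw [abs_div, abs_mul, hs, one_mul, abs_of_pos ha, div_le_one ha, truncatedSq]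
  split_ifs with hy
  · rwa [abs_of_nonneg (sq_nonneg y)]
  · rw [abs_zero]; exact ha.le

lemma sq_div_le_rpow_mul_abs_rpow (hp : 1 ≤ p) (ha : 0 < a) {y : ℝ} (hy : a ≤ |y|) :
    y ^ 2 / a ≤ a ^ (1 - 2 * p) * |y| ^ (2 * p) := by
  rw [show 1 - 2 * p = -(2 * p - 2) - 1 by ring, Real.rpow_sub_one ha.ne', div_mul_eq_mul_div,
    ← sq_abs]
  gcongr
  exact sq_le_rpow_mul_rpow hp ha hy

lemma sq_mul_sq_div_le (hp : 1 ≤ p) (ha : 0 < a) {y : ℝ} (hy : y ^ 2 ≤ a) :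
    y ^ 2 * (y ^ 2 / a ^ 2) ≤ y ^ 2 + a ^ (1 - 2 * p) * |y| ^ (2 * p) := by
  have htail : 0 ≤ a ^ (1 - 2 * p) * |y| ^ (2 * p) := by positivity
  rcases le_total |y| a with hya | hay
  · have hratio : y ^ 2 / a ^ 2 ≤ 1 :=
      (div_le_one (by positivity)).2 (sq_le_sq.2 (hya.trans (le_abs_self a)))
    linarith [mul_le_of_le_one_right (sq_nonneg y) hratio]
  · calc y ^ 2 * (y ^ 2 / a ^ 2) = y ^ 2 / a * (y ^ 2 / a) := by ring
      _ ≤ y ^ 2 / a * 1 := by gcongr; exact (div_le_one ha).2 hy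
      _ ≤ y ^ 2 + a ^ (1 - 2 * p) * |y| ^ (2 * p) := by
          linarith [sq_div_le_rpow_mul_abs_rpow hp ha hay, sq_nonneg y]

lemma exp_mul_truncatedSq_div_le (hp : 1 ≤ p) (ha : 0 < a) (ha1 : a ≤ 1) (hs : |s| = 1) (y : ℝ) :
    Real.exp (s * truncatedSq a y / a)
      ≤ 1 + s * y ^ 2 / a + y ^ 2 + 2 * a ^ (1 - 2 * p) * |y| ^ (2 * p) := by
  have htail : 0 ≤ a ^ (1 - 2 * p) * |y| ^ (2 * p) := by positivity
  rcases le_or_gt (y ^ 2) a with hy | hy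
  · have hexp := (abs_le.1 (Real.abs_exp_sub_one_sub_id_le
      (abs_mul_truncatedSq_div_le_one ha hs y))).2
    have hsq : (s * y ^ 2 / a) ^ 2 = y ^ 2 * (y ^ 2 / a ^ 2) := by
      rw [div_pow, mul_pow, ← sq_abs s, hs]; ring
    rw [truncatedSq_of_sq_le hy, hsq] at hexp
    rw [truncatedSq_of_sq_le hy]
    linarith [sq_mul_sq_div_le hp ha hy]
  · have hay : a ≤ |y| :=
      (abs_of_pos ha).symm.trans_le (sq_le_sq.1 ((by nlinarith : a ^ 2 ≤ a).trans hy.le))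
    have hlower : -(y ^ 2 / a) ≤ s * y ^ 2 / a := by
      rw [mul_div_assoc, neg_eq_neg_one_mul]
      gcongr
      linarith [neg_abs_le s]
    rw [truncatedSq, if_neg hy.not_ge, mul_zero, zero_div, Real.exp_zero]
    linarith [sq_div_le_rpow_mul_abs_rpow hp ha hay, sq_nonneg y]

end TruncatedSquare

section ExponentialSupermartingale

variable {Ω : Type*} {mΩ : MeasurableSpace Ω} {μ : Measure Ω} {ℱ : Filtration ℕ mΩ}
  {Y v : ℕ → Ω → ℝ} {γ p a s : ℝ} {n : ℕ}

/-- The conditional moments `E[|Y i|^(2p) | ℱ i]`. -/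
noncomputable def condMoment (μ : Measure Ω) (ℱ : Filtration ℕ mΩ) (p : ℝ) (Y : ℕ → Ω → ℝ)
    (i : ℕ) : Ω → ℝ :=
  nonnegCondExp μ (ℱ i) fun ω => |Y i ω| ^ (2 * p)

/-- The conditional expectation of the bound of `exp_mul_truncatedSq_div_le`, minus one. -/
noncomputable def expCompensator (μ : Measure Ω) (ℱ : Filtration ℕ mΩ) (p a s : ℝ)
    (Y v : ℕ → Ω → ℝ) (i : ℕ) (ω : Ω) : ℝ :=
  s * v i ω / a + v i ω + 2 * a ^ (1 - 2 * p) * condMoment μ ℱ p Y i ω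

/-- The supermartingale `exp (∑_{i<k} (s Uᵢ / a - Qᵢ))`, where `Uᵢ` is the truncation of `Yᵢ²` at
level `a` and `Qᵢ` its compensator. It controls the upper (`s = 1`) and lower (`s = -1`)
deviations of the squared variation from the conditional variance. -/
noncomputable def expSupermartingale (μ : Measure Ω) (ℱ : Filtration ℕ mΩ) (p a s : ℝ)
    (Y v : ℕ → Ω → ℝ) (k : ℕ) (ω : Ω) : ℝ :=
  Real.exp (∑ i ∈ range k, (s * truncatedSq a (Y i ω) / a - expCompensator μ ℱ p a s Y v i ω))

lemma expSupermartingale_pos (k : ℕ) (ω : Ω) : 0 < expSupermartingale μ ℱ p a s Y v k ω :=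
  Real.exp_pos _

lemma expSupermartingale_succ (k : ℕ) (ω : Ω) :
    expSupermartingale μ ℱ p a s Y v (k + 1) ω
      = expSupermartingale μ ℱ p a s Y v k ω * Real.exp (-expCompensator μ ℱ p a s Y v k ω)
        * Real.exp (s * truncatedSq a (Y k ω) / a) := by
  rw [expSupermartingale, sum_range_succ, expSupermartingale, ← Real.exp_add, ← Real.exp_add]
  congr 1
  ring

lemma condMoment_nonneg (i : ℕ) (ω : Ω) : 0 ≤ condMoment μ ℱ p Y i ω := nonnegCondExp_nonneg ω

lemma abs_rpow_nonneg (p : ℝ) (f : Ω → ℝ) : 0 ≤ fun ω => |f ω| ^ p :=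
  fun _ => Real.rpow_nonneg (abs_nonneg _) _

lemma integrable_condMoment (i : ℕ) : Integrable (condMoment μ ℱ p Y i) μ :=
  integrable_nonnegCondExp (abs_rpow_nonneg _ _)

lemma integral_condMoment [IsFiniteMeasure μ] (i : ℕ) :
    ∫ ω, condMoment μ ℱ p Y i ω ∂μ = ∫ ω, |Y i ω| ^ (2 * p) ∂μ :=
  integral_nonnegCondExp (ℱ.le i) (abs_rpow_nonneg _ _)

lemma integral_add_const_mul_add_const_mul {f g h : Ω → ℝ} (hf : Integrable f μ)
    (hg : Integrable g μ) (hh : Integrable h μ) (b c : ℝ) :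
    ∫ ω, (f ω + b * g ω + c * h ω) ∂μ = ∫ ω, f ω ∂μ + b * ∫ ω, g ω ∂μ + c * ∫ ω, h ω ∂μ := by
  have hfg : Integrable (fun ω => f ω + b * g ω) μ := hf.add (hg.const_mul b)
  rw [integral_add hfg (hh.const_mul c), integral_add hf (hg.const_mul b), integral_const_mul,
    integral_const_mul]

lemma integrable_exp_mul_truncatedSq_div [IsFiniteMeasure μ] (ha : 0 < a) (hs : |s| = 1)
    {f : Ω → ℝ} (hf : Measurable f) :
    Integrable (fun ω => Real.exp (s * truncatedSq a (f ω) / a)) μ :=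
  integrable_of_measurable_of_abs_le (B := Real.exp 1)
    (Real.measurable_exp.comp ((((measurable_truncatedSq a).comp hf).const_mul s).div_const a))
    fun ω => by
      rw [Real.abs_exp, Real.exp_le_exp]
      exact (abs_le.1 (abs_mul_truncatedSq_div_le_one ha hs (f ω))).2

namespace HasTruncatedVariance

lemma measurable_expCompensator (H : HasTruncatedVariance μ ℱ γ Y v) (i : ℕ) :
    Measurable[ℱ i] (expCompensator μ ℱ p a s Y v i) :=
  ((((H.measurable_var i).const_mul s).div_const a).add (H.measurable_var i)).add
    (measurable_nonnegCondExp.const_mul _)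

lemma neg_le_expCompensator (H : HasTruncatedVariance μ ℱ γ Y v) (ha : 0 < a) (hs : |s| = 1)
    (i : ℕ) (ω : Ω) : -(γ ^ 2 / a) ≤ expCompensator μ ℱ p a s Y v i ω := by
  have hvar : v i ω / a ≤ γ ^ 2 / a := by gcongr; exact H.var_le i ω
  have hlower : -(v i ω / a) ≤ s * v i ω / a := by
    rw [mul_div_assoc, neg_eq_neg_one_mul]
    exact mul_le_mul_of_nonneg_right (by linarith [neg_abs_le s])
      (div_nonneg (H.var_nonneg i ω) ha.le)
  have hmoment : 0 ≤ 2 * a ^ (1 - 2 * p) * condMoment μ ℱ p Y i ω :=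
    mul_nonneg (by positivity) (condMoment_nonneg i ω)
  rw [expCompensator]
  linarith [H.var_nonneg i ω]

lemma measurable_expSupermartingale (H : HasTruncatedVariance μ ℱ γ Y v) (k : ℕ) :
    Measurable[ℱ k] (expSupermartingale μ ℱ p a s Y v k) :=
  Real.measurable_exp.comp <| Finset.measurable_sum _ fun i hi =>
    (((((measurable_truncatedSq a).comp (H.measurable i)).const_mul s).div_const a).mono
      (ℱ.mono (mem_range.1 hi)) le_rfl).sub
    ((H.measurable_expCompensator i).mono (ℱ.mono (mem_range.1 hi).le) le_rfl)

lemma expSupermartingale_le (H : HasTruncatedVariance μ ℱ γ Y v) (ha : 0 < a) (hs : |s| = 1)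
    (k : ℕ) (ω : Ω) : expSupermartingale μ ℱ p a s Y v k ω ≤ Real.exp (k * (1 + γ ^ 2 / a)) := by
  refine Real.exp_le_exp.2 ((sum_le_card_nsmul _ _ (1 + γ ^ 2 / a) fun i _ => ?_).trans_eq
    (by rw [card_range, nsmul_eq_mul]))
  have := (abs_le.1 (abs_mul_truncatedSq_div_le_one ha hs (Y i ω))).2
  linarith [H.neg_le_expCompensator (μ := μ) (ℱ := ℱ) (p := p) ha hs i ω]

lemma abs_expSupermartingale_le (H : HasTruncatedVariance μ ℱ γ Y v) (ha : 0 < a)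
    (hs : |s| = 1) (k : ℕ) (ω : Ω) :
    |expSupermartingale μ ℱ p a s Y v k ω| ≤ Real.exp (k * (1 + γ ^ 2 / a)) :=
  (abs_of_pos (expSupermartingale_pos k ω)).trans_le (H.expSupermartingale_le ha hs k ω)

variable [IsFiniteMeasure μ]

lemma integrable_expSupermartingale (H : HasTruncatedVariance μ ℱ γ Y v) (ha : 0 < a)
    (hs : |s| = 1) (k : ℕ) : Integrable (expSupermartingale μ ℱ p a s Y v k) μ :=
  integrable_of_measurable_of_abs_le ((H.measurable_expSupermartingale k).mono (ℱ.le k) le_rfl)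
    (H.abs_expSupermartingale_le ha hs k)

lemma integral_mul_exp_truncatedSq_le (H : HasTruncatedVariance μ ℱ γ Y v) (hp : 1 ≤ p)
    (ha : 0 < a) (ha1 : a ≤ 1) (hs : |s| = 1) {i : ℕ}
    (hYp : Integrable (fun ω => |Y i ω| ^ (2 * p)) μ) {ξ : Ω → ℝ} {B : ℝ}
    (hξ : Measurable[ℱ i] ξ) (hξ0 : ∀ ω, 0 ≤ ξ ω) (hξB : ∀ ω, |ξ ω| ≤ B) :
    ∫ ω, ξ ω * Real.exp (s * truncatedSq a (Y i ω) / a) ∂μ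
      ≤ ∫ ω, ξ ω * (1 + expCompensator μ ℱ p a s Y v i ω) ∂μ := by
  have hξm := hξ.mono (ℱ.le i) le_rfl
  have hξi := integrable_of_measurable_of_abs_le (μ := μ) hξm hξB
  have hsq := integrable_mul_of_abs_le hξm hξB (H.integrable_sq i)
  have hvar := integrable_mul_of_abs_le hξm hξB (H.integrable_var i)
  have hmoment := integrable_mul_of_abs_le hξm hξB hYp
  have hcond := integrable_mul_of_abs_le hξm hξB
    (integrable_condMoment (μ := μ) (ℱ := ℱ) (p := p) (Y := Y) i)
  have hmoment_eq : ∫ ω, ξ ω * condMoment μ ℱ p Y i ω ∂μ = ∫ ω, ξ ω * |Y i ω| ^ (2 * p) ∂μ :=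
    integral_mul_nonnegCondExp (ℱ.le i) (abs_rpow_nonneg _ _) hYp hξ hξB
  calc ∫ ω, ξ ω * Real.exp (s * truncatedSq a (Y i ω) / a) ∂μ
      ≤ ∫ ω, (ξ ω + (s / a + 1) * (ξ ω * Y i ω ^ 2)
          + 2 * a ^ (1 - 2 * p) * (ξ ω * |Y i ω| ^ (2 * p))) ∂μ :=
        integral_mono
          (integrable_mul_of_abs_le hξm hξB (integrable_exp_mul_truncatedSq_div ha hs
            ((H.measurable i).mono (ℱ.le _) le_rfl)))
          ((hξi.add (hsq.const_mul _)).add (hmoment.const_mul _)) fun ω =>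
          (mul_le_mul_of_nonneg_left (exp_mul_truncatedSq_div_le hp ha ha1 hs (Y i ω))
            (hξ0 ω)).trans_eq (by ring)
    _ = ∫ ω, (ξ ω + (s / a + 1) * (ξ ω * v i ω)
          + 2 * a ^ (1 - 2 * p) * (ξ ω * condMoment μ ℱ p Y i ω)) ∂μ := by
        rw [integral_add_const_mul_add_const_mul hξi hsq hmoment,
          integral_add_const_mul_add_const_mul hξi hvar hcond, H.integral_mul_sq_eq i hξ hξB,
          hmoment_eq]
    _ = ∫ ω, ξ ω * (1 + expCompensator μ ℱ p a s Y v i ω) ∂μ :=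
        integral_congr_ae (.of_forall fun ω => by simp only [expCompensator]; ring)

lemma integral_expSupermartingale_succ_le (H : HasTruncatedVariance μ ℱ γ Y v) (hp : 1 ≤ p)
    (ha : 0 < a) (ha1 : a ≤ 1) (hs : |s| = 1) {k : ℕ}
    (hYp : Integrable (fun ω => |Y k ω| ^ (2 * p)) μ) :
    ∫ ω, expSupermartingale μ ℱ p a s Y v (k + 1) ω ∂μ
      ≤ ∫ ω, expSupermartingale μ ℱ p a s Y v k ω ∂μ := by
  set Q := expCompensator μ ℱ p a s Y v k
  set ξ : Ω → ℝ := fun ω => expSupermartingale μ ℱ p a s Y v k ω * Real.exp (-Q ω) with hξ_def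
  have hQ : Measurable[ℱ k] Q := H.measurable_expCompensator k
  have hξ : Measurable[ℱ k] ξ :=
    (H.measurable_expSupermartingale k).mul (Real.measurable_exp.comp hQ.neg)
  have hξ0 (ω) : 0 ≤ ξ ω := (mul_pos (expSupermartingale_pos k ω) (Real.exp_pos _)).le
  have hξB (ω) : |ξ ω| ≤ Real.exp (k * (1 + γ ^ 2 / a)) * Real.exp (γ ^ 2 / a) := by
    rw [abs_mul, Real.abs_exp]
    gcongr
    · exact H.abs_expSupermartingale_le ha hs k ω
    · linarith [H.neg_le_expCompensator (μ := μ) (ℱ := ℱ) (p := p) ha hs k ω]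
  simp only [expSupermartingale_succ]
  refine (H.integral_mul_exp_truncatedSq_le hp ha ha1 hs hYp hξ hξ0 hξB).trans ?_
  have hpoint (ω) : ξ ω * (1 + Q ω) ≤ expSupermartingale μ ℱ p a s Y v k ω :=
    calc ξ ω * (1 + Q ω) ≤ ξ ω * Real.exp (Q ω) :=
          mul_le_mul_of_nonneg_left (by linarith [Real.add_one_le_exp (Q ω)]) (hξ0 ω)
      _ = expSupermartingale μ ℱ p a s Y v k ω := by
          rw [hξ_def, mul_assoc, ← Real.exp_add, neg_add_cancel, Real.exp_zero, mul_one]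
  have hQi : Integrable Q μ := (((H.integrable_var k).const_mul s).div_const a).add
    (H.integrable_var k) |>.add ((integrable_condMoment k).const_mul _)
  exact integral_mono (integrable_mul_of_abs_le (hξ.mono (ℱ.le k) le_rfl) hξB
    ((integrable_const 1).add hQi)) (H.integrable_expSupermartingale ha hs k) hpoint

end HasTruncatedVariance

lemma HasTruncatedVariance.integral_expSupermartingale_le_one [IsProbabilityMeasure μ]
    (H : HasTruncatedVariance μ ℱ γ Y v) (hp : 1 ≤ p) (ha : 0 < a) (ha1 : a ≤ 1) (hs : |s| = 1)
    (hYp : ∀ k < n, Integrable (fun ω => |Y k ω| ^ (2 * p)) μ) :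
    ∫ ω, expSupermartingale μ ℱ p a s Y v n ω ∂μ ≤ 1 := by
  induction n with
  | zero => simp [expSupermartingale]
  | succ n ih =>
    exact (H.integral_expSupermartingale_succ_le hp ha ha1 hs (hYp n n.lt_succ_self)).trans
      (ih fun k hk => hYp k (hk.trans n.lt_succ_self))

end ExponentialSupermartingale

section SquaredVariation

variable {Ω : Type*} {mΩ : MeasurableSpace Ω} {μ : Measure Ω} {ℱ : Filtration ℕ mΩ}
  {Y v : ℕ → Ω → ℝ} {γ p a s : ℝ} {n : ℕ}

lemma measureReal_ge_le_of_integral_le {f : Ω → ℝ} (hf0 : 0 ≤ f) (hf : Integrable f μ) {e δ : ℝ}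
    (he : 0 < e) (hint : ∫ ω, f ω ∂μ ≤ e * δ) : μ.real {ω | e ≤ f ω} ≤ δ :=
  le_of_mul_le_mul_left
    ((mul_meas_ge_le_integral_of_nonneg (.of_forall hf0) hf e).trans hint) he

lemma one_le_exp_rpow_neg_inv_mul {b : ℝ} (hb : 0 < b) (hγ : 0 < γ) (hγ1 : γ ≤ 1) :
    1 ≤ Real.exp (γ ^ (-b⁻¹)) * (⌈b⌉₊.factorial * γ) := by
  have hfac : (0 : ℝ) < ⌈b⌉₊.factorial := by positivity
  have hexp := Real.pow_div_factorial_le_exp (γ ^ (-b⁻¹)) (by positivity) ⌈b⌉₊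
  rw [div_le_iff₀ hfac] at hexp
  have hexponent : -b⁻¹ * ⌈b⌉₊ + 1 ≤ 0 := by
    have := mul_le_mul_of_nonneg_left (Nat.le_ceil b) (inv_pos.2 hb).le
    rw [inv_mul_cancel₀ hb.ne'] at this
    linarith
  calc 1 ≤ γ ^ (-b⁻¹ * ⌈b⌉₊ + 1) :=
        Real.one_le_rpow_of_pos_of_le_one_of_nonpos hγ hγ1 hexponent
    _ = (γ ^ (-b⁻¹)) ^ ⌈b⌉₊ * γ := by
        rw [Real.rpow_add_one hγ.ne', Real.rpow_mul hγ.le, Real.rpow_natCast]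
    _ ≤ Real.exp (γ ^ (-b⁻¹)) * ⌈b⌉₊.factorial * γ := by gcongr
    _ = _ := mul_assoc _ _ _

lemma exp_sub_four_le_expSupermartingale {b : ℝ} {ω : Ω} (hY : ∀ i < n, Y i ω ^ 2 ≤ a)
    (hv : partialSum v n ω ≤ 2)
    (hmoment : a ^ (1 - 2 * p) * ∑ i ∈ range n, condMoment μ ℱ p Y i ω ≤ 1)
    (hb : b ≤ s * (∑ i ∈ range n, Y i ω ^ 2 - partialSum v n ω) / a) :
    Real.exp (b - 4) ≤ expSupermartingale μ ℱ p a s Y v n ω := by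
  have hsum : ∑ i ∈ range n, (s * truncatedSq a (Y i ω) / a - expCompensator μ ℱ p a s Y v i ω)
      = s * (∑ i ∈ range n, Y i ω ^ 2 - partialSum v n ω) / a - partialSum v n ω
        - 2 * (a ^ (1 - 2 * p) * ∑ i ∈ range n, condMoment μ ℱ p Y i ω) := by
    rw [sum_congr rfl fun i hi => by rw [truncatedSq_of_sq_le (hY i (mem_range.1 hi))]]
    simp only [expCompensator, partialSum, sum_sub_distrib, sum_add_distrib, ← mul_sum, ← sum_div]
    ring
  rw [expSupermartingale, hsum, Real.exp_le_exp]
  linarith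

lemma sq_le_of_sum_abs_rpow_lt {y : ℕ → ℝ} (hp : 0 < p) (ha : 0 ≤ a)
    (h : ∑ i ∈ range n, |y i| ^ (2 * p) < a ^ p) {i : ℕ} (hi : i < n) : y i ^ 2 ≤ a := by
  have hterm := (single_le_sum (f := fun i => |y i| ^ (2 * p)) (fun _ _ => by positivity)
    (mem_range.2 hi)).trans_lt h
  rw [abs_rpow_two_mul] at hterm
  exact ((Real.rpow_lt_rpow_iff (sq_nonneg _) ha hp).1 hterm).le

lemma rpow_two_mul_le_rpow_one_add_inv_rpow (hp : 1 ≤ p) (hγ : 0 < γ) (hγ1 : γ ≤ 1) :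
    γ ^ (2 * p) ≤ (γ ^ (1 + (2 * p)⁻¹)) ^ p := by
  rw [← Real.rpow_mul hγ.le]
  refine Real.rpow_le_rpow_of_exponent_ge hγ hγ1 ?_
  have : (1 + (2 * p)⁻¹) * p = p + 1 / 2 := by field_simp
  linarith

lemma rpow_one_add_inv_rpow_mul_rpow_le_one (hp : 0 < p) (hγ : 0 < γ) (hγ1 : γ ≤ 1) :
    (γ ^ (1 + (2 * p)⁻¹)) ^ (1 - 2 * p) * γ ^ (2 * p) ≤ 1 := by
  rw [← Real.rpow_mul hγ.le, ← Real.rpow_add hγ]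
  have : (1 + (2 * p)⁻¹) * (1 - 2 * p) + 2 * p = (2 * p)⁻¹ := by field_simp; ring
  rw [this]
  exact Real.rpow_le_one hγ.le hγ1 (by positivity)

namespace HasTruncatedVariance

lemma deviation_subset (H : HasTruncatedVariance μ ℱ γ Y v) (hp : 0 < p) (hγ : 0 < γ)
    (hγ1 : γ ≤ 1) (ha : a = γ ^ (1 + (2 * p)⁻¹)) :
    {ω | γ < s * (∑ i ∈ range n, Y i ω ^ 2 - partialSum v n ω)} ⊆
      {ω | Real.exp (γ ^ (-(2 * p)⁻¹) - 4) ≤ expSupermartingale μ ℱ p a s Y v n ω} ∪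
        ({ω | γ ^ (2 * p) ≤ ∑ i ∈ range n, condMoment μ ℱ p Y i ω} ∪
          {ω | a ^ p ≤ ∑ i ∈ range n, |Y i ω| ^ (2 * p)}) := by
  have ha0 : 0 < a := ha ▸ Real.rpow_pos_of_pos hγ _
  intro ω hω
  by_contra hc
  simp only [Set.mem_union, Set.mem_ofPred_eq, not_or, not_le] at hc hω
  obtain ⟨hexp, hmoment, hY⟩ := hc
  refine hexp.not_ge (exp_sub_four_le_expSupermartingale
    (fun i hi => sq_le_of_sum_abs_rpow_lt hp ha0.le hY hi) ?_ ?_ ?_)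
  · linarith [H.partialSum_var_le n ω, pow_le_one₀ (n := 2) hγ.le hγ1]
  · exact (mul_le_mul_of_nonneg_left hmoment.le (by positivity)).trans
      (ha ▸ rpow_one_add_inv_rpow_mul_rpow_le_one hp hγ hγ1)
  · rw [le_div_iff₀ ha0, ha, ← Real.rpow_add hγ, neg_add_cancel_comm_assoc, Real.rpow_one]
    exact hω.le

variable [IsProbabilityMeasure μ]

lemma measureReal_one_sided_deviation_le (H : HasTruncatedVariance μ ℱ γ Y v) (hp : 1 ≤ p)
    (hγ : 0 < γ) (hγ1 : γ ≤ 1) (hYp : ∀ k < n, Integrable (fun ω => |Y k ω| ^ (2 * p)) μ)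
    (hN : ∑ k ∈ range n, ∫ ω, |Y k ω| ^ (2 * p) ∂μ ≤ γ ^ (2 * p + 1)) (hs : |s| = 1) :
    μ.real {ω | γ < s * (∑ i ∈ range n, Y i ω ^ 2 - partialSum v n ω)}
      ≤ (Real.exp 4 * ⌈2 * p⌉₊.factorial + 2) * γ := by
  have hp0 : 0 < p := zero_lt_one.trans_le hp
  obtain ⟨a, ha⟩ : ∃ a, a = γ ^ (1 + (2 * p)⁻¹) := ⟨_, rfl⟩
  have ha0 : 0 < a := ha ▸ Real.rpow_pos_of_pos hγ _
  have ha1 : a ≤ 1 := ha ▸ Real.rpow_le_one hγ.le hγ1 (by positivity)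
  rw [Real.rpow_add_one hγ.ne'] at hN
  have hexp : μ.real {ω | Real.exp (γ ^ (-(2 * p)⁻¹) - 4) ≤ expSupermartingale μ ℱ p a s Y v n ω}
      ≤ Real.exp 4 * (⌈2 * p⌉₊.factorial * γ) := by
    refine measureReal_ge_le_of_integral_le (fun ω => (expSupermartingale_pos n ω).le)
      (H.integrable_expSupermartingale ha0 hs n) (Real.exp_pos _)
      ((H.integral_expSupermartingale_le_one hp ha0 ha1 hs hYp).trans ?_)
    rw [← mul_assoc, ← Real.exp_add, sub_add_cancel]
    exact one_le_exp_rpow_neg_inv_mul (by positivity) hγ hγ1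
  have hcond : μ.real {ω | γ ^ (2 * p) ≤ ∑ i ∈ range n, condMoment μ ℱ p Y i ω} ≤ γ := by
    refine measureReal_ge_le_of_integral_le (fun ω => sum_nonneg fun i _ => condMoment_nonneg i ω)
      (integrable_finsetSum _ fun i _ => integrable_condMoment i) (by positivity) ?_
    simp only [integral_finsetSum _ fun i _ => integrable_condMoment i, integral_condMoment]
    exact hN
  have hint (i) (hi : i ∈ range n) := hYp i (mem_range.1 hi)
  have hmoment : μ.real {ω | a ^ p ≤ ∑ i ∈ range n, |Y i ω| ^ (2 * p)} ≤ γ := by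
    refine measureReal_ge_le_of_integral_le (fun ω => sum_nonneg fun i _ => by positivity)
      (integrable_finsetSum _ hint) (by positivity) ?_
    rw [integral_finsetSum _ hint]
    exact hN.trans (by gcongr; exact ha ▸ rpow_two_mul_le_rpow_one_add_inv_rpow hp hγ hγ1)
  linarith [(measureReal_mono (μ := μ) (H.deviation_subset (s := s) (n := n) hp0 hγ hγ1 ha)).trans
    ((measureReal_union_le _ _).trans (add_le_add_right (measureReal_union_le _ _) _))]

lemma measureReal_lt_abs_sum_sq_sub_le (H : HasTruncatedVariance μ ℱ γ Y v) (hp : 1 ≤ p)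
    (hγ : 0 < γ) (hγ1 : γ ≤ 1) (hYp : ∀ k < n, Integrable (fun ω => |Y k ω| ^ (2 * p)) μ)
    (hN : ∑ k ∈ range n, ∫ ω, |Y k ω| ^ (2 * p) ∂μ ≤ γ ^ (2 * p + 1)) :
    μ.real {ω | γ < |∑ i ∈ range n, Y i ω ^ 2 - partialSum v n ω|}
      ≤ 2 * (Real.exp 4 * ⌈2 * p⌉₊.factorial + 2) * γ := by
  have hupper := H.measureReal_one_sided_deviation_le hp hγ hγ1 hYp hN (s := 1) abs_one
  have hlower := H.measureReal_one_sided_deviation_le hp hγ hγ1 hYp hN (s := -1) (by simp)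
  simp only [one_mul, neg_one_mul] at hupper hlower
  simp only [lt_abs, Set.ofPred_or]
  linarith [measureReal_union_le (μ := μ)
    {ω | γ < ∑ i ∈ range n, Y i ω ^ 2 - partialSum v n ω}
    {ω | γ < -(∑ i ∈ range n, Y i ω ^ 2 - partialSum v n ω)}]

end HasTruncatedVariance

end SquaredVariation

section Truncation

variable {Ω : Type*} {mΩ : MeasurableSpace Ω} {μ : Measure Ω} {ℱ : Filtration ℕ mΩ}
  {X : ℕ → Ω → ℝ} {γ p : ℝ} {n : ℕ}

/-- The conditional variances `E[(X i)² | ℱ i]` of a martingale with differences `X`. -/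
noncomputable def conditionalVariance (μ : Measure Ω) (ℱ : Filtration ℕ mΩ) (X : ℕ → Ω → ℝ)
    (i : ℕ) : Ω → ℝ :=
  nonnegCondExp μ (ℱ i) fun ω => X i ω ^ 2

/-- The event that the differences up to `X i` satisfy the bounds of `HasTruncatedVariance`. It is
known at time `i`, so restricting `X i` to it preserves the martingale property. -/
def truncationEvent (μ : Measure Ω) (ℱ : Filtration ℕ mΩ) (X : ℕ → Ω → ℝ) (γ : ℝ) (i : ℕ) :
    Set Ω :=
  {ω | partialSum (conditionalVariance μ ℱ X) (i + 1) ω ≤ 1 + γ ^ 2} ∩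
    {ω | conditionalVariance μ ℱ X i ω ≤ γ ^ 2}

/-- The martingale differences `X`, set to `0` off the truncation events. -/
noncomputable def truncatedDifference (μ : Measure Ω) (ℱ : Filtration ℕ mΩ) (X : ℕ → Ω → ℝ)
    (γ : ℝ) (i : ℕ) : Ω → ℝ :=
  (truncationEvent μ ℱ X γ i).indicator (X i)

/-- The conditional variances of `truncatedDifference`. -/
noncomputable def truncatedVariance (μ : Measure Ω) (ℱ : Filtration ℕ mΩ) (X : ℕ → Ω → ℝ)
    (γ : ℝ) (i : ℕ) : Ω → ℝ :=
  (truncationEvent μ ℱ X γ i).indicator (conditionalVariance μ ℱ X i)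

/-- The quantity `N` of the theorem, with differences indexed from `0`; it controls the distance
from normality. -/
noncomputable def normalityDefect (μ : Measure Ω) (ℱ : Filtration ℕ mΩ) (X : ℕ → Ω → ℝ) (p : ℝ)
    (n : ℕ) : ℝ :=
  ∑ i ∈ range n, ∫ ω, |X i ω| ^ (2 * p) ∂μ
    + ∫ ω, |partialSum (conditionalVariance μ ℱ X) n ω - 1| ^ p ∂μ

/-- The event that the conditional variances have a large total `p`-th power, or that their sum is
far from `1`. Truncation at level `γ` alters nothing off this event. -/
def irregularVarianceEvent (μ : Measure Ω) (ℱ : Filtration ℕ mΩ) (X : ℕ → Ω → ℝ) (γ p : ℝ)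
    (n : ℕ) : Set Ω :=
  {ω | γ ^ (2 * p) ≤ ∑ i ∈ range n, |conditionalVariance μ ℱ X i ω| ^ p
    + |partialSum (conditionalVariance μ ℱ X) n ω - 1| ^ p}

lemma conditionalVariance_nonneg (i : ℕ) (ω : Ω) : 0 ≤ conditionalVariance μ ℱ X i ω :=
  nonnegCondExp_nonneg ω

lemma measurable_conditionalVariance (i : ℕ) : Measurable[ℱ i] (conditionalVariance μ ℱ X i) :=
  measurable_nonnegCondExp

lemma conditionalVariance_ae_eq (i : ℕ) :
    conditionalVariance μ ℱ X i =ᵐ[μ] μ[fun ω => X i ω ^ 2 | ℱ i] :=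
  nonnegCondExp_ae_eq fun _ => sq_nonneg _

lemma measurableSet_truncationEvent (i : ℕ) : MeasurableSet[ℱ i] (truncationEvent μ ℱ X γ i) :=
  (measurableSet_le (measurable_partialSum fun j hj =>
    (measurable_conditionalVariance j).mono (ℱ.mono (Nat.le_of_lt_succ hj)) le_rfl)
      measurable_const).inter (measurableSet_le (measurable_conditionalVariance i) measurable_const)

lemma partialSum_truncatedVariance_le (k : ℕ) (ω : Ω) :
    partialSum (truncatedVariance μ ℱ X γ) k ω ≤ 1 + γ ^ 2 := by
  induction k with
  | zero => exact (sum_range_zero _).trans_le (by positivity)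
  | succ k ih =>
    by_cases hω : ω ∈ truncationEvent μ ℱ X γ k
    · refine le_trans (sum_le_sum fun i _ => ?_) hω.1
      exact Set.indicator_le_self' (fun ω _ => conditionalVariance_nonneg i ω) ω
    · rwa [partialSum_succ, truncatedVariance, Set.indicator_of_notMem hω, add_zero]

lemma indicator_sq (A : Set Ω) (f : Ω → ℝ) (ω : Ω) :
    A.indicator f ω ^ 2 = A.indicator (fun ω => f ω ^ 2) ω :=
  (Set.indicator_comp_of_zero (g := fun y : ℝ => y ^ 2) (zero_pow two_ne_zero)).symm ▸ rfl

namespace IsMartingaleDifference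

lemma hasTruncatedVariance_truncatedDifference [IsFiniteMeasure μ]
    (H : IsMartingaleDifference μ ℱ X) (γ : ℝ) :
    HasTruncatedVariance μ ℱ γ (truncatedDifference μ ℱ X γ) (truncatedVariance μ ℱ X γ) where
  measurable i := (H.measurable i).indicator (ℱ.mono i.le_succ _ (measurableSet_truncationEvent i))
  memLp_two i := (H.memLp_two i).indicator (ℱ.le i _ (measurableSet_truncationEvent i))
  condExp_eq_zero i :=
    ((condExp_indicator ((H.memLp_two i).integrable one_le_two)
      (measurableSet_truncationEvent i)).trans (H.condExp_eq_zero i).indicator).trans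
        (.of_eq (Set.indicator_zero' _))
  measurable_var i := (measurable_conditionalVariance i).indicator (measurableSet_truncationEvent i)
  condExp_sq i := by
    simp only [truncatedDifference, indicator_sq]
    exact (condExp_indicator (H.memLp_two i).integrable_sq
      (measurableSet_truncationEvent i)).trans (conditionalVariance_ae_eq i).symm.indicator
  var_nonneg i := Set.indicator_nonneg fun ω _ => conditionalVariance_nonneg i ω
  var_le i ω := Set.indicator_apply_le' (fun hω => hω.2) fun _ => sq_nonneg γ
  partialSum_var_le := partialSum_truncatedVariance_le

end IsMartingaleDifference

lemma abs_truncatedDifference_rpow (hp : 0 < p) (i : ℕ) :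
    (fun ω => |truncatedDifference μ ℱ X γ i ω| ^ (2 * p))
      = (truncationEvent μ ℱ X γ i).indicator fun ω => |X i ω| ^ (2 * p) :=
  (Set.indicator_comp_of_zero (g := fun y : ℝ => |y| ^ (2 * p)) (by
    rw [abs_zero, Real.zero_rpow (by positivity)])).symm

lemma integrable_abs_truncatedDifference_rpow (hp : 0 < p) {i : ℕ}
    (hX : Integrable (fun ω => |X i ω| ^ (2 * p)) μ) :
    Integrable (fun ω => |truncatedDifference μ ℱ X γ i ω| ^ (2 * p)) μ := by
  rw [abs_truncatedDifference_rpow hp]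
  exact hX.indicator (ℱ.le i _ (measurableSet_truncationEvent i))

lemma integral_abs_truncatedDifference_rpow_le (hp : 0 < p) {i : ℕ}
    (hX : Integrable (fun ω => |X i ω| ^ (2 * p)) μ) :
    ∫ ω, |truncatedDifference μ ℱ X γ i ω| ^ (2 * p) ∂μ ≤ ∫ ω, |X i ω| ^ (2 * p) ∂μ := by
  refine integral_mono (integrable_abs_truncatedDifference_rpow hp hX) hX ?_
  rw [abs_truncatedDifference_rpow hp]
  exact Set.indicator_le_self' fun ω _ => by positivity

lemma mem_truncationEvent_of_notMem_irregularVarianceEvent (hp : 0 < p) (hγ : 0 ≤ γ) {ω : Ω}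
    (hω : ω ∉ irregularVarianceEvent μ ℱ X γ p n) :
    (∀ i < n, ω ∈ truncationEvent μ ℱ X γ i) ∧
      |partialSum (conditionalVariance μ ℱ X) n ω - 1| ≤ γ ^ 2 := by
  have h : _ < γ ^ (2 * p) := not_le.1 hω
  have abs_le_of_rpow_lt {u : ℝ} (hu : |u| ^ p < γ ^ (2 * p)) : |u| ≤ γ ^ 2 := by
    rw [Real.rpow_mul hγ, Real.rpow_two] at hu
    exact ((Real.rpow_lt_rpow_iff (abs_nonneg u) (sq_nonneg γ) hp).1 hu).le
  have hsum0 : 0 ≤ ∑ i ∈ range n, |conditionalVariance μ ℱ X i ω| ^ p :=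
    sum_nonneg fun i _ => by positivity
  have htotal := abs_le_of_rpow_lt (lt_of_le_of_lt (le_add_of_nonneg_left hsum0) h)
  refine ⟨fun i hi => ⟨?_, (le_abs_self _).trans (abs_le_of_rpow_lt (lt_of_le_of_lt ?_ h))⟩, htotal⟩
  · have hmono : partialSum (conditionalVariance μ ℱ X) (i + 1) ω
        ≤ partialSum (conditionalVariance μ ℱ X) n ω :=
      sum_le_sum_of_subset_of_nonneg (range_mono hi) fun j _ _ => conditionalVariance_nonneg j ω
    exact hmono.trans (by linarith [(abs_le.1 htotal).2])
  · have hterm := single_le_sum (f := fun i => |conditionalVariance μ ℱ X i ω| ^ p)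
      (fun i _ => by positivity) (mem_range.2 hi)
    exact hterm.trans (le_add_of_nonneg_right (by positivity))

lemma memLp_conditionalVariance (H : IsMartingaleDifference μ ℱ X) (hp : 1 ≤ p) {i : ℕ}
    (hX : Integrable (fun ω => |X i ω| ^ (2 * p)) μ) :
    MemLp (conditionalVariance μ ℱ X i) (ENNReal.ofReal p) μ := by
  have hp0 : 0 < p := zero_lt_one.trans_le hp
  have hsq : MemLp (fun ω => X i ω ^ 2) (ENNReal.ofReal p) μ := by
    rw [← integrable_norm_rpow_iff (H.memLp_two i).integrable_sq.aestronglyMeasurable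
      (ENNReal.ofReal_pos.2 hp0).ne' ENNReal.ofReal_ne_top, ENNReal.toReal_ofReal hp0.le]
    simpa only [Real.norm_of_nonneg (sq_nonneg _), ← abs_rpow_two_mul] using hX
  exact (hsq.condExp (ENNReal.one_le_ofReal.2 hp)).ae_eq (conditionalVariance_ae_eq i).symm

lemma integral_abs_conditionalVariance_rpow_le (hp : 1 ≤ p) {i : ℕ}
    (hX : Integrable (fun ω => |X i ω| ^ (2 * p)) μ) :
    ∫ ω, |conditionalVariance μ ℱ X i ω| ^ p ∂μ ≤ ∫ ω, |X i ω| ^ (2 * p) ∂μ := by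
  have hsq : (fun ω => |X i ω| ^ (2 * p)) = fun ω => ‖X i ω ^ 2‖ ^ p := by
    ext ω; rw [Real.norm_of_nonneg (sq_nonneg _), abs_rpow_two_mul]
  rw [hsq] at hX ⊢
  refine le_trans (integral_congr_ae ?_).le (integral_norm_condExp_rpow_le (m := ℱ i) hp hX)
  filter_upwards [conditionalVariance_ae_eq (μ := μ) (ℱ := ℱ) (X := X) i] with ω hω
  rw [hω, Real.norm_eq_abs]

lemma integrable_abs_rpow [IsFiniteMeasure μ] {f : Ω → ℝ} (hp : 0 ≤ p)
    (hf : MemLp f (ENNReal.ofReal p) μ) : Integrable (fun ω => |f ω| ^ p) μ := by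
  simpa only [ENNReal.toReal_ofReal hp, Real.norm_eq_abs] using hf.integrable_norm_rpow'

lemma measureReal_irregularVarianceEvent_le [IsFiniteMeasure μ]
    (H : IsMartingaleDifference μ ℱ X) (hp : 1 ≤ p) (hγ : 0 < γ)
    (hX : ∀ i < n, Integrable (fun ω => |X i ω| ^ (2 * p)) μ)
    (hN : normalityDefect μ ℱ X p n ≤ γ ^ (2 * p + 1)) :
    μ.real (irregularVarianceEvent μ ℱ X γ p n) ≤ γ := by
  have hp0 : 0 ≤ p := zero_le_one.trans hp
  have hLp (i) (hi : i ∈ range n) := memLp_conditionalVariance H hp (hX i (mem_range.1 hi))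
  have hint (i) (hi : i ∈ range n) := integrable_abs_rpow hp0 (hLp i hi)
  have hsum : Integrable (fun ω => ∑ i ∈ range n, |conditionalVariance μ ℱ X i ω| ^ p) μ :=
    integrable_finsetSum _ hint
  have htotal : Integrable (fun ω => |partialSum (conditionalVariance μ ℱ X) n ω - 1| ^ p) μ :=
    integrable_abs_rpow hp0 ((memLp_finsetSum _ hLp).sub (memLp_const 1))
  refine measureReal_ge_le_of_integral_le (fun ω => ?_) (hsum.add htotal)
    (Real.rpow_pos_of_pos hγ _) ?_
  · exact add_nonneg (sum_nonneg fun i _ => by positivity) (by positivity)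
  · rw [integral_add' hsum htotal, integral_finsetSum _ hint, ← Real.rpow_add_one hγ.ne']
    refine le_trans (add_le_add_left (sum_le_sum fun i hi => ?_) _) hN
    exact integral_abs_conditionalVariance_rpow_le hp (hX i (mem_range.1 hi))

end Truncation

section RandomNormalization

variable {Ω : Type*} {mΩ : MeasurableSpace Ω} {μ : Measure Ω} [IsFiniteMeasure μ]
  {S T U W : Ω → ℝ} {B : Set Ω}

lemma abs_measureReal_le_sub_le_of_mem_Icc {l u c ε : ℝ}
    (hB : ∀ ω ∉ B, S ω = T ω ∧ U ω ∈ Set.Icc l u) (hl : |μ.real {ω | T ω ≤ l} - c| ≤ ε)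
    (hu : |μ.real {ω | T ω ≤ u} - c| ≤ ε) :
    |μ.real {ω | S ω ≤ U ω} - c| ≤ ε + μ.real B := by
  have hupper : {ω | S ω ≤ U ω} ⊆ {ω | T ω ≤ u} ∪ B := fun ω hω => by
    by_cases hωB : ω ∈ B
    · exact .inr hωB
    · exact .inl ((hB ω hωB).1.symm.trans_le (le_trans hω (hB ω hωB).2.2))
  have hlower : {ω | T ω ≤ l} ⊆ {ω | S ω ≤ U ω} ∪ B := fun ω hω => by
    by_cases hωB : ω ∈ B
    · exact .inr hωB
    · exact .inl ((hB ω hωB).1.trans_le (le_trans hω (hB ω hωB).2.1))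
  have hupper' := (measureReal_mono (μ := μ) hupper).trans (measureReal_union_le _ _)
  have hlower' := (measureReal_mono (μ := μ) hlower).trans (measureReal_union_le _ _)
  exact abs_le.2 ⟨by linarith [(abs_le.1 hl).1], by linarith [(abs_le.1 hu).2]⟩

lemma mul_sqrt_mem_uIcc (x : ℝ) {w η : ℝ} (hw : |w - 1| ≤ η) :
    x * √w ∈ Set.uIcc (x * √(1 - η)) (x * √(1 + η)) := by
  have hlower : √(1 - η) ≤ √w := Real.sqrt_le_sqrt (by linarith [(abs_le.1 hw).1])
  have hupper : √w ≤ √(1 + η) := Real.sqrt_le_sqrt (by linarith [(abs_le.1 hw).2])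
  rcases le_total 0 x with hx | hx
  · exact Set.mem_uIcc.2 (.inl ⟨by gcongr, by gcongr⟩)
  · exact Set.mem_uIcc.2 (.inr
      ⟨mul_le_mul_of_nonpos_left hupper hx, mul_le_mul_of_nonpos_left hlower hx⟩)

lemma abs_measureReal_le_mul_sqrt_sub_le {δ η : ℝ} (hη0 : 0 ≤ η) (hη : η ≤ 1 / 2)
    (hB : ∀ ω ∉ B, S ω = T ω ∧ |W ω - 1| ≤ η) (hT : ∀ y, |μ.real {ω | T ω ≤ y} - Φ y| ≤ δ)
    (x : ℝ) : |μ.real {ω | S ω ≤ x * √(W ω)} - Φ x| ≤ δ + 2 * η + μ.real B := by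
  have hendpoint (w : ℝ) (hw : |w - 1| ≤ η) : |μ.real {ω | T ω ≤ x * √w} - Φ x| ≤ δ + 2 * η :=
    (abs_sub_le _ (Φ (x * √w)) _).trans
      (add_le_add (hT _) (abs_stdNormalCDF_mul_sqrt_sub_le x hw hη))
  have hleft := hendpoint (1 - η) (by rw [sub_sub_cancel_left, abs_neg, abs_of_nonneg hη0])
  have hright := hendpoint (1 + η) (by rw [add_sub_cancel_left, abs_of_nonneg hη0])
  refine abs_measureReal_le_sub_le_of_mem_Icc (T := T) (l := min (x * √(1 - η)) (x * √(1 + η)))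
    (u := max (x * √(1 - η)) (x * √(1 + η)))
    (fun ω hω => ⟨(hB ω hω).1, mul_sqrt_mem_uIcc x (hB ω hω).2⟩) ?_ ?_
  · rcases min_choice (x * √(1 - η)) (x * √(1 + η)) with h | h <;> rw [h] <;> assumption
  · rcases max_choice (x * √(1 - η)) (x * √(1 + η)) with h | h <;> rw [h] <;> assumption

end RandomNormalization

lemma le_mul_rpow_one_div_of_forall {a C N r : ℝ} (hC : 0 < C) (hN : 0 ≤ N) (hr : 0 < r)
    (h : ∀ γ, 0 < γ → N ≤ γ ^ r → a ≤ C * γ) : a ≤ C * N ^ (1 / r) := by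
  rw [← div_le_iff₀' hC]
  refine le_of_forall_gt_imp_ge_of_dense fun γ hγ => ?_
  have hγ0 : 0 < γ := lt_of_le_of_lt (by positivity) hγ
  rw [one_div, Real.rpow_inv_lt_iff_of_pos hN hγ0.le hr] at hγ
  exact (div_le_iff₀' hC).2 (h γ hγ0 hγ.le)

lemma abs_interpolation_sub_one_le {t₁ t₂ V Q γ : ℝ} (ht₁ : 0 ≤ t₁) (ht₂ : 0 ≤ t₂)
    (ht : t₁ + t₂ ≤ 1) (hγ : 0 ≤ γ) (hγ1 : γ ≤ 1) (hV : |V - 1| ≤ γ ^ 2) (hQ : |Q - V| ≤ γ) :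
    |t₁ * V + t₂ * Q + (1 - t₁ - t₂) - 1| ≤ 2 * γ := by
  have hγsq : γ ^ 2 ≤ γ := by nlinarith
  calc |t₁ * V + t₂ * Q + (1 - t₁ - t₂) - 1| = |(t₁ + t₂) * (V - 1) + t₂ * (Q - V)| := by
        congr 1; ring
    _ ≤ |(t₁ + t₂) * (V - 1)| + |t₂ * (Q - V)| := abs_add_le _ _
    _ = (t₁ + t₂) * |V - 1| + t₂ * |Q - V| := by
        rw [abs_mul, abs_mul, abs_of_nonneg ht₂, abs_of_nonneg (add_nonneg ht₁ ht₂)]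
    _ ≤ 1 * γ + 1 * γ := by gcongr; exacts [hV.trans hγsq, by linarith]
    _ = 2 * γ := by ring

section MartingaleNormalization

variable {Ω : Type*} {mΩ : MeasurableSpace Ω} {μ : Measure Ω} {ℱ : Filtration ℕ mΩ}
  {X : ℕ → Ω → ℝ} {γ p : ℝ} {n : ℕ}

/-- The interpolation between the conditional variance, the squared variation and the constant `1`
by which the martingale is normalized. -/
noncomputable def mixedVariation (μ : Measure Ω) (ℱ : Filtration ℕ mΩ) (X : ℕ → Ω → ℝ)
    (t₁ t₂ : ℝ) (n : ℕ) (ω : Ω) : ℝ :=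
  t₁ * partialSum (conditionalVariance μ ℱ X) n ω + t₂ * ∑ i ∈ range n, X i ω ^ 2 + (1 - t₁ - t₂)

/-- The event that the squared variation of the truncated martingale differs from its conditional
variance by more than `γ`. -/
def squareDeviationEvent (μ : Measure Ω) (ℱ : Filtration ℕ mΩ) (X : ℕ → Ω → ℝ) (γ : ℝ) (n : ℕ) :
    Set Ω :=
  {ω | γ < |∑ i ∈ range n, truncatedDifference μ ℱ X γ i ω ^ 2
    - partialSum (truncatedVariance μ ℱ X γ) n ω|}

lemma normalityDefect_nonneg : 0 ≤ normalityDefect μ ℱ X p n :=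
  add_nonneg (sum_nonneg fun _ _ => integral_nonneg fun _ => by positivity)
    (integral_nonneg fun _ => by positivity)

lemma sum_integral_abs_truncatedDifference_rpow_le (hp : 0 < p)
    (hX : ∀ i < n, Integrable (fun ω => |X i ω| ^ (2 * p)) μ) :
    ∑ i ∈ range n, ∫ ω, |truncatedDifference μ ℱ X γ i ω| ^ (2 * p) ∂μ
      ≤ normalityDefect μ ℱ X p n :=
  (sum_le_sum fun i hi => integral_abs_truncatedDifference_rpow_le hp
    (hX i (mem_range.1 hi))).trans (le_add_of_nonneg_right (integral_nonneg fun _ => by positivity))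

lemma partialSum_truncatedVariance_eq {ω : Ω} (h : ∀ i < n, ω ∈ truncationEvent μ ℱ X γ i) :
    partialSum (truncatedVariance μ ℱ X γ) n ω = partialSum (conditionalVariance μ ℱ X) n ω :=
  sum_congr rfl fun i hi => Set.indicator_of_mem (h i (mem_range.1 hi)) _

lemma remainingVariance_truncatedVariance_subset (hp : 0 < p) (hγ : 0 ≤ γ) :
    {ω | 3 * γ ^ 2 < remainingVariance γ (truncatedVariance μ ℱ X γ) n ω}
      ⊆ irregularVarianceEvent μ ℱ X γ p n := fun ω hω => by
  by_contra hregular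
  obtain ⟨hmem, hclose⟩ := mem_truncationEvent_of_notMem_irregularVarianceEvent hp hγ hregular
  rw [Set.mem_ofPred_eq, remainingVariance, partialSum_truncatedVariance_eq hmem] at hω
  linarith [(abs_le.1 hclose).1]

lemma partialSum_eq_and_abs_mixedVariation_sub_one_le (hp : 0 < p) (hγ : 0 ≤ γ) (hγ1 : γ ≤ 1)
    {t₁ t₂ : ℝ} (ht₁ : 0 ≤ t₁) (ht₂ : 0 ≤ t₂) (ht : t₁ + t₂ ≤ 1) {ω : Ω}
    (hω : ω ∉ irregularVarianceEvent μ ℱ X γ p n ∪ squareDeviationEvent μ ℱ X γ n) :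
    partialSum X n ω = partialSum (truncatedDifference μ ℱ X γ) n ω ∧
      |mixedVariation μ ℱ X t₁ t₂ n ω - 1| ≤ 2 * γ := by
  obtain ⟨hregular, hsquares⟩ := not_or.1 hω
  obtain ⟨hmem, hclose⟩ := mem_truncationEvent_of_notMem_irregularVarianceEvent hp hγ hregular
  have hX (i) (hi : i ∈ range n) : X i ω = truncatedDifference μ ℱ X γ i ω :=
    (Set.indicator_of_mem (hmem i (mem_range.1 hi)) _).symm
  refine ⟨sum_congr rfl hX, abs_interpolation_sub_one_le ht₁ ht₂ ht hγ hγ1 hclose ?_⟩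
  rw [← partialSum_truncatedVariance_eq hmem, sum_congr rfl fun i hi => by rw [hX i hi]]
  exact not_lt.1 hsquares

theorem exists_forall_abs_measureReal_le_mul_sqrt_mixedVariation_sub_le (hp : 1 < p) :
    ∃ C : ℝ, 0 < C ∧ ∀ {Ω : Type*} {mΩ : MeasurableSpace Ω} {μ : Measure Ω}
      [IsProbabilityMeasure μ] {ℱ : Filtration ℕ mΩ} {X : ℕ → Ω → ℝ} {n : ℕ},
      IsMartingaleDifference μ ℱ X →
      (∀ i < n, Integrable (fun ω => |X i ω| ^ (2 * p)) μ) →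
      ∀ {t₁ t₂ : ℝ}, 0 ≤ t₁ → 0 ≤ t₂ → t₁ + t₂ ≤ 1 → ∀ x,
      |μ.real {ω | partialSum X n ω ≤ x * √(mixedVariation μ ℱ X t₁ t₂ n ω)} - Φ x|
        ≤ C * normalityDefect μ ℱ X p n ^ (1 / (2 * p + 1)) := by
  have hp0 : 0 < p := zero_lt_one.trans hp
  obtain ⟨C, hC, hclt⟩ := exists_forall_abs_measureReal_partialSum_sub_le hp
  set K := 2 * (Real.exp 4 * ⌈2 * p⌉₊.factorial + 2)
  have hK : 0 < K := by positivity
  refine ⟨C + K + 5, by positivity, fun {Ω mΩ μ _ ℱ X n} H hX {t₁ t₂} ht₁ ht₂ ht x =>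
    le_mul_rpow_one_div_of_forall (by positivity) normalityDefect_nonneg (by positivity)
      fun γ hγ hN => ?_⟩
  rcases le_total (1 / 4) γ with hlarge | hsmall
  · exact (abs_measureReal_sub_stdNormalCDF_le_one _ x).trans (by nlinarith)
  have hγ1 : γ ≤ 1 := by linarith
  have Htrunc := H.hasTruncatedVariance_truncatedDifference γ
  have hY (i) (hi : i < n) :=
    integrable_abs_truncatedDifference_rpow (ℱ := ℱ) (γ := γ) hp0 (hX i hi)
  have hYN := (sum_integral_abs_truncatedDifference_rpow_le (ℱ := ℱ) (γ := γ) hp0 hX).trans hN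
  have hirregular := measureReal_irregularVarianceEvent_le H hp.le hγ hX hN
  have hdeviation : μ.real (squareDeviationEvent μ ℱ X γ n) ≤ K * γ :=
    Htrunc.measureReal_lt_abs_sum_sq_sub_le hp.le hγ hγ1 hY hYN
  have hremaining := (measureReal_mono (μ := μ)
    (remainingVariance_truncatedVariance_subset (ℱ := ℱ) hp0 hγ.le)).trans hirregular
  have hB := measureReal_union_le (μ := μ)
    (irregularVarianceEvent μ ℱ X γ p n) (squareDeviationEvent μ ℱ X γ n)
  have hnormalized := abs_measureReal_le_mul_sqrt_sub_le (by positivity) (by linarith)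
    (fun ω => partialSum_eq_and_abs_mixedVariation_sub_one_le hp0 hγ.le hγ1 ht₁ ht₂ ht)
    (hclt Htrunc hγ hγ1 hY hYN hremaining) x
  linarith

end MartingaleNormalization

section Reindexing

variable {Ω : Type*} {mΩ : MeasurableSpace Ω} {μ : Measure Ω} {ℱ : Filtration ℕ mΩ}
  {X : ℕ → Ω → ℝ} {p : ℝ} {n : ℕ}

/-- The differences `X 1, …, X n` followed by zeros, shifted to be indexed from `0`. -/
def stoppedIncrement (X : ℕ → Ω → ℝ) (n i : ℕ) : Ω → ℝ := if i < n then X (i + 1) else 0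

lemma stoppedIncrement_of_lt {i : ℕ} (hi : i < n) : stoppedIncrement X n i = X (i + 1) := if_pos hi

lemma stoppedIncrement_of_le {i : ℕ} (hi : n ≤ i) : stoppedIncrement X n i = 0 :=
  if_neg hi.not_gt

lemma sum_Icc_one_eq_sum_range {M : Type*} [AddCommMonoid M] (f : ℕ → M) (n : ℕ) :
    ∑ i ∈ Icc 1 n, f i = ∑ i ∈ range n, f (i + 1) := by
  rw [range_eq_Ico, sum_Ico_add', zero_add, Ico_add_one_right_eq_Icc]

lemma succ_mem_Icc_one {i : ℕ} (hi : i < n) : i + 1 ∈ Icc 1 n :=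
  mem_Icc.2 ⟨i.succ_pos, hi⟩

lemma memLp_two_of_integrable_abs_rpow_two_mul [IsFiniteMeasure μ] {f : Ω → ℝ} (hp : 1 ≤ p)
    (hf : AEStronglyMeasurable f μ) (hfp : Integrable (fun ω => |f ω| ^ (2 * p)) μ) :
    MemLp f 2 μ := by
  have hp0 : 0 < 2 * p := by positivity
  have hLp : MemLp f (ENNReal.ofReal (2 * p)) μ := by
    rw [← integrable_norm_rpow_iff hf (ENNReal.ofReal_pos.2 hp0).ne' ENNReal.ofReal_ne_top,
      ENNReal.toReal_ofReal hp0.le]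
    exact hfp
  exact hLp.mono_exponent (by
    rw [← ENNReal.ofReal_ofNat]
    exact ENNReal.ofReal_le_ofReal (le_mul_of_one_le_right zero_le_two hp))

lemma isMartingaleDifference_stoppedIncrement [IsFiniteMeasure μ] (hp : 1 ≤ p)
    (hmeas : ∀ i ∈ Icc 1 n, StronglyMeasurable[ℱ i] (X i))
    (hcond : ∀ i ∈ Icc 1 n, μ[X i | ℱ (i - 1)] =ᵐ[μ] 0)
    (hX : ∀ i ∈ Icc 1 n, Integrable (fun ω => |X i ω| ^ (2 * p)) μ) :
    IsMartingaleDifference μ ℱ (stoppedIncrement X n) where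
  measurable i := by
    rcases lt_or_ge i n with hi | hi
    · exact stoppedIncrement_of_lt (X := X) hi ▸ (hmeas _ (succ_mem_Icc_one hi)).measurable
    · rw [stoppedIncrement_of_le hi]
      exact measurable_const
  memLp_two i := by
    rcases lt_or_ge i n with hi | hi
    · rw [stoppedIncrement_of_lt hi]
      have hXi : StronglyMeasurable (X (i + 1)) := (hmeas _ (succ_mem_Icc_one hi)).mono (ℱ.le _)
      exact memLp_two_of_integrable_abs_rpow_two_mul hp hXi.aestronglyMeasurable
        (hX _ (succ_mem_Icc_one hi))
    · exact stoppedIncrement_of_le (X := X) hi ▸ MemLp.zero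
  condExp_eq_zero i := by
    rcases lt_or_ge i n with hi | hi
    · exact stoppedIncrement_of_lt (X := X) hi ▸ hcond _ (succ_mem_Icc_one hi)
    · rw [stoppedIncrement_of_le hi, condExp_zero]

lemma sum_range_stoppedIncrement {M : Type*} [AddCommMonoid M] (F : (Ω → ℝ) → M) :
    ∑ i ∈ range n, F (stoppedIncrement X n i) = ∑ i ∈ Icc 1 n, F (X i) := by
  rw [sum_Icc_one_eq_sum_range]
  exact sum_congr rfl fun i hi => by rw [stoppedIncrement_of_lt (mem_range.1 hi)]

lemma partialSum_conditionalVariance_stoppedIncrement :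
    partialSum (conditionalVariance μ ℱ (stoppedIncrement X n)) n
      =ᵐ[μ] fun ω => ∑ i ∈ Icc 1 n, (μ[fun ω' => X i ω' ^ 2 | ℱ (i - 1)]) ω := by
  have hall : ∀ᵐ ω ∂μ, ∀ i, conditionalVariance μ ℱ (stoppedIncrement X n) i ω
      = (μ[fun ω' => stoppedIncrement X n i ω' ^ 2 | ℱ i]) ω :=
    ae_all_iff.2 conditionalVariance_ae_eq
  filter_upwards [hall] with ω hω
  rw [sum_Icc_one_eq_sum_range]
  exact sum_congr rfl fun i hi => by
    rw [hω, stoppedIncrement_of_lt (mem_range.1 hi), Nat.add_sub_cancel]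

end Reindexing

theorem stmt6_general (p : ℝ) (hp : 1 < p) :
    ∃ C : ℝ, 0 < C ∧
      ∀ (Ω : Type*) (mΩ : MeasurableSpace Ω) (μ : Measure Ω),
        IsProbabilityMeasure μ →
        ∀ (ℱ : Filtration ℕ mΩ) (n : ℕ) (X : ℕ → Ω → ℝ),
        (∀ i ∈ Icc 1 n, StronglyMeasurable[ℱ i] (X i)) →
        (∀ i ∈ Icc 1 n, μ[X i | ℱ (i - 1)] =ᵐ[μ] 0) →
        ∀ (S QV CV : Ω → ℝ),
          (∀ ω, S ω = ∑ i ∈ Icc 1 n, X i ω) →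
          (∀ ω, QV ω = ∑ i ∈ Icc 1 n, X i ω ^ 2) →
          (∀ ω, CV ω = ∑ i ∈ Icc 1 n, (μ[fun ω' => X i ω' ^ 2 | ℱ (i - 1)]) ω) →
        (∀ i ∈ Icc 1 n, Integrable (fun ω => |X i ω| ^ (2 * p)) μ) →
        ∀ (N : ℝ),
          N = ∑ i ∈ Icc 1 n, ∫ ω, |X i ω| ^ (2 * p) ∂μ + ∫ ω, |CV ω - 1| ^ p ∂μ →
      ∀ t₁ t₂ : ℝ, 0 ≤ t₁ → 0 ≤ t₂ → t₁ + t₂ ≤ 1 →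
      ∀ x : ℝ,
        |μ.real {ω | S ω ≤ x * √(t₁ * CV ω + t₂ * QV ω + (1 - t₁ - t₂))} - Φ x|
          ≤ C * N ^ (1 / (2 * p + 1)) := by
  obtain ⟨C, hC, hbound⟩ := exists_forall_abs_measureReal_le_mul_sqrt_mixedVariation_sub_le hp
  refine ⟨C, hC, fun Ω mΩ μ _ ℱ n X hmeas hcond S QV CV hS hQV hCV hX N hN t₁ t₂ ht₁ ht₂ ht x => ?_⟩
  set Y := stoppedIncrement X n
  have hY (i : ℕ) (hi : i < n) : Integrable (fun ω => |Y i ω| ^ (2 * p)) μ := by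
    simpa only [Y, stoppedIncrement_of_lt hi] using hX _ (succ_mem_Icc_one hi)
  have hvariance : partialSum (conditionalVariance μ ℱ Y) n =ᵐ[μ] CV :=
    partialSum_conditionalVariance_stoppedIncrement.trans (.of_eq (funext hCV).symm)
  have hdefect : normalityDefect μ ℱ Y p n = N := by
    rw [hN, normalityDefect, sum_range_stoppedIncrement fun f => ∫ ω, |f ω| ^ (2 * p) ∂μ]
    congr 1
    exact integral_congr_ae (hvariance.mono fun ω hω => by simp only [hω])
  have hevent : {ω | S ω ≤ x * √(t₁ * CV ω + t₂ * QV ω + (1 - t₁ - t₂))}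
      =ᵐ[μ] {ω | partialSum Y n ω ≤ x * √(mixedVariation μ ℱ Y t₁ t₂ n ω)} := by
    filter_upwards [hvariance] with ω hω
    apply propext
    change S ω ≤ _ ↔ partialSum Y n ω ≤ _
    rw [mixedVariation, hω, hS, hQV, partialSum, sum_range_stoppedIncrement fun f => f ω,
      sum_range_stoppedIncrement fun f => f ω ^ 2]
  rw [measureReal_congr hevent, ← hdefect]
  exact hbound (isMartingaleDifference_stoppedIncrement hp.le hmeas hcond hX) hY ht₁ ht₂ ht x

theorem stmt6 (p : ℝ) (hp : 1 < p) :
    ∃ C : ℝ, 0 < C ∧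
      ∀ (Ω : Type) (mΩ : MeasurableSpace Ω) (μ : Measure Ω),
        IsProbabilityMeasure μ →
        ∀ (ℱ : Filtration ℕ mΩ), ℱ 0 = ⊥ →
        ∀ (n : ℕ) (X : ℕ → Ω → ℝ), X 0 = 0 →
        (∀ i, StronglyMeasurable[ℱ i] (X i)) →
        (∀ i, Integrable (X i) μ) →
        (∀ i ∈ Finset.Icc 1 n, μ[X i | ℱ (i - 1)] =ᵐ[μ] (0 : Ω → ℝ)) →
        ∀ (S : ℕ → Ω → ℝ), (∀ k ω, S k ω = ∑ i ∈ Finset.Icc 1 k, X i ω) →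
        ∀ (QV CV : Ω → ℝ),
          (∀ ω, QV ω = ∑ i ∈ Finset.Icc 1 n, (X i ω) ^ 2) →
          (∀ ω, CV ω = ∑ i ∈ Finset.Icc 1 n, (μ[fun ω' => (X i ω') ^ 2 | ℱ (i - 1)]) ω) →
        (∫ ω, (S n ω) ^ 2 ∂μ) = 1 →
        (∀ i ∈ Finset.Icc 1 n, Integrable (fun ω => |X i ω| ^ (2 * p)) μ) →
        ∀ (N : ℝ),
          N = (∑ i ∈ Finset.Icc 1 n, ∫ ω, |X i ω| ^ (2 * p) ∂μ) + (∫ ω, |CV ω - 1| ^ p ∂μ) →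
      ∀ t1 t2 : ℝ, 0 ≤ t1 → 0 ≤ t2 → t1 ≤ 1 → t2 ≤ 1 → t1 + t2 ≤ 1 →
      ∀ x : ℝ, x ≤ 0 →
        |(μ {ω | S n ω ≤ x * Real.sqrt (t1 * CV ω + t2 * QV ω + (1 - t1 - t2))}).toReal
          - stdNormalCDF x| ≤ C * N ^ (1 / (2 * p + 1)) := by
  obtain ⟨C, hC, h⟩ := stmt6_general p hp
  exact ⟨C, hC, fun Ω mΩ μ hμ ℱ _ n X _ hmeas _ hcond S hS QV CV hQV hCV _ hX N hN t1 t2 ht1 ht2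
    _ _ ht x _ => h Ω mΩ μ hμ ℱ n X (fun i _ => hmeas i) hcond (S n) QV CV (hS n) hQV hCV hX N hN
      t1 t2 ht1 ht2 ht x⟩
end

section
/- For every p > 1 and every t3 ∈ (0,1] there exists a constant C_{t3,p} > 0 such that for every N ∈ (0,1] and every x ≤ 0 with x² ≥ N^{−1/(2p+1)} − 1, one has Φ( x · √t3 ) − Φ(x) ≤ C_{t3,p} · N^{1/(2p+1)} / (1 + |x|^{2p}), where Φ denotes the standard normal distribution function. -/
open MeasureTheory Filter Finset

/-!
The hypothesis on `N` says `1 ≤ N ^ (1 / (2 * p + 1)) * (1 + x ^ 2)`, so it suffices to bound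
`|Φ (x * √t) - Φ x| * ((1 + x ^ 2) * (1 + |x| ^ (2 * p)))` uniformly in `x`. The interval between
`x` and `x * √t` has length `O(|x|)` and stays away from the origin by `min 1 √t * |x|`, so the
increment of `Φ` is at most `O(|x|) * exp (-c * x ^ 2)` for some `c > 0`, and the Gaussian factor
absorbs the polynomial weight.
-/

lemma stdNormalCDF_eq_setIntegral_gaussianPDFReal (x : ℝ) :
    stdNormalCDF x = ∫ u in Set.Iic x, ProbabilityTheory.gaussianPDFReal 0 1 u := by
  simp [stdNormalCDF, ProbabilityTheory.gaussianPDFReal]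

lemma gaussianPDFReal_zero_one_le_exp (u : ℝ) :
    ProbabilityTheory.gaussianPDFReal 0 1 u ≤ Real.exp (-(u ^ 2 / 2)) := by
  have one_le_sqrt : 1 ≤ √(2 * Real.pi) := by
    rw [Real.one_le_sqrt]
    linarith [Real.pi_gt_three]
  have h := mul_le_of_le_one_left (Real.exp_nonneg (-(u ^ 2 / 2)))
    (inv_le_one_of_one_le₀ one_le_sqrt)
  simpa [ProbabilityTheory.gaussianPDFReal, neg_div] using h

lemma abs_stdNormalCDF_sub_le_s14 {a b r : ℝ} (hr : ∀ u ∈ Set.uIcc a b, r ≤ u ^ 2) :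
    |stdNormalCDF b - stdNormalCDF a| ≤ Real.exp (-(r / 2)) * |b - a| := by
  have hint := ProbabilityTheory.integrable_gaussianPDFReal 0 1
  rw [stdNormalCDF_eq_setIntegral_gaussianPDFReal, stdNormalCDF_eq_setIntegral_gaussianPDFReal,
    intervalIntegral.integral_Iic_sub_Iic hint.integrableOn hint.integrableOn, ← Real.norm_eq_abs]
  refine intervalIntegral.norm_integral_le_of_norm_le_const fun u hu => ?_
  rw [Real.norm_of_nonneg (ProbabilityTheory.gaussianPDFReal_nonneg 0 1 u)]
  refine (gaussianPDFReal_zero_one_le_exp u).trans (Real.exp_le_exp.mpr ?_)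
  linarith [hr u (Set.uIoc_subset_uIcc hu)]

lemma min_sq_mul_sq_le_sq_of_mem_uIcc {s x u : ℝ} (hs : 0 ≤ s) (hu : u ∈ Set.uIcc x (x * s)) :
    min 1 s ^ 2 * x ^ 2 ≤ u ^ 2 := by
  obtain ⟨v, hv, rfl⟩ : u ∈ (x * ·) '' Set.uIcc 1 s := by
    rwa [Set.image_const_mul_uIcc, mul_one]
  have hmin : min 1 s ^ 2 ≤ v ^ 2 := pow_le_pow_left₀ (le_min zero_le_one hs) hv.1 2
  calc min 1 s ^ 2 * x ^ 2 ≤ v ^ 2 * x ^ 2 := by gcongr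
    _ = (x * v) ^ 2 := by ring

lemma abs_stdNormalCDF_mul_sub_le {s : ℝ} (hs : 0 ≤ s) (x : ℝ) :
    |stdNormalCDF (x * s) - stdNormalCDF x| ≤
      |s - 1| * (|x| * Real.exp (-(min 1 s ^ 2 / 2 * x ^ 2))) := by
  calc |stdNormalCDF (x * s) - stdNormalCDF x|
      ≤ Real.exp (-(min 1 s ^ 2 * x ^ 2 / 2)) * |x * s - x| :=
        abs_stdNormalCDF_sub_le_s14 fun _ => min_sq_mul_sq_le_sq_of_mem_uIcc hs
    _ = |s - 1| * (|x| * Real.exp (-(min 1 s ^ 2 / 2 * x ^ 2))) := by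
        rw [← mul_sub_one, abs_mul, mul_div_right_comm]
        ring

lemma abs_rpow_le_mul_exp_mul_sq {c r : ℝ} (hc : 0 < c) (hr : 0 ≤ r) (x : ℝ) :
    |x| ^ r ≤ (r / 2 / c) ^ (r / 2) * Real.exp (c * x ^ 2) := by
  have h := ProbabilityTheory.rpow_abs_le_mul_exp_abs (x ^ 2) (div_nonneg hr zero_le_two) hc.ne'
  rwa [abs_of_pos hc, abs_sq, ← sq_abs, ← Real.rpow_natCast_mul (abs_nonneg x), Nat.cast_two,
    mul_div_cancel₀ r two_ne_zero, sq_abs] at h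

lemma exists_forall_abs_mul_weight_le_mul_exp {c q : ℝ} (hc : 0 < c) (hq : -1 < q) :
    ∃ C : ℝ, 0 < C ∧
      ∀ x : ℝ, |x| * ((1 + x ^ 2) * (1 + |x| ^ q)) ≤ C * Real.exp (c * x ^ 2) := by
  let K (r : ℝ) : ℝ := (r / 2 / c) ^ (r / 2)
  refine ⟨K 1 + K 3 + K (1 + q) + K (3 + q), ?_, fun x => ?_⟩
  · have : 0 < 1 + q := by linarith
    have : 0 < 3 + q := by linarith
    positivity
  have hK {r : ℝ} (hr : 0 ≤ r) : |x| ^ r ≤ K r * Real.exp (c * x ^ 2) :=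
    abs_rpow_le_mul_exp_mul_sq hc hr x
  have h_one_add : |x| ^ (1 + q) = |x| * |x| ^ q :=
    Real.rpow_one_add' (abs_nonneg x) (by linarith)
  have h_three : |x| ^ (3 : ℝ) = |x| * x ^ 2 := by
    rw [← sq_abs x]
    norm_cast
    ring
  have h_three_add : |x| ^ (3 + q) = |x| ^ (1 + q) * x ^ 2 := by
    rw [show 3 + q = 1 + q + (2 : ℕ) by push_cast; ring,
      Real.rpow_add_natCast' (abs_nonneg x) (by push_cast; linarith), sq_abs]
  calc |x| * ((1 + x ^ 2) * (1 + |x| ^ q))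
      = |x| ^ (1 : ℝ) + |x| ^ (3 : ℝ) + |x| ^ (1 + q) + |x| ^ (3 + q) := by
        rw [h_three_add, h_one_add, h_three, Real.rpow_one]
        ring
    _ ≤ K 1 * Real.exp (c * x ^ 2) + K 3 * Real.exp (c * x ^ 2) +
          K (1 + q) * Real.exp (c * x ^ 2) + K (3 + q) * Real.exp (c * x ^ 2) := by
        gcongr <;> exact hK (by linarith)
    _ = (K 1 + K 3 + K (1 + q) + K (3 + q)) * Real.exp (c * x ^ 2) := by ring

lemma exists_forall_abs_stdNormalCDF_mul_sub_mul_weight_le {s q : ℝ} (hs : 0 < s) (hq : -1 < q) :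
    ∃ C : ℝ, 0 < C ∧ ∀ x : ℝ,
      |stdNormalCDF (x * s) - stdNormalCDF x| * ((1 + x ^ 2) * (1 + |x| ^ q)) ≤ C := by
  set c := min 1 s ^ 2 / 2
  have hc : 0 < c := by positivity
  obtain ⟨C, hC, hweight⟩ := exists_forall_abs_mul_weight_le_mul_exp hc hq
  refine ⟨(|s - 1| + 1) * C, by positivity, fun x => ?_⟩
  calc |stdNormalCDF (x * s) - stdNormalCDF x| * ((1 + x ^ 2) * (1 + |x| ^ q))
      ≤ |s - 1| * (|x| * Real.exp (-(c * x ^ 2))) * ((1 + x ^ 2) * (1 + |x| ^ q)) := by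
        gcongr
        exact abs_stdNormalCDF_mul_sub_le hs.le x
    _ = |s - 1| * (|x| * ((1 + x ^ 2) * (1 + |x| ^ q)) / Real.exp (c * x ^ 2)) := by
        rw [Real.exp_neg]
        ring
    _ ≤ (|s - 1| + 1) * C := by
        gcongr
        · linarith
        · exact (div_le_iff₀ (Real.exp_pos _)).mpr (hweight x)

theorem stmt14_general {p t : ℝ} (hp : -(1 / 2) < p) (ht : 0 < t) :
    ∃ C : ℝ, 0 < C ∧ ∀ N : ℝ, 0 < N →
      ∀ x : ℝ, N ^ (-(1 / (2 * p + 1))) - 1 ≤ x ^ 2 →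
        |stdNormalCDF (x * √t) - stdNormalCDF x| ≤
          C * N ^ (1 / (2 * p + 1)) / (1 + |x| ^ (2 * p)) := by
  obtain ⟨C, hC, hbound⟩ := exists_forall_abs_stdNormalCDF_mul_sub_mul_weight_le
    (Real.sqrt_pos.mpr ht) (show -1 < 2 * p by linarith)
  refine ⟨C, hC, fun N hN x hx => ?_⟩
  rw [Real.rpow_neg hN.le] at hx
  set M := N ^ (1 / (2 * p + 1))
  set D := |stdNormalCDF (x * √t) - stdNormalCDF x|
  have hM : 0 < M := Real.rpow_pos_of_pos hN _
  have one_le : 1 ≤ (1 + x ^ 2) * M := (inv_le_iff_one_le_mul₀ hM).mp (by linarith)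
  rw [le_div_iff₀ (by positivity)]
  calc D * (1 + |x| ^ (2 * p))
      ≤ D * (1 + |x| ^ (2 * p)) * ((1 + x ^ 2) * M) :=
        le_mul_of_one_le_right (by positivity) one_le
    _ = D * ((1 + x ^ 2) * (1 + |x| ^ (2 * p))) * M := by ring
    _ ≤ C * M := by
        gcongr
        exact hbound x

theorem stmt14 (p : ℝ) (hp : 1 < p) (t3 : ℝ) (ht3 : 0 < t3) (ht3' : t3 ≤ 1) :
    ∃ C : ℝ, 0 < C ∧
      ∀ N : ℝ, 0 < N → N ≤ 1 →
      ∀ x : ℝ, x ≤ 0 → N ^ (-(1 / (2 * p + 1))) - 1 ≤ x ^ 2 →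
        stdNormalCDF (x * Real.sqrt t3) - stdNormalCDF x ≤
          C * N ^ (1 / (2 * p + 1)) / (1 + |x| ^ (2 * p)) := by
  obtain ⟨C, hC, hbound⟩ := stmt14_general (show -(1 / 2) < p by linarith) ht3
  exact ⟨C, hC, fun N hN _ x _ hx => (le_abs_self _).trans (hbound N hN x hx)⟩
end
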